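/- Let 1/2 ≤ γ < 1 and let n be a smooth function on ℝ×S² with symbol decay of order 2+2γ. Define N(σ) = ∫_ℝ n(q,σ) dq, M(σ) = ∫_ℝ q·n(q,σ) dq, 𝓕₀₁(q,ω) = (1/2)∫_q^∞ n(s,ω) ds, N₀(ω) = (1/4π)∫_{S²} (N(σ) − N(ω))/(1 − ⟨σ,ω⟩) dS(σ), and M₀(ω) = (1/2)M(ω). Then there exists a smooth function 𝒫 on S², depending only on n, with the following property: for every smooth ℋ₀ on ℝ×S² with symbol decay of order 2 such that ω ↦ ∫_ℝ ℋ₀(q,ω) dq − 𝒫(ω) is a constant function on S², there exists a smooth function φ on {(t,x) ∈ ℝ×ℝ³ : t > 2} satisfying ∂ₜ²φ − Δφ = χ(⟨t−r⟩/r)·n(r−t, ω)/r² there (the right-hand side extended by 0 where the cutoff χ vanishes), such that: (i) for every q ∈ ℝ and ω ∈ S², lim_{r→∞} [ r·φ(r−q, rω) − ln(2r/⟨q⟩)·𝓕₀₁(q,ω) ] = N₀(ω)·χ_{q<0}(q) + M₀(ω)·(q/⟨q⟩²)·χ_{q<0}(q) + ℋ₀(q,ω); and (ii) for every x ∈ ℝ³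 with 0 < |x| < 1, lim_{a→∞} a·φ(a, a·x) = (1/4π)∫_{S²} N(σ)/(1 − ⟨σ,x⟩) dS(σ). -/

import Mathlib

/-!
The solution is a sum `φ = A + T + Z` of three explicit functions, smooth on all of `ℝ × ℝ³`;
write `□ = ∂ₜ² - Δ`, `q = r - t`, and `u = 1 - ⟪σ, ω⟫`.

* `A` is the advanced potential of the source: `4π A(z)` is the integral over `ρ > 0` of
  `lightMean (z, ρ)`, that is, of `ρ` times the integral over `σ ∈ S²` of the source at the point
  `z + ρ (1, σ)` of the forward light cone. As the source is only `O(r⁻²)`, the integrand is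
  `srcP(z) / ρ + O(ρ⁻²)` and the integral diverges logarithmically. Its coefficient
  `srcP(t, x) = ∫ n(⟪x, σ⟫ - t, σ) dσ` is a superposition of plane waves, so `□ srcP = 0`, and
  removing `srcP(z) / ρ` for `ρ > 1` changes nothing in the equation. In the variable `ε = 1 / ρ` the
  integrand extends smoothly to `ε = 0`, which gives smoothness of `A`; Darboux's equation
  (`darboux`) turns `□` of the integrand into a `ρ`-derivative, which gives `□ A = source`
  (`potential`, `exists_adv`).
* `T` (`tailWave`) is the superposition of plane waves with profile `-s / ⟨s⟩²` and amplitude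
  `N / 4π`. It has the required limit along timelike rays, and along outgoing light rays
  `r T = (1/2) N log (2r) + N₀ - (1/2) N log ⟨q⟩ + o(1)`.
* `Z` (`corrWave`) is the superposition of plane waves with profile `∂_s corr / 2π`, where `corr` is
  what is left of the required radiation field. As `corr → 0` for `q → -∞` with `∂_q corr = O(⟨q⟩⁻²)`
  there, the radiation field of `Z` is `corr`, and `Z` does not contribute along timelike rays. The
  cutoff `χ_{q<0}` in front of `N₀` matters at this point: `T` already contributes `N₀`, and the
  difference `N₀ (χ_{q<0} - 1)` vanishes for `q ≤ -1`.

Both `A` and `Z` are treated along outgoing rays by the concentration lemma `conc`: an integrand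
over the sphere which lives at `u ~ 1 / r` only sees its values at the pole `ω`. It rests on
Archimedes' theorem that the surface measure is uniform in `u`. For `A`, the distance along the light
cone is rescaled by `r`; the rescaled spherical means tend to
`2π / (1 + l)` times the mass `∫_{-∞}^q n`, and the rate `r^{-1/2}` of `srcP_rate` beats the
logarithm, so `r A = -(1/2) log r ∫_{-∞}^q n + o(1)`. On timelike rays `n` is evaluated at
`q ≤ -δ a` and `a A → 0` follows from its decay of order three.

Adding up, the coefficient of `log r` is `(1/2) (N - ∫_{-∞}^q n) = 𝓕₀₁`. Since every `ℋ₀` of decay of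
order two is attained in this way, `𝒫 = 0` is a valid choice.
-/

noncomputable section

open MeasureTheory Real Set Filter Topology Metric
open scoped RealInnerProductSpace Classical

/-- ℝ³ as a Euclidean space. -/
abbrev E3 : Type := EuclideanSpace ℝ (Fin 3)

/-- The unit sphere S² in ℝ³. -/
abbrev S2 : Set E3 := Metric.sphere (0 : E3) 1

/-- The surface measure on the unit sphere (total mass 4π). -/
noncomputable def sphereMeasure : Measure (Metric.sphere (0 : E3) 1) :=
  (volume : Measure E3).toSphere

/-- Integral over the unit sphere with respect to the surface measure. -/
noncomputable def sphereIntegral (f : E3 → ℝ) : ℝ :=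
  ∫ σ : Metric.sphere (0 : E3) 1, f σ ∂sphereMeasure

/-- Japanese bracket ⟨q⟩ = √(1+q²). -/
noncomputable def jb (q : ℝ) : ℝ := Real.sqrt (1 + q ^ 2)

/-- Iterates of the operator g ↦ ⟨q⟩ ∂_q g. -/
noncomputable def qIter : ℕ → (ℝ → ℝ) → ℝ → ℝ
  | 0, g => g
  | k + 1, g => fun q => jb q * deriv (qIter k g) q

/-- Partial derivative in the i-th coordinate direction. -/
noncomputable def pd (i : Fin 3) (g : E3 → ℝ) : E3 → ℝ :=
  fun x => fderiv ℝ g x (EuclideanSpace.single i 1)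

/-- Iterated partial derivatives along a multi-index (list of directions). -/
noncomputable def pdMulti : List (Fin 3) → (E3 → ℝ) → E3 → ℝ
  | [], g => g
  | i :: l, g => pd i (pdMulti l g)

/-- Euclidean Laplacian in ℝ³. -/
noncomputable def lap3 (g : E3 → ℝ) (x : E3) : ℝ :=
  ∑ i : Fin 3, pd i (pd i g) x

/-- Second time derivative ∂ₜ²φ. -/
noncomputable def dt2 (φ : ℝ → E3 → ℝ) (t : ℝ) (x : E3) : ℝ :=
  deriv (fun s => deriv (fun u => φ u x) s) t

/-- Homogeneity of degree zero on ℝ³ ∖ {0}. -/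
def HomogZero (f : E3 → ℝ) : Prop := ∀ c : ℝ, 0 < c → ∀ x : E3, f (c • x) = f x

/-- A smooth function on S², represented by its degree-zero homogeneous extension. -/
def SmoothOnSphere (f : E3 → ℝ) : Prop :=
  HomogZero f ∧ ContDiffOn ℝ (⊤ : ℕ∞) f {x : E3 | x ≠ 0}

/-- A smooth function on ℝ×S², represented via degree-zero homogeneous extension
in the angular variable. -/
def SmoothQSphere (f : ℝ → E3 → ℝ) : Prop :=
  (∀ q, HomogZero (f q)) ∧
  ContDiffOn ℝ (⊤ : ℕ∞) (fun p : ℝ × E3 => f p.1 p.2) {p : ℝ × E3 | p.2 ≠ 0}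

/-- Symbol decay of order κ: |(⟨q⟩∂_q)^k ∂_ω^α f(q,ω)| ≤ C_{k,α} ⟨q⟩^{-κ}. -/
def SymbolDecay (κ : ℝ) (f : ℝ → E3 → ℝ) : Prop :=
  ∀ (k : ℕ) (α : List (Fin 3)), ∃ C : ℝ, ∀ (q : ℝ) (ω : E3), ‖ω‖ = 1 →
    |qIter k (fun s => pdMulti α (f s) ω) q| ≤ C * jb q ^ (-κ)

/-- A smooth cutoff χ with χ = 1 on (-∞, 1/4] and χ = 0 on [1/2, ∞), 0 ≤ χ ≤ 1. -/
def IsCutChi (χ : ℝ → ℝ) : Prop :=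
  ContDiff ℝ (⊤ : ℕ∞) χ ∧ (∀ s, χ s ∈ Set.Icc (0:ℝ) 1) ∧
  (∀ s, s ≤ (1/4 : ℝ) → χ s = 1) ∧ (∀ s, (1/2 : ℝ) ≤ s → χ s = 0)

/-- A smooth cutoff χ_{q<0} with χ = 1 on (-∞, -1] and χ = 0 on [0, ∞), 0 ≤ χ ≤ 1. -/
def IsCutNeg (χ : ℝ → ℝ) : Prop :=
  ContDiff ℝ (⊤ : ℕ∞) χ ∧ (∀ s, χ s ∈ Set.Icc (0:ℝ) 1) ∧
  (∀ s, s ≤ (-1 : ℝ) → χ s = 1) ∧ (∀ s, (0 : ℝ) ≤ s → χ s = 0)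

/-! ### The surface measure: total mass and rotations -/

instance : IsFiniteMeasure sphereMeasure := by unfold sphereMeasure; infer_instance

lemma sphereMeasure_real_univ : sphereMeasure.real univ = 4 * π := by
  rw [sphereMeasure, Measure.toSphere_real_apply_univ, Measure.real, EuclideanSpace.volume_ball_fin_three]
  simp
  rw [ENNReal.toReal_ofReal (by positivity)]
  ring

lemma norm_sph (σ : sphere (0 : E3) 1) : ‖(σ : E3)‖ = 1 := by simp

lemma sph_ne (σ : sphere (0 : E3) 1) : (σ : E3) ≠ 0 := by
  intro h; have := norm_sph σ; simp [h] at this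

/-- A linear isometry of `ℝ³`, acting on the unit sphere. -/
def rotSph (R : E3 ≃ₗᵢ[ℝ] E3) (σ : sphere (0 : E3) 1) : sphere (0 : E3) 1 :=
  ⟨R σ, by simp⟩

lemma continuous_rotSph (R : E3 ≃ₗᵢ[ℝ] E3) : Continuous (rotSph R) := by
  unfold rotSph
  exact (R.continuous.comp continuous_subtype_val).subtype_mk _

open scoped Pointwise in
lemma measurePreserving_rotSph (R : E3 ≃ₗᵢ[ℝ] E3) :
    MeasurePreserving (rotSph R) sphereMeasure sphereMeasure := by
  refine ⟨(continuous_rotSph R).measurable, ?_⟩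
  ext s hs
  rw [Measure.map_apply (continuous_rotSph R).measurable hs, sphereMeasure,
    Measure.toSphere_apply' _ hs,
    Measure.toSphere_apply' _ ((continuous_rotSph R).measurable hs)]
  congr 1
  have h := R.measurePreserving.measure_preimage_emb
    R.toHomeomorph.measurableEmbedding (Ioo (0:ℝ) 1 • (Subtype.val '' s))
  rw [← h]
  congr 1
  ext x
  simp only [Set.mem_smul, mem_preimage, mem_image]
  constructor
  · rintro ⟨a, ha, y, ⟨σ, hσ, rfl⟩, rfl⟩
    exact ⟨a, ha, R σ, ⟨rotSph R σ, hσ, rfl⟩, by simp⟩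
  · rintro ⟨a, ha, y, ⟨σ, hσ, rfl⟩, h⟩
    refine ⟨a, ha, R.symm σ, ⟨rotSph R.symm σ, ?_, rfl⟩, ?_⟩
    · have : rotSph R (rotSph R.symm σ) = σ := by ext1; simp [rotSph]
      simpa [this] using hσ
    · apply R.injective
      simpa using h

/-! ### The spherical Laplacian integrates to zero; Archimedes' hat-box theorem -/

/-- The `i`-th vector of the standard basis of `ℝ³`. -/
abbrev ee (i : Fin 3) : E3 := EuclideanSpace.single i (1:ℝ)

lemma sum_ee (y : E3) : y = ∑ i, y i • ee i := by
  ext k; simp [ee, Fin.sum_univ_three]; fin_cases k <;> simp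

/-- The infinitesimal rotation in the `(i,j)`-plane. -/
def genRot (i j : Fin 3) : E3 →L[ℝ] E3 :=
  (EuclideanSpace.proj i).smulRight (ee j) - (EuclideanSpace.proj j).smulRight (ee i)

lemma genRot_apply (i j : Fin 3) (y : E3) : genRot i j y = y i • ee j - y j • ee i := by
  simp [genRot]

/-- The rotation by the angle `θ` in the `(i,j)`-plane, as a linear map. -/
def rotLin (i j : Fin 3) (θ : ℝ) : E3 →ₗ[ℝ] E3 where
  toFun y := y + ((cos θ - 1) * y i - sin θ * y j) • ee i + (sin θ * y i + (cos θ - 1) * y j) • ee j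
  map_add' x y := by
    ext k; simp; split_ifs <;> ring
  map_smul' c y := by
    ext k; simp; split_ifs <;> ring

lemma rotLin_norm (i j : Fin 3) (h : i ≠ j) (θ : ℝ) (y : E3) : ‖rotLin i j θ y‖ = ‖y‖ := by
  have hc := Real.sin_sq_add_cos_sq θ
  rw [EuclideanSpace.norm_eq, EuclideanSpace.norm_eq]
  congr 1
  simp only [Fin.sum_univ_three, Real.norm_eq_abs, sq_abs, rotLin, LinearMap.coe_mk, AddHom.coe_mk]
  fin_cases i <;> fin_cases j <;> simp at h ⊢
  · linear_combination (y 0 ^ 2 + y 1 ^ 2) * hc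
  · linear_combination (y 0 ^ 2 + y 2 ^ 2) * hc
  · linear_combination (y 1 ^ 2 + y 0 ^ 2) * hc
  · linear_combination (y 1 ^ 2 + y 2 ^ 2) * hc
  · linear_combination (y 2 ^ 2 + y 0 ^ 2) * hc
  · linear_combination (y 2 ^ 2 + y 1 ^ 2) * hc

/-- The rotation by the angle `θ` in the `(i,j)`-plane. -/
def rotE (i j : Fin 3) (h : i ≠ j) (θ : ℝ) : E3 ≃ₗᵢ[ℝ] E3 :=
  LinearIsometry.toLinearIsometryEquiv ⟨rotLin i j θ, rotLin_norm i j h θ⟩ rfl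

lemma rotE_apply (i j : Fin 3) (h : i ≠ j) (θ : ℝ) (y : E3) :
    rotE i j h θ y = y + ((cos θ - 1) * y i - sin θ * y j) • ee i
      + (sin θ * y i + (cos θ - 1) * y j) • ee j := rfl

/-- Infinitesimal rotations integrate to zero, by differentiating the rotation invariance of the
surface measure. -/
lemma integral_genRot (i j : Fin 3) (hij : i ≠ j) (h : E3 → ℝ) (hh : ContDiff ℝ 1 h) :
    ∫ σ : sphere (0 : E3) 1, fderiv ℝ h σ (genRot i j σ) ∂sphereMeasure = 0 := by
  have hinv : ∀ θ : ℝ, ∫ σ : sphere (0 : E3) 1, h (rotE i j hij θ σ) ∂sphereMeasure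
      = ∫ σ : sphere (0 : E3) 1, h σ ∂sphereMeasure := by
    intro θ
    have hm := measurePreserving_rotSph (rotE i j hij θ)
    have := integral_map (μ := sphereMeasure) hm.measurable.aemeasurable
      (f := fun σ : sphere (0 : E3) 1 => h σ)
      ((hh.continuous.comp continuous_subtype_val).aestronglyMeasurable)
    rw [hm.map_eq] at this
    exact this.symm
  -- velocity of the rotation
  let V : ℝ → E3 → E3 := fun θ y => (-sin θ * y i - cos θ * y j) • ee i
      + (cos θ * y i + (-sin θ) * y j) • ee j
  have hR : ∀ (y : E3) (θ : ℝ), HasDerivAt (fun θ => rotE i j hij θ y) (V θ y) θ := by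
    intro y θ
    simp only [rotE_apply]
    have hs := Real.hasDerivAt_sin θ
    have hc := Real.hasDerivAt_cos θ
    have h1 : HasDerivAt (fun θ => (cos θ - 1) * y i - sin θ * y j) (-sin θ * y i - cos θ * y j) θ :=
      ((hc.sub_const 1).mul_const (y i)).sub (hs.mul_const (y j))
    have h2 : HasDerivAt (fun θ => sin θ * y i + (cos θ - 1) * y j)
      (cos θ * y i + (-sin θ) * y j) θ :=
      (hs.mul_const (y i)).add ((hc.sub_const 1).mul_const (y j))
    exact ((h1.smul_const (ee i)).const_add y).add (h2.smul_const (ee j))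
  have hRc : Continuous fun p : ℝ × sphere (0 : E3) 1 => rotE i j hij p.1 (p.2 : E3) := by
    simp only [rotE_apply]; fun_prop
  have hVc : Continuous fun p : ℝ × sphere (0 : E3) 1 => V p.1 (p.2 : E3) := by
    simp only [V]; fun_prop
  have hdc : Continuous fun p : ℝ × sphere (0 : E3) 1 =>
      fderiv ℝ h (rotE i j hij p.1 (p.2 : E3)) (V p.1 p.2) :=
    ((hh.continuous_fderiv one_ne_zero).comp hRc).clm_apply hVc
  obtain ⟨C, hC⟩ := (isCompact_Icc.prod isCompact_univ).exists_bound_of_continuousOn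
    (s := Icc (-1:ℝ) 1 ×ˢ (univ : Set (sphere (0 : E3) 1))) hdc.continuousOn
  have hc0 : ∀ θ : ℝ, Continuous fun σ : sphere (0 : E3) 1 => h (rotE i j hij θ σ) := fun θ =>
    hh.continuous.comp ((rotE i j hij θ).continuous.comp continuous_subtype_val)
  have hmk : Continuous fun σ : sphere (0 : E3) 1 => ((0:ℝ), σ) := by fun_prop
  have hF' : AEStronglyMeasurable (fun σ : sphere (0 : E3) 1 =>
      fderiv ℝ h (rotE i j hij 0 σ) (V 0 σ)) sphereMeasure :=
    (hdc.comp hmk).aestronglyMeasurable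
  have hi0 : Integrable (fun σ : sphere (0 : E3) 1 => h (rotE i j hij 0 σ)) sphereMeasure :=
    (hc0 0).integrable_of_hasCompactSupport (HasCompactSupport.of_compactSpace _)
  have hdiff : ∀ (σ : sphere (0 : E3) 1) (θ : ℝ),
      HasDerivAt (fun θ => h (rotE i j hij θ σ)) (fderiv ℝ h (rotE i j hij θ σ) (V θ σ)) θ :=
    fun σ θ => ((hh.differentiable one_ne_zero)
      (rotE i j hij θ σ)).hasFDerivAt.comp_hasDerivAt θ (hR σ θ)
  have hD := hasDerivAt_integral_of_dominated_loc_of_deriv_le (μ := sphereMeasure)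
    (F := fun θ (σ : sphere (0 : E3) 1) => h (rotE i j hij θ σ))
    (F' := fun θ (σ : sphere (0 : E3) 1) => fderiv ℝ h (rotE i j hij θ σ) (V θ σ))
    (x₀ := 0) (s := Ioo (-1) 1) (bound := fun _ => C) (Ioo_mem_nhds (by norm_num) (by norm_num))
    (.of_forall fun θ => (hc0 θ).aestronglyMeasurable) hi0 hF'
    (.of_forall fun σ θ hθ => hC (θ, σ) ⟨Ioo_subset_Icc_self hθ, mem_univ _⟩)
    (integrable_const _)
    (.of_forall fun σ θ _ => hdiff σ θ)
  have h2 := hD.2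
  simp_rw [hinv] at h2
  have h3 := h2.unique (hasDerivAt_const _ _)
  rw [← h3]
  congr 1
  funext σ
  congr 1
  · rw [rotE_apply]; simp
  · simp [genRot_apply, V]; abel

/-- The Laplacian of the sphere, applied to the restriction of a smooth function on `ℝ³`,
has mean zero: it is the sum of the squares of the three infinitesimal rotations. -/
lemma integral_sphLap (f : E3 → ℝ) (hf : ContDiff ℝ 2 f) :
    ∫ σ : sphere (0 : E3) 1, ((∑ i, fderiv ℝ (fderiv ℝ f) σ (ee i) (ee i))
      - fderiv ℝ (fderiv ℝ f) σ σ σ - 2 * fderiv ℝ f σ σ) ∂sphereMeasure = 0 := by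
  have hf1 : ContDiff ℝ 1 (fderiv ℝ f) := hf.fderiv_right (by norm_num)
  have hL : ∀ i j : Fin 3, ContDiff ℝ 1 (fun y => fderiv ℝ f y (genRot i j y)) := fun i j =>
    hf1.clm_apply (genRot i j).contDiff
  have hLd : ∀ (i j : Fin 3) (y : E3), fderiv ℝ (fun y => fderiv ℝ f y (genRot i j y)) y (genRot i j y)
      = fderiv ℝ (fderiv ℝ f) y (genRot i j y) (genRot i j y)
        + fderiv ℝ f y (genRot i j (genRot i j y)) := by
    intro i j y
    rw [fderiv_clm_apply (hf1.differentiable one_ne_zero y) (genRot i j).differentiableAt]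
    simp [add_comm]
  have hint : ∀ i j : Fin 3, Integrable (fun σ : sphere (0 : E3) 1 =>
      fderiv ℝ (fun y => fderiv ℝ f y (genRot i j y)) σ (genRot i j σ)) sphereMeasure := by
    intro i j
    apply Continuous.integrable_of_hasCompactSupport _ (HasCompactSupport.of_compactSpace _)
    exact (((hL i j).continuous_fderiv one_ne_zero).comp continuous_subtype_val).clm_apply
      ((genRot i j).continuous.comp continuous_subtype_val)
  have e01 := integral_genRot 0 1 (by decide) _ (hL 0 1)
  have e02 := integral_genRot 0 2 (by decide) _ (hL 0 2)
  have e12 := integral_genRot 1 2 (by decide) _ (hL 1 2)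
  have key : ∀ σ : sphere (0 : E3) 1, ((∑ i, fderiv ℝ (fderiv ℝ f) σ (ee i) (ee i))
      - fderiv ℝ (fderiv ℝ f) σ σ σ - 2 * fderiv ℝ f σ σ) =
      fderiv ℝ (fun y => fderiv ℝ f y (genRot 0 1 y)) σ (genRot 0 1 σ) +
      fderiv ℝ (fun y => fderiv ℝ f y (genRot 0 2 y)) σ (genRot 0 2 σ) +
      fderiv ℝ (fun y => fderiv ℝ f y (genRot 1 2 y)) σ (genRot 1 2 σ) := by
    intro σ
    have hn : (σ : E3) 0 ^ 2 + (σ : E3) 1 ^ 2 + (σ : E3) 2 ^ 2 = 1 := by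
      have := norm_sph σ
      rw [EuclideanSpace.norm_eq, Real.sqrt_eq_one] at this
      simpa [Fin.sum_univ_three] using this
    have hsym : ∀ u v, fderiv ℝ (fderiv ℝ f) σ u v = fderiv ℝ (fderiv ℝ f) σ v u := fun u v =>
      (hf.contDiffAt.isSymmSndFDerivAt (by simp)) u v
    simp only [hLd]
    generalize hB : fderiv ℝ (fderiv ℝ f) σ = B at *
    generalize fderiv ℝ f σ = D at *
    have h10 := hsym (ee 1) (ee 0)
    have h20 := hsym (ee 2) (ee 0)
    have h21 := hsym (ee 2) (ee 1)
    have hs := sum_ee (σ : E3)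
    rw [Fin.sum_univ_three] at hs
    have e1 : B σ σ = B ((σ : E3) 0 • ee 0 + (σ : E3) 1 • ee 1 + (σ : E3) 2 • ee 2)
      ((σ : E3) 0 • ee 0 + (σ : E3) 1 • ee 1 + (σ : E3) 2 • ee 2) := by rw [← hs]
    have e2 : D σ = D ((σ : E3) 0 • ee 0 + (σ : E3) 1 • ee 1 + (σ : E3) 2 • ee 2) := by rw [← hs]
    rw [e1, e2]
    generalize (σ : E3) = s at *
    simp only [genRot_apply, Fin.sum_univ_three, map_add, map_sub, map_smul, smul_eq_mul,
      add_apply, sub_apply, smul_apply,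
      PiLp.single_apply, h10, h20, h21]
    simp
    linear_combination (B (ee 0) (ee 0) + B (ee 1) (ee 1) + B (ee 2) (ee 2)) * (-hn)
  simp_rw [key]
  have h1 := integral_add ((hint 0 1).add (hint 0 2)) (hint 1 2)
  have h2 := integral_add (hint 0 1) (hint 0 2)
  simp only [Pi.add_apply] at h1
  rw [h1, h2, e01, e02, e12]
  simp

lemma sphere_integrable {V : Type*} [NormedAddCommGroup V] {f : sphere (0 : E3) 1 → V} (hf : Continuous f) :
    Integrable f sphereMeasure :=
  hf.integrable_of_hasCompactSupport (HasCompactSupport.of_compactSpace _)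

/-- The mean of the spherical Laplacian of a zonal function vanishes. -/
lemma integral_zonal (ω : E3) (hω : ‖ω‖ = 1) (h h' h'' : ℝ → ℝ) (hh : ContDiff ℝ 2 h)
    (h1 : ∀ z, HasDerivAt h (h' z) z) (h2 : ∀ z, HasDerivAt h' (h'' z) z) :
    ∫ σ : sphere (0 : E3) 1, ((1 - ⟪ω, (σ:E3)⟫ ^ 2) * h'' ⟪ω, (σ:E3)⟫
      - 2 * ⟪ω, (σ:E3)⟫ * h' ⟪ω, (σ:E3)⟫) ∂sphereMeasure = 0 := by
  have hL : ∀ y : E3, HasFDerivAt (fun y : E3 => ⟪ω, y⟫) (innerSL ℝ ω) y := fun y =>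
    (innerSL ℝ ω).hasFDerivAt
  have hf : ContDiff ℝ 2 (fun y : E3 => h ⟪ω, y⟫) := hh.comp (innerSL ℝ ω).contDiff
  have hd1 : fderiv ℝ (fun y : E3 => h ⟪ω, y⟫) = fun y => h' ⟪ω, y⟫ • innerSL ℝ ω := by
    funext y
    exact ((h1 _).comp_hasFDerivAt y (hL y)).fderiv
  have hd2 : fderiv ℝ (fderiv ℝ (fun y : E3 => h ⟪ω, y⟫)) = fun y =>
      (h'' ⟪ω, y⟫ • innerSL ℝ ω).smulRight (innerSL ℝ ω) := by
    rw [hd1]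
    funext y
    exact (((h2 _).comp_hasFDerivAt y (hL y)).smul_const (innerSL ℝ ω)).fderiv
  rw [← integral_sphLap _ hf]
  congr 1
  funext σ
  have hn : ω 0 ^ 2 + ω 1 ^ 2 + ω 2 ^ 2 = 1 := by
    rw [EuclideanSpace.norm_eq, Real.sqrt_eq_one] at hω
    simpa [Fin.sum_univ_three] using hω
  rw [hd2, hd1]
  simp [Fin.sum_univ_three, EuclideanSpace.inner_single_right]
  linear_combination (h'' ⟪ω, (σ:E3)⟫) * (-hn)

/-- Moments of the height function. The vanishing mean of the spherical Laplacian of a zonal power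
gives a two-step recursion, hence the induction on pairs of consecutive moments. -/
lemma sphere_moment (ω : E3) (hω : ‖ω‖ = 1) (k : ℕ) :
    (∫ σ : sphere (0 : E3) 1, ⟪ω, (σ:E3)⟫ ^ k ∂sphereMeasure = 2 * π * ((1 - (-1) ^ (k + 1)) / (k + 1))) ∧
    (∫ σ : sphere (0 : E3) 1, ⟪ω, (σ:E3)⟫ ^ (k + 1) ∂sphereMeasure
      = 2 * π * ((1 - (-1) ^ (k + 2)) / (k + 2))) := by
  have hint : ∀ k : ℕ, Integrable (fun σ : sphere (0 : E3) 1 => ⟪ω, (σ:E3)⟫ ^ k) sphereMeasure :=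
    fun k => sphere_integrable (by fun_prop)
  induction k with
  | zero =>
    constructor
    · have := sphereMeasure_real_univ
      simp [this]; ring
    · have := integral_zonal ω hω id (fun _ => 1) (fun _ => 0) contDiff_id
        (fun z => hasDerivAt_id z) (fun z => hasDerivAt_const _ _)
      simp only [mul_zero, zero_sub, mul_one, integral_neg, neg_eq_zero] at this
      rw [integral_const_mul] at this
      simp at this ⊢
      exact this
  | succ k ih =>
    refine ⟨by push_cast; convert ih.2 using 3; ring, ?_⟩
    have := integral_zonal ω hω (fun z => z ^ (k + 2)) (fun z => (k + 2) * z ^ (k + 1))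
      (fun z => (k + 2) * ((k + 1) * z ^ k)) (by fun_prop)
      (fun z => by simpa using hasDerivAt_pow (k + 2) z)
      (fun z => by simpa using (hasDerivAt_pow (k + 1) z).const_mul ((k:ℝ) + 2))
    have e : ∀ σ : sphere (0 : E3) 1, ((1 - ⟪ω, (σ:E3)⟫ ^ 2) * ((k + 2) * ((k + 1) * ⟪ω, (σ:E3)⟫ ^ k))
      - 2 * ⟪ω, (σ:E3)⟫ * ((k + 2) * ⟪ω, (σ:E3)⟫ ^ (k + 1))) =
      ((k:ℝ) + 2) * (k + 1) * ⟪ω, (σ:E3)⟫ ^ k - (k + 2) * (k + 3) * ⟪ω, (σ:E3)⟫ ^ (k + 2) := by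
      intro σ; ring
    simp only [e] at this
    rw [integral_sub ((hint _).const_mul _) ((hint _).const_mul _), integral_const_mul,
      integral_const_mul, ih.1] at this
    have h3 : ((k:ℝ) + 3) ≠ 0 := by positivity
    have h2 : ((k:ℝ) + 2) ≠ 0 := by positivity
    have h1 : ((k:ℝ) + 1) ≠ 0 := by positivity
    have e2 : ((k:ℝ) + 2) * (k + 1) * (2 * π * ((1 - (-1) ^ (k + 1)) / (k + 1)))
      = (k + 2) * (2 * π * (1 - (-1) ^ (k + 1))) := by field_simp
    rw [e2] at this
    have e3 : ∫ σ : sphere (0 : E3) 1, ⟪ω, (σ:E3)⟫ ^ (k + 2) ∂sphereMeasure =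
      2 * π * (1 - (-1) ^ (k + 1)) / (k + 3) := by
      rw [eq_div_iff h3]
      apply mul_left_cancel₀ h2
      linarith
    rw [show k + 1 + 1 = k + 2 by ring, e3]
    push_cast
    rw [show k + 1 + 2 = (k + 1) + 2 by ring, pow_add (-1 : ℝ) (k + 1) 2,
      show (k:ℝ) + 1 + 2 = k + 3 by ring]
    ring

/-- Archimedes' hat-box theorem: the height function pushes the surface measure of the sphere
forward to a multiple of Lebesgue measure. -/
lemma archimedes_aux (ω : E3) (hω : ‖ω‖ = 1) :
    Measure.map (fun σ : sphere (0 : E3) 1 => ⟪ω, (σ:E3)⟫) sphereMeasure =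
      ENNReal.ofReal (2 * π) • volume.restrict (Icc (-1:ℝ) 1) := by
  have hzc : Continuous (fun σ : sphere (0 : E3) 1 => ⟪ω, (σ:E3)⟫) := by fun_prop
  have hz1 : ∀ σ : sphere (0 : E3) 1, ⟪ω, (σ:E3)⟫ ∈ Icc (-1:ℝ) 1 := by
    intro σ
    have := abs_real_inner_le_norm ω (σ : E3)
    rw [hω, norm_sph, one_mul] at this
    exact abs_le.1 this
  have : IsFiniteMeasure (Measure.map (fun σ : sphere (0 : E3) 1 => ⟪ω, (σ:E3)⟫) sphereMeasure) :=
    Measure.isFiniteMeasure_map _ _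
  have : IsFiniteMeasure (ENNReal.ofReal (2 * π) • volume.restrict (Icc (-1:ℝ) 1)) :=
    Measure.smul_finite _ ENNReal.ofReal_ne_top
  have hpi := Real.pi_pos
  have hip : ∀ p : Polynomial ℝ, Integrable (fun σ : sphere (0 : E3) 1 => p.eval ⟪ω, (σ:E3)⟫)
      sphereMeasure := fun p => sphere_integrable (p.continuous.comp hzc)
  have hpoly : ∀ p : Polynomial ℝ, ∫ σ : sphere (0 : E3) 1, p.eval ⟪ω, (σ:E3)⟫ ∂sphereMeasure
      = 2 * π * ∫ z in Icc (-1:ℝ) 1, p.eval z := by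
    intro p
    induction p using Polynomial.induction_on' with
    | add p q hp hq =>
      simp only [Polynomial.eval_add]
      rw [integral_add (hip p) (hip q), hp, hq, integral_add, mul_add]
      · exact p.continuous.integrableOn_Icc
      · exact q.continuous.integrableOn_Icc
    | monomial k a =>
      simp only [Polynomial.eval_monomial]
      rw [integral_const_mul, integral_const_mul, (sphere_moment ω hω k).1,
        integral_Icc_eq_integral_Ioc, ← intervalIntegral.integral_of_le (by norm_num), integral_pow]
      simp; ring
  apply ext_of_forall_integral_eq_of_IsFiniteMeasure
  intro g
  rw [integral_map hzc.aemeasurable g.continuous.aestronglyMeasurable, integral_smul_measure,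
    ENNReal.toReal_ofReal (by positivity), smul_eq_mul]
  by_contra hne
  set d := |∫ σ : sphere (0 : E3) 1, g ⟪ω, (σ:E3)⟫ ∂sphereMeasure - 2 * π * ∫ z in Icc (-1:ℝ) 1, g z|
  have hd : 0 < d := abs_pos.2 (sub_ne_zero.2 hne)
  obtain ⟨p, hp⟩ := exists_polynomial_near_of_continuousOn (-1) 1 g g.continuous.continuousOn
    (d / (16 * π)) (by positivity)
  have a1 : |∫ σ : sphere (0 : E3) 1, (p.eval ⟪ω, (σ:E3)⟫ - g ⟪ω, (σ:E3)⟫) ∂sphereMeasure|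
      ≤ d / (16 * π) * (4 * π) := by
    have := norm_integral_le_of_norm_le_const (μ := sphereMeasure) (C := d / (16 * π))
      (f := fun σ : sphere (0 : E3) 1 => (p.eval ⟪ω, (σ:E3)⟫ - g ⟪ω, (σ:E3)⟫))
      (.of_forall fun σ => (hp _ (hz1 σ)).le)
    rwa [sphereMeasure_real_univ] at this
  have a2 : |∫ z in Icc (-1:ℝ) 1, (p.eval z - g z)| ≤ d / (16 * π) * 2 := by
    have := norm_setIntegral_le_of_norm_le_const (μ := volume) (s := Icc (-1:ℝ) 1) (C := d / (16 * π))
      (f := fun z => p.eval z - g z) (by simp) (fun z hz => (hp _ hz).le)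
    simp [Measure.real] at this ⊢
    convert this using 2; norm_num
  have hig : Integrable (fun σ : sphere (0 : E3) 1 => g ⟪ω, (σ:E3)⟫) sphereMeasure :=
    sphere_integrable (g.continuous.comp hzc)
  rw [integral_sub (hip p) hig, hpoly] at a1
  rw [integral_sub p.continuous.integrableOn_Icc g.continuous.integrableOn_Icc] at a2
  have e1 : d / (16 * π) * (4 * π) = d / 4 := by field_simp; norm_num
  have e2 : 2 * π * (d / (16 * π) * 2) = d / 4 := by field_simp; norm_num
  have a3 := mul_le_mul_of_nonneg_left a2 (show 0 ≤ 2 * π by positivity)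
  rw [e2, ← abs_of_nonneg (show 0 ≤ 2 * π by positivity), ← abs_mul] at a3
  rw [e1] at a1
  have : d ≤ d / 4 + d / 4 := by
    rw [mul_sub] at a3
    have b1 := abs_le.1 a1
    have b3 := abs_le.1 a3
    exact abs_le.2 ⟨by linarith [b1.1, b1.2, b3.1, b3.2], by linarith [b1.1, b1.2, b3.1, b3.2]⟩
  linarith

/-- Integration over the sphere of a function of `1 - ⟪σ, ω⟫`. -/
lemma sphere_map (ω : E3) (hω : ‖ω‖ = 1) :
    Measure.map (fun σ : sphere (0 : E3) 1 => 1 - ⟪(σ:E3), ω⟫) sphereMeasure =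
      ENNReal.ofReal (2 * π) • volume.restrict (Icc (0:ℝ) 2) := by
  have hzc : Continuous (fun σ : sphere (0 : E3) 1 => ⟪ω, (σ:E3)⟫) := by fun_prop
  have h := Measure.map_map (μ := sphereMeasure) (g := fun z : ℝ => 1 - z)
    (f := (fun σ : sphere (0 : E3) 1 => ⟪ω, (σ:E3)⟫)) (by fun_prop) hzc.measurable
  rw [archimedes_aux ω hω, Measure.map_smul] at h
  have e : ((fun z : ℝ => 1 - z) ∘ fun σ : sphere (0 : E3) 1 => ⟪ω, (σ:E3)⟫) =
    fun σ : sphere (0 : E3) 1 => 1 - ⟪(σ:E3), ω⟫ := by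
    funext σ; simp [real_inner_comm]
  rw [e] at h
  rw [← h]
  congr 1
  have := (Measure.measurePreserving_sub_left (volume : Measure ℝ) 1).restrict_preimage
    (s := Icc 0 2) measurableSet_Icc
  rw [show (fun x : ℝ => 1 - x) ⁻¹' Icc 0 2 = Icc (-1) 1 by
    ext z; simp only [mem_preimage, mem_Icc]; constructor <;> rintro ⟨a, b⟩ <;> constructor <;> linarith] at this
  exact this.map_eq

/-! ### Concentration of spherical integrals near a pole -/

lemma u_nonneg {ω : E3} (hω : ‖ω‖ = 1) (σ : sphere (0 : E3) 1) : 0 ≤ 1 - ⟪(σ:E3), ω⟫ := by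
  have := abs_real_inner_le_norm (σ:E3) ω
  rw [hω, norm_sph, one_mul] at this
  linarith [(abs_le.1 this).2]

lemma u_le_two {ω : E3} (hω : ‖ω‖ = 1) (σ : sphere (0 : E3) 1) : 1 - ⟪(σ:E3), ω⟫ ≤ 2 := by
  have := abs_real_inner_le_norm (σ:E3) ω
  rw [hω, norm_sph, one_mul] at this
  linarith [(abs_le.1 this).1]

lemma norm_sub_sq_sph {ω : E3} (hω : ‖ω‖ = 1) (σ : sphere (0 : E3) 1) :
    ‖(σ:E3) - ω‖ ^ 2 = 2 * (1 - ⟪(σ:E3), ω⟫) := by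
  rw [norm_sub_sq_real, hω, norm_sph]; ring

lemma sphere_u_integral {ω : E3} (hω : ‖ω‖ = 1) {g : ℝ → ℝ} (hg : Measurable g) :
    ∫ σ : sphere (0 : E3) 1, g (1 - ⟪(σ:E3), ω⟫) ∂sphereMeasure
      = 2 * π * ∫ u in (0:ℝ)..2, g u := by
  have hc : Continuous (fun σ : sphere (0 : E3) 1 => 1 - ⟪(σ:E3), ω⟫) := by fun_prop
  rw [← integral_map hc.aemeasurable hg.aestronglyMeasurable, sphere_map ω hω,
    integral_smul_measure, ENNReal.toReal_ofReal (by positivity), integral_Icc_eq_integral_Ioc,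
    ← intervalIntegral.integral_of_le (by norm_num), smul_eq_mul]

lemma sphere_u_integrable {ω : E3} (hω : ‖ω‖ = 1) {g : ℝ → ℝ}
    (hi : IntegrableOn g (Icc 0 2)) :
    Integrable (fun σ : sphere (0 : E3) 1 => g (1 - ⟪(σ:E3), ω⟫)) sphereMeasure := by
  have hc : Continuous (fun σ : sphere (0 : E3) 1 => 1 - ⟪(σ:E3), ω⟫) := by fun_prop
  have : Integrable g (Measure.map (fun σ : sphere (0 : E3) 1 => 1 - ⟪(σ:E3), ω⟫) sphereMeasure) := by
    rw [sphere_map ω hω]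
    exact Integrable.smul_measure hi ENNReal.ofReal_ne_top
  exact this.comp_aemeasurable hc.aemeasurable

lemma ae_u_pos {ω : E3} (hω : ‖ω‖ = 1) :
    ∀ᵐ σ : sphere (0 : E3) 1 ∂sphereMeasure, 0 < 1 - ⟪(σ:E3), ω⟫ := by
  have hc : Continuous (fun σ : sphere (0 : E3) 1 => 1 - ⟪(σ:E3), ω⟫) := by fun_prop
  have : ∀ᵐ u ∂(Measure.map (fun σ : sphere (0 : E3) 1 => 1 - ⟪(σ:E3), ω⟫) sphereMeasure), u ≠ 0 := by
    rw [sphere_map ω hω]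
    apply Measure.ae_smul_measure
    exact ae_restrict_of_ae (by simp [ae_iff])
  filter_upwards [ae_of_ae_map hc.aemeasurable this] with σ hσ
  exact lt_of_le_of_ne (u_nonneg hω σ) (Ne.symm hσ)

lemma sphere_rsqrt_integrable {ω : E3} (hω : ‖ω‖ = 1) :
    Integrable (fun σ : sphere (0 : E3) 1 => (1 - ⟪(σ:E3), ω⟫) ^ (-(1/2):ℝ)) sphereMeasure := by
  refine sphere_u_integrable (g := fun u => u ^ (-(1/2):ℝ)) hω ?_
  rw [integrableOn_Icc_iff_integrableOn_Ioc,
    ← intervalIntegrable_iff_integrableOn_Ioc_of_le (by norm_num)]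
  exact intervalIntegral.intervalIntegrable_rpow' (by norm_num)

/-- The mass near `ω` at the scale `1/r` of the profile `(1 + c w) ^ (-s)`, `w = r (1 - ⟪σ, ω⟫)`. -/
lemma sphere_conc_bound {ω : E3} (hω : ‖ω‖ = 1) {c s r : ℝ} (hc : 0 < c) (hs : 1 < s) (hr : 0 < r) :
    r * ∫ σ : sphere (0 : E3) 1, (1 + c * (r * (1 - ⟪(σ:E3), ω⟫))) ^ (-s) ∂sphereMeasure
      ≤ 2 * π / (c * (s - 1)) := by
  rw [sphere_u_integral (g := fun u => (1 + c * (r * u)) ^ (-s)) hω (by fun_prop)]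
  have hd : ∀ u ∈ uIcc (0:ℝ) 2, HasDerivAt (fun u => -(1 + c * (r * u)) ^ (1 - s) / (c * r * (s - 1)))
      ((1 + c * (r * u)) ^ (-s)) u := by
    intro u hu
    rw [uIcc_of_le (by norm_num)] at hu
    have hp : 0 < 1 + c * (r * u) := by have := hu.1; positivity
    have h1 : HasDerivAt (fun u => 1 + c * (r * u)) (c * r) u := by
      simpa [mul_assoc] using (((hasDerivAt_id u).const_mul r).const_mul c).const_add 1
    have h2 := ((h1.rpow_const (p := 1 - s) (Or.inl hp.ne')).neg).div_const (c * r * (s - 1))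
    refine h2.congr_deriv ?_
    have : s - 1 ≠ 0 := by linarith
    rw [show 1 - s - 1 = -s by ring]
    field_simp
    ring
  rw [intervalIntegral.integral_eq_sub_of_hasDerivAt hd]
  · have h0 : 0 ≤ (1 + c * (r * 2)) ^ (1 - s) := by positivity
    have hs' : 0 < s - 1 := by linarith
    simp only [mul_zero, add_zero, Real.one_rpow]
    rw [show r * (2 * π * (-(1 + c * (r * 2)) ^ (1 - s) / (c * r * (s - 1)) - -1 / (c * r * (s - 1))))
      = 2 * π / (c * (s - 1)) * (1 - (1 + c * (r * 2)) ^ (1 - s)) by field_simp; ring]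
    have : 0 < 2 * π / (c * (s - 1)) := by positivity
    nlinarith
  · apply ContinuousOn.intervalIntegrable
    rw [uIcc_of_le (by norm_num)]
    intro u hu
    have hp : 0 < 1 + c * (r * u) := by have := hu.1; positivity
    have hcont : ContinuousAt (fun u => 1 + c * (r * u)) u := by fun_prop
    exact (hcont.rpow_const (Or.inl hp.ne')).continuousWithinAt

lemma conc_integrable {ω : E3} (hω : ‖ω‖ = 1) {c r : ℝ} (s : ℝ) (hc : 0 < c) (hr : 0 < r) :
    Integrable (fun σ : sphere (0 : E3) 1 => (1 + c * (r * (1 - ⟪(σ:E3), ω⟫))) ^ (-s)) sphereMeasure := by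
  apply sphere_integrable
  refine Continuous.rpow_const (by fun_prop) (fun σ => Or.inl ?_)
  have := u_nonneg hω σ
  positivity

lemma integrableOn_conc {c : ℝ} (hc : 0 < c) {s : ℝ} (hs : 1 < s) :
    IntegrableOn (fun w : ℝ => (1 + c * w) ^ (-s)) (Ioi 0) := by
  have h := integrableOn_add_rpow_Ioi_of_lt (a := -s) (c := 0) (m := 1 / c) (by linarith)
    (by have : 0 < 1 / c := by positivity
        linarith)
  refine IntegrableOn.congr_fun (h.const_mul (c ^ (-s))) (fun w hw => ?_) measurableSet_Ioi
  have hw' : (0:ℝ) < w := hw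
  rw [← Real.mul_rpow hc.le (by positivity)]
  congr 1; field_simp; ring

/-- Concentration: an integrand living at distance `1 - ⟪σ, ω⟫ ~ 1/r` from `ω` sees only the
profile at `ω` in the limit `r → ∞`. -/
lemma conc {ω : sphere (0 : E3) 1} {Ψ : ℝ → ℝ → sphere (0 : E3) 1 → ℝ}
    (hΨ : Continuous fun p : ℝ × ℝ × sphere (0 : E3) 1 => Ψ p.1 p.2.1 p.2.2)
    {C c r₀ : ℝ} (hC : 0 < C) (hc : 0 < c)
    (hb : ∀ r, r₀ ≤ r → ∀ σ : sphere (0 : E3) 1,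
      |Ψ (1/r) (r * (1 - ⟪(σ:E3), ω⟫)) σ| ≤ C * (1 + c * (r * (1 - ⟪(σ:E3), ω⟫))) ^ (-2:ℝ))
    (hb0 : ∀ w, 0 ≤ w → |Ψ 0 w ω| ≤ C * (1 + c * w) ^ (-2:ℝ)) :
    Tendsto (fun r : ℝ => r * ∫ σ : sphere (0 : E3) 1, Ψ (1/r) (r * (1 - ⟪(σ:E3), ω⟫)) σ ∂sphereMeasure)
      atTop (𝓝 (2 * π * ∫ w in Ioi (0:ℝ), Ψ 0 w ω)) := by
  have hω : ‖(ω:E3)‖ = 1 := norm_sph ω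
  have hk : Continuous fun w => Ψ 0 w ω := hΨ.comp (by fun_prop : Continuous fun w : ℝ => ((0:ℝ), w, ω))
  have hki : IntegrableOn (fun w => Ψ 0 w ω) (Ioi 0) := by
    refine Integrable.mono' ((integrableOn_conc hc (s := 2) (by norm_num)).const_mul C)
      hk.aestronglyMeasurable ?_
    exact (ae_restrict_mem measurableSet_Ioi).mono fun w hw => hb0 w (le_of_lt hw)
  have hlim : Tendsto (fun r : ℝ => 2 * π * ∫ w in (0:ℝ)..(2 * r), Ψ 0 w ω) atTop
      (𝓝 (2 * π * ∫ w in Ioi (0:ℝ), Ψ 0 w ω)) :=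
    (intervalIntegral_tendsto_integral_Ioi 0 hki (tendsto_id.const_mul_atTop two_pos)).const_mul _
  have hcΨ : ∀ r : ℝ, Integrable (fun σ : sphere (0 : E3) 1 => Ψ (1/r) (r * (1 - ⟪(σ:E3), ω⟫)) σ)
      sphereMeasure := fun r => sphere_integrable (hΨ.comp
        (by fun_prop : Continuous fun σ : sphere (0 : E3) 1 => (1/r, r * (1 - ⟪(σ:E3), ω⟫), σ)))
  have hck : ∀ r : ℝ, Integrable (fun σ : sphere (0 : E3) 1 => Ψ 0 (r * (1 - ⟪(σ:E3), ω⟫)) ω)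
      sphereMeasure := fun r => sphere_integrable (hk.comp
        (by fun_prop : Continuous fun σ : sphere (0 : E3) 1 => r * (1 - ⟪(σ:E3), ω⟫)))
  have hkr : ∀ r : ℝ, 0 < r → r * ∫ σ : sphere (0 : E3) 1, Ψ 0 (r * (1 - ⟪(σ:E3), ω⟫)) ω ∂sphereMeasure
      = 2 * π * ∫ w in (0:ℝ)..(2 * r), Ψ 0 w ω := by
    intro r hr
    rw [sphere_u_integral (g := fun u => Ψ 0 (r * u) ω) hω
      (hk.comp (by fun_prop : Continuous fun u : ℝ => r * u)).measurable,
      intervalIntegral.integral_comp_mul_left (f := fun w => Ψ 0 w ω) hr.ne']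
    simp only [mul_zero, smul_eq_mul]
    rw [mul_comm r 2]
    field_simp
  -- uniform smallness of the error
  have herr : ∀ ε > 0, ∀ᶠ r : ℝ in atTop, ∀ σ : sphere (0 : E3) 1,
      |Ψ (1/r) (r * (1 - ⟪(σ:E3), ω⟫)) σ - Ψ 0 (r * (1 - ⟪(σ:E3), ω⟫)) ω| ≤
        ε * (1 + c * (r * (1 - ⟪(σ:E3), ω⟫))) ^ (-(3/2):ℝ) := by
    intro ε hε
    obtain ⟨W, hW0, hW⟩ : ∃ W : ℝ, 0 ≤ W ∧ 2 * C * (1 + c * W) ^ (-(1/2):ℝ) ≤ ε := by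
      have h1 : Tendsto (fun W : ℝ => 2 * C * (1 + c * W) ^ (-(1/2):ℝ)) atTop (𝓝 (2 * C * 0)) := by
        apply Tendsto.const_mul
        apply (tendsto_rpow_neg_atTop (by norm_num : (0:ℝ) < 1/2)).comp
        exact tendsto_atTop_add_const_left _ _ (tendsto_id.const_mul_atTop hc)
      rw [mul_zero] at h1
      obtain ⟨W, h2, h3⟩ := ((eventually_ge_atTop 0).and (h1.eventually_le_const hε)).exists
      exact ⟨W, h2, h3⟩
    have hcomp : IsCompact (Icc (0:ℝ) 1 ×ˢ (Icc (0:ℝ) W ×ˢ (univ : Set (sphere (0 : E3) 1)))) :=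
      isCompact_Icc.prod (isCompact_Icc.prod isCompact_univ)
    have hu := hcomp.uniformContinuousOn_of_continuous hΨ.continuousOn
    rw [Metric.uniformContinuousOn_iff] at hu
    have hWp : 0 < (1 + c * W) ^ (-(3/2):ℝ) := by positivity
    obtain ⟨δ, hδ, hu⟩ := hu (ε * (1 + c * W) ^ (-(3/2):ℝ)) (by positivity)
    filter_upwards [eventually_ge_atTop 1, eventually_ge_atTop r₀, eventually_gt_atTop (1 / δ),
      eventually_gt_atTop (2 * W / δ ^ 2)] with r hr1 hr0 hrδ hrW σ
    have hrp : 0 < r := by linarith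
    have hun := u_nonneg hω σ
    set u := 1 - ⟪(σ:E3), ω⟫ with hudef
    have hwn : 0 ≤ r * u := by positivity
    rcases le_or_gt (r * u) W with hle | hgt
    · have h1 := hu (1/r, r * u, σ) ⟨⟨by positivity, by rw [div_le_one hrp]; exact hr1⟩, ⟨hwn, hle⟩, mem_univ _⟩
        (0, r * u, ω) ⟨⟨le_rfl, zero_le_one⟩, ⟨hwn, hle⟩, mem_univ _⟩ (by
          rw [Prod.dist_eq, Prod.dist_eq]
          simp only [dist_self]
          refine max_lt ?_ (max_lt hδ ?_)
          · rw [Real.dist_eq, sub_zero, abs_of_pos (by positivity)]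
            rw [div_lt_iff₀ hrp]; rw [div_lt_iff₀ hδ] at hrδ; linarith
          · rw [Subtype.dist_eq, dist_eq_norm]
            apply lt_of_pow_lt_pow_left₀ 2 hδ.le
            rw [norm_sub_sq_sph hω, ← hudef]
            rw [div_lt_iff₀ (by positivity)] at hrW
            by_contra hcon
            push Not at hcon
            nlinarith)
      rw [Real.dist_eq] at h1
      refine h1.le.trans (mul_le_mul_of_nonneg_left ?_ hε.le)
      exact Real.rpow_le_rpow_of_nonpos (by positivity) (by gcongr) (by norm_num)
    · have h1 := (abs_sub _ _).trans (add_le_add (hb r hr0 σ) (hb0 _ hwn))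
      refine h1.trans ?_
      have hp : 0 < 1 + c * (r * u) := by positivity
      rw [← hudef, show (-2:ℝ) = -(1/2) + -(3/2) by norm_num, Real.rpow_add hp]
      have h2 : (1 + c * (r * u)) ^ (-(1/2):ℝ) ≤ (1 + c * W) ^ (-(1/2):ℝ) :=
        Real.rpow_le_rpow_of_nonpos (by positivity) (by gcongr) (by norm_num)
      have h3 : 0 < (1 + c * (r * u)) ^ (-(3/2):ℝ) := by positivity
      nlinarith [mul_le_mul_of_nonneg_right h2 h3.le]
  have hz : Tendsto (fun r : ℝ => r * ∫ σ : sphere (0 : E3) 1, Ψ (1/r) (r * (1 - ⟪(σ:E3), ω⟫)) σ ∂sphereMeasure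
      - 2 * π * ∫ w in (0:ℝ)..(2 * r), Ψ 0 w ω) atTop (𝓝 0) := by
    rw [Metric.tendsto_nhds]
    intro ε hε
    have hpi := Real.pi_pos
    have h1 := herr (ε / (8 * π / c)) (by positivity)
    filter_upwards [h1, eventually_gt_atTop 0] with r h1 hr
    rw [← hkr r hr, ← mul_sub, ← integral_sub (hcΨ r) (hck r), Real.dist_eq, sub_zero, abs_mul,
      abs_of_pos hr]
    have h2 := norm_integral_le_of_norm_le (((conc_integrable hω (3/2) hc hr)).const_mul
      (ε / (8 * π / c))) (.of_forall fun σ => (Real.norm_eq_abs _).trans_le (h1 σ))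
    rw [integral_const_mul] at h2
    have h3 := sphere_conc_bound hω hc (by norm_num : (1:ℝ) < 3/2) hr
    rw [← Real.norm_eq_abs]
    generalize (∫ σ : sphere (0 : E3) 1,
      (1 + c * (r * (1 - ⟪(σ:E3), ω⟫))) ^ (-(3/2):ℝ) ∂sphereMeasure) = I at h2 h3
    calc _ ≤ r * (ε / (8 * π / c) * I) := mul_le_mul_of_nonneg_left h2 hr.le
      _ = (ε / (8 * π / c)) * (r * I) := by ring
      _ ≤ (ε / (8 * π / c)) * (2 * π / (c * (3/2 - 1))) := by gcongr
      _ = ε / 2 := by field_simp; norm_num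
      _ < ε := by linarith
  simpa using hz.add hlim

/-! ### Smoothness of parameter-dependent integrals; superpositions of plane waves -/

section Param

variable {P Q V Y : Type} [NormedAddCommGroup P] [NormedSpace ℝ P] [ProperSpace P]
  [NormedAddCommGroup Q] [NormedSpace ℝ Q] [MeasurableSpace Y] {μ : Measure Y} {w : Y → ℝ} {v : Y → Q}

/-- Differentiation under the integral sign, for parameters ranging in a compact set. -/
lemma param_hasFDerivAt [NormedAddCommGroup V] [NormedSpace ℝ V] {Φ : P × Q → V}
    (hΦ : ContDiff ℝ 1 Φ) (hw : Integrable w μ) (hv : AEStronglyMeasurable v μ)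
    {K : Set Q} (hK : IsCompact K) (hvK : ∀ᵐ y ∂μ, v y ∈ K) (z₀ : P) :
    HasFDerivAt (fun z => ∫ y, w y • Φ (z, v y) ∂μ)
      (∫ y, w y • (fderiv ℝ Φ (z₀, v y)).comp (ContinuousLinearMap.inl ℝ P Q) ∂μ) z₀ := by
  have hcd : Continuous fun p : P × Q => (fderiv ℝ Φ p).comp (ContinuousLinearMap.inl ℝ P Q) :=
    (hΦ.continuous_fderiv one_ne_zero).clm_comp continuous_const
  have hkk : IsCompact (closedBall z₀ 1 ×ˢ K) := (isCompact_closedBall z₀ 1).prod hK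
  obtain ⟨C, hC⟩ := hkk.exists_bound_of_continuousOn hcd.continuousOn
  obtain ⟨C', hC'⟩ := hkk.exists_bound_of_continuousOn hΦ.continuous.continuousOn
  have hpair : ∀ z : P, AEStronglyMeasurable (fun y => (z, v y)) μ := fun z =>
    aestronglyMeasurable_const.prodMk hv
  have hm : ∀ z, AEStronglyMeasurable (fun y => w y • Φ (z, v y)) μ := fun z =>
    hw.aestronglyMeasurable.smul (hΦ.continuous.comp_aestronglyMeasurable (hpair z))
  refine hasFDerivAt_integral_of_dominated_of_fderiv_le (s := closedBall z₀ 1)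
    (bound := fun y => ‖w y‖ * C) (closedBall_mem_nhds z₀ one_pos) (.of_forall hm) ?_ ?_ ?_ ?_ ?_
    (F' := fun z y => w y • (fderiv ℝ Φ (z, v y)).comp (ContinuousLinearMap.inl ℝ P Q))
  · refine (hw.norm.mul_const C').mono' (hm z₀) ?_
    filter_upwards [hvK] with y hy
    rw [norm_smul]
    exact mul_le_mul_of_nonneg_left (hC' (z₀, v y) ⟨mem_closedBall_self zero_le_one, hy⟩) (norm_nonneg _)
  · exact hw.aestronglyMeasurable.smul (hcd.comp_aestronglyMeasurable (hpair z₀))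
  · filter_upwards [hvK] with y hy z hz
    rw [norm_smul]
    exact mul_le_mul_of_nonneg_left (hC (z, v y) ⟨hz, hy⟩) (norm_nonneg _)
  · exact hw.norm.mul_const C
  · refine .of_forall fun y z _ => HasFDerivAt.const_smul ?_ _
    exact ((hΦ.differentiable one_ne_zero (z, v y)).hasFDerivAt).comp z (hasFDerivAt_prodMk_left z (v y))

/-- The induction on the order of differentiability passes from `Φ` to its derivative in the first
variable, so that the target space has to vary. -/
lemma param_contDiff_nat (hw : Integrable w μ) (hv : AEStronglyMeasurable v μ)
    {K : Set Q} (hK : IsCompact K) (hvK : ∀ᵐ y ∂μ, v y ∈ K) (k : ℕ) :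
    ∀ {V : Type} [NormedAddCommGroup V] [NormedSpace ℝ V] {Φ : P × Q → V},
      ContDiff ℝ (⊤ : ℕ∞) Φ → ContDiff ℝ k (fun z => ∫ y, w y • Φ (z, v y) ∂μ) := by
  induction k with
  | zero =>
    intro V _ _ Φ hΦ
    have h := param_hasFDerivAt (hΦ.of_le (by exact_mod_cast le_top)) hw hv hK hvK
    rw [Nat.cast_zero, contDiff_zero, continuous_iff_continuousAt]
    exact fun z => (h z).continuousAt
  | succ k ih =>
    intro V _ _ Φ hΦ
    have h := param_hasFDerivAt (hΦ.of_le (by exact_mod_cast le_top)) hw hv hK hvK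
    rw [show ((k + 1 : ℕ) : WithTop ℕ∞) = (k : WithTop ℕ∞) + 1 by push_cast; rfl, contDiff_succ_iff_fderiv]
    refine ⟨fun z => (h z).differentiableAt, by simp, ?_⟩
    rw [show fderiv ℝ (fun z => ∫ y, w y • Φ (z, v y) ∂μ) = fun z =>
      ∫ y, w y • (fun p => (fderiv ℝ Φ p).comp (ContinuousLinearMap.inl ℝ P Q)) (z, v y) ∂μ from
      funext fun z => (h z).fderiv]
    exact ih ((contDiff_infty_iff_fderiv.1 hΦ).2.clm_comp contDiff_const)

/-- Integrals of smooth functions over a compact set of parameters are smooth. -/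
lemma param_contDiff [NormedAddCommGroup V] [NormedSpace ℝ V] {Φ : P × Q → V}
    (hΦ : ContDiff ℝ (⊤ : ℕ∞) Φ) (hw : Integrable w μ) (hv : AEStronglyMeasurable v μ)
    {K : Set Q} (hK : IsCompact K) (hvK : ∀ᵐ y ∂μ, v y ∈ K) :
    ContDiff ℝ (⊤ : ℕ∞) (fun z => ∫ y, w y • Φ (z, v y) ∂μ) :=
  contDiff_infty.2 fun k => param_contDiff_nat hw hv hK hvK k hΦ

end Param

/-- The derivative of `G` in the direction `v`. -/
def dd {P : Type} [NormedAddCommGroup P] [NormedSpace ℝ P] (v : P) (G : P → ℝ) (z : P) : ℝ :=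
  fderiv ℝ G z v

section Dd
variable {P Q : Type} [NormedAddCommGroup P] [NormedSpace ℝ P]
  [NormedAddCommGroup Q] [NormedSpace ℝ Q]

lemma dd_smooth {G : P → ℝ} (hG : ContDiff ℝ (⊤ : ℕ∞) G) (v : P) : ContDiff ℝ (⊤ : ℕ∞) (dd v G) :=
  (contDiff_infty_iff_fderiv.1 hG).2.clm_apply contDiff_const

lemma smooth_diff {G : P → ℝ} (hG : ContDiff ℝ (⊤ : ℕ∞) G) : Differentiable ℝ G :=
  (contDiff_infty_iff_fderiv.1 hG).1

lemma dd_add {G G' : P → ℝ} (hG : ContDiff ℝ (⊤ : ℕ∞) G) (hG' : ContDiff ℝ (⊤ : ℕ∞) G') (v : P) :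
    dd v (fun z => G z + G' z) = fun z => dd v G z + dd v G' z := by
  funext z; unfold dd
  rw [fderiv_fun_add (smooth_diff hG z) (smooth_diff hG' z)]; rfl

lemma dd_const_mul {G : P → ℝ} (hG : ContDiff ℝ (⊤ : ℕ∞) G) (c : ℝ) (v : P) :
    dd v (fun z => c * G z) = fun z => c * dd v G z := by
  funext z; unfold dd
  rw [fderiv_const_mul (smooth_diff hG z)]; rfl

lemma dd_mul {G G' : P → ℝ} (hG : ContDiff ℝ (⊤ : ℕ∞) G) (hG' : ContDiff ℝ (⊤ : ℕ∞) G') (v : P) :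
    dd v (fun z => G z * G' z) = fun z => G z * dd v G' z + G' z * dd v G z := by
  funext z; unfold dd
  rw [fderiv_fun_mul (smooth_diff hG z) (smooth_diff hG' z)]; rfl

/-- Chain rule for an affine map. -/
lemma dd_comp {G : Q → ℝ} (hG : ContDiff ℝ (⊤ : ℕ∞) G) (L : P →L[ℝ] Q) (c : Q) (v : P) :
    dd v (fun z => G (L z + c)) = fun z => dd (L v) G (L z + c) := by
  funext z; unfold dd
  have : HasFDerivAt (fun z => G (L z + c)) _ z :=
    (smooth_diff hG (L z + c)).hasFDerivAt.comp z (L.hasFDerivAt.add_const c)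
  rw [this.fderiv]; rfl

lemma dd_hasDerivAt {G : P → ℝ} (hG : ContDiff ℝ (⊤ : ℕ∞) G) {γ : ℝ → P} {γ' : P} {s : ℝ}
    (hγ : HasDerivAt γ γ' s) : HasDerivAt (fun s => G (γ s)) (dd γ' G (γ s)) s :=
  (smooth_diff hG (γ s)).hasFDerivAt.comp_hasDerivAt s hγ

lemma dd_dd {G : P → ℝ} (hG : ContDiff ℝ (⊤ : ℕ∞) G) (a b z : P) :
    dd a (dd b G) z = fderiv ℝ (fderiv ℝ G) z a b := by
  have h2 := (contDiff_infty_iff_fderiv.1 hG).2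
  have : HasFDerivAt (dd b G) _ z :=
    ((contDiff_infty_iff_fderiv.1 h2).1 z).hasFDerivAt.clm_apply (hasFDerivAt_const b z)
  conv_lhs => unfold dd
  rw [show (fun z => (fderiv ℝ G z) b) = dd b G from rfl, this.fderiv]
  simp

lemma dd_comm {G : P → ℝ} (hG : ContDiff ℝ (⊤ : ℕ∞) G) (v v' : P) : dd v (dd v' G) = dd v' (dd v G) := by
  funext z
  rw [dd_dd hG, dd_dd hG]
  exact (hG.contDiffAt.isSymmSndFDerivAt (by
    rw [minSmoothness_of_isRCLikeNormedField]; exact WithTop.coe_le_coe.2 (le_top : (2:ℕ∞) ≤ ⊤))).eq v v'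

lemma dd_add_dir {G : P → ℝ} (v v' z : P) : dd (v + v') G z = dd v G z + dd v' G z := by
  simp [dd]

lemma dd_smul_dir {G : P → ℝ} (c : ℝ) (v z : P) : dd (c • v) G z = c * dd v G z := by
  simp [dd]

variable [ProperSpace P] {Y : Type} [MeasurableSpace Y] {μ : Measure Y} {w : Y → ℝ} {v : Y → Q}

lemma dd_param {Φ : P × Q → ℝ}
    (hΦ : ContDiff ℝ (⊤ : ℕ∞) Φ) (hw : Integrable w μ) (hv : AEStronglyMeasurable v μ)
    {K : Set Q} (hK : IsCompact K) (hvK : ∀ᵐ y ∂μ, v y ∈ K) (h : P) :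
    dd h (fun z => ∫ y, w y * Φ (z, v y) ∂μ) = fun z => ∫ y, w y * dd (h, 0) Φ (z, v y) ∂μ := by
  funext z
  have h1 := (param_hasFDerivAt (hΦ.of_le (by exact_mod_cast le_top)) hw hv hK hvK z)
  unfold dd
  simp only [smul_eq_mul] at h1
  rw [h1.fderiv]
  rw [ContinuousLinearMap.integral_apply]
  · rfl
  have hcd : Continuous fun p : P × Q => (fderiv ℝ Φ p).comp (ContinuousLinearMap.inl ℝ P Q) :=
    (contDiff_infty_iff_fderiv.1 hΦ).2.continuous.clm_comp continuous_const
  obtain ⟨C, hC⟩ := (isCompact_singleton.prod hK : IsCompact ({z} ×ˢ K)).exists_bound_of_continuousOn hcd.continuousOn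
  refine (hw.norm.mul_const C).mono' (hw.aestronglyMeasurable.smul
    (hcd.comp_aestronglyMeasurable (aestronglyMeasurable_const.prodMk hv))) ?_
  filter_upwards [hvK] with y hy
  rw [norm_smul]
  exact mul_le_mul_of_nonneg_left (hC (z, v y) ⟨rfl, hy⟩) (norm_nonneg _)

end Dd

/-- The wave operator on functions of `(t, x)`. -/
def box (G : ℝ × E3 → ℝ) (z : ℝ × E3) : ℝ :=
  dd (1, 0) (dd (1, 0) G) z - ∑ i, dd (0, ee i) (dd (0, ee i) G) z

lemma box_eq {G : ℝ × E3 → ℝ} (hG : ContDiff ℝ (⊤ : ℕ∞) G) (t : ℝ) (x : E3) :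
    dt2 (fun t x => G (t, x)) t x - lap3 (fun x => G (t, x)) x = box G (t, x) := by
  have ht : ∀ {G : ℝ × E3 → ℝ}, ContDiff ℝ (⊤ : ℕ∞) G → ∀ t, deriv (fun s => G (s, x)) t = dd (1, 0) G (t, x) := by
    intro G hG t
    exact (dd_hasDerivAt hG ((hasDerivAt_id t).prodMk (hasDerivAt_const t x))).deriv
  have hx : ∀ {G : ℝ × E3 → ℝ}, ContDiff ℝ (⊤ : ℕ∞) G → ∀ i, pd i (fun x => G (t, x)) = fun x => dd (0, ee i) G (t, x) := by
    intro G hG i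
    funext x
    unfold pd dd
    have : HasFDerivAt (fun x => G (t, x)) _ x :=
      (smooth_diff hG (t, x)).hasFDerivAt.comp x ((hasFDerivAt_const t x).prodMk (hasFDerivAt_id x))
    rw [this.fderiv]
    simp
  unfold box dt2 lap3
  congr 1
  · rw [show (fun s => deriv (fun u => G (u, x)) s) = fun s => dd (1, 0) G (s, x) from funext (ht hG)]
    exact ht (dd_smooth hG _) t
  · refine Finset.sum_congr rfl fun i _ => ?_
    rw [hx hG i]
    exact congrFun (hx (dd_smooth hG _) i) x

lemma box_add {G G' : ℝ × E3 → ℝ} (hG : ContDiff ℝ (⊤ : ℕ∞) G) (hG' : ContDiff ℝ (⊤ : ℕ∞) G') (z) :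
    box (fun z => G z + G' z) z = box G z + box G' z := by
  unfold box
  simp only [dd_add hG hG', dd_add (dd_smooth hG _) (dd_smooth hG' _), Finset.sum_add_distrib]
  ring

lemma box_const_mul {G : ℝ × E3 → ℝ} (hG : ContDiff ℝ (⊤ : ℕ∞) G) (c : ℝ) (z) :
    box (fun z => c * G z) z = c * box G z := by
  unfold box
  simp only [dd_const_mul hG, dd_const_mul (dd_smooth hG _), ← Finset.mul_sum]
  ring

/-- The wave operator commutes with integration over a compact parameter set. -/
lemma box_param {Q Y : Type} [NormedAddCommGroup Q] [NormedSpace ℝ Q] [MeasurableSpace Y] {μ : Measure Y}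
    {w : Y → ℝ} {v : Y → Q} {Φ : (ℝ × E3) × Q → ℝ}
    (hΦ : ContDiff ℝ (⊤ : ℕ∞) Φ) (hw : Integrable w μ) (hv : AEStronglyMeasurable v μ)
    {K : Set Q} (hK : IsCompact K) (hvK : ∀ᵐ y ∂μ, v y ∈ K) (z : ℝ × E3) :
    box (fun z => ∫ y, w y * Φ (z, v y) ∂μ) z = ∫ y, w y * box (fun z => Φ (z, v y)) z ∂μ := by
  have hint : ∀ {Ψ : (ℝ × E3) × Q → ℝ}, ContDiff ℝ (⊤ : ℕ∞) Ψ → Integrable (fun y => w y * Ψ (z, v y)) μ := by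
    intro Ψ hΨ
    obtain ⟨C, hC⟩ := (isCompact_singleton.prod hK : IsCompact ({z} ×ˢ K)).exists_bound_of_continuousOn
      hΨ.continuous.continuousOn
    refine (hw.norm.mul_const C).mono' (hw.aestronglyMeasurable.mul
      (hΨ.continuous.comp_aestronglyMeasurable (aestronglyMeasurable_const.prodMk hv))) ?_
    filter_upwards [hvK] with y hy
    rw [norm_mul]
    exact mul_le_mul_of_nonneg_left (hC (z, v y) ⟨rfl, hy⟩) (norm_nonneg _)
  have hsl : ∀ {Ψ : (ℝ × E3) × Q → ℝ}, ContDiff ℝ (⊤ : ℕ∞) Ψ → ∀ h q, dd h (fun z => Ψ (z, q)) =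
      fun z => dd (h, 0) Ψ (z, q) := by
    intro Ψ hΨ h q
    have := dd_comp hΨ (ContinuousLinearMap.inl ℝ (ℝ × E3) Q) (0, q) h
    simpa using this
  unfold box
  simp only [dd_param hΦ hw hv hK hvK, dd_param (dd_smooth hΦ _) hw hv hK hvK, hsl hΦ, hsl (dd_smooth hΦ _)]
  rw [← integral_finsetSum _ fun i _ => hint (dd_smooth (dd_smooth hΦ _) _), ← integral_sub
    (hint (dd_smooth (dd_smooth hΦ _) _)) (integrable_finsetSum _ fun i _ => hint (dd_smooth (dd_smooth hΦ _) _))]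
  simp only [mul_sub, Finset.mul_sum]

lemma coe_sph_mem (σ : sphere (0 : E3) 1) : (σ : E3) ∈ sphere (0 : E3) 1 := σ.2

lemma sph_meas : AEStronglyMeasurable (fun σ : sphere (0 : E3) 1 => (σ : E3)) sphereMeasure :=
  continuous_subtype_val.aestronglyMeasurable

/-- A weighted superposition of plane waves. -/
def planeWave (b : sphere (0 : E3) 1 → ℝ) (Φ : ℝ × E3 → ℝ) (z : ℝ × E3) : ℝ :=
  ∫ σ : sphere (0 : E3) 1, b σ * Φ (⟪z.2, (σ:E3)⟫ - z.1, (σ:E3)) ∂sphereMeasure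

lemma planeWave_aux {Φ : ℝ × E3 → ℝ} (hΦ : ContDiff ℝ (⊤ : ℕ∞) Φ) :
    ContDiff ℝ (⊤ : ℕ∞) (fun p : (ℝ × E3) × E3 => Φ (⟪p.1.2, p.2⟫ - p.1.1, p.2)) := by
  exact hΦ.comp (((contDiff_fst.snd.inner ℝ contDiff_snd).sub contDiff_fst.fst).prodMk contDiff_snd)

lemma planeWave_smooth {b : sphere (0 : E3) 1 → ℝ} (hb : Continuous b) {Φ : ℝ × E3 → ℝ}
    (hΦ : ContDiff ℝ (⊤ : ℕ∞) Φ) : ContDiff ℝ (⊤ : ℕ∞) (planeWave b Φ) :=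
  param_contDiff (planeWave_aux hΦ) (sphere_integrable hb) sph_meas (isCompact_sphere 0 1) (.of_forall coe_sph_mem)

lemma planeWave_box {b : sphere (0 : E3) 1 → ℝ} (hb : Continuous b) {Φ : ℝ × E3 → ℝ}
    (hΦ : ContDiff ℝ (⊤ : ℕ∞) Φ) (z) : box (planeWave b Φ) z = 0 := by
  have h := box_param (planeWave_aux hΦ) (sphere_integrable hb) sph_meas (isCompact_sphere 0 1)
    (.of_forall coe_sph_mem) z
  refine h.trans ?_
  rw [integral_eq_zero_of_ae]
  refine .of_forall fun σ => ?_
  simp only [Pi.zero_apply, mul_eq_zero]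
  right
  -- `z ↦ ⟪x, σ⟫ - t` as a continuous linear map
  set L : ℝ × E3 →L[ℝ] ℝ × E3 := (((innerSL ℝ (σ:E3)).comp (ContinuousLinearMap.snd ℝ ℝ E3)) -
    ContinuousLinearMap.fst ℝ ℝ E3).prod 0 with hL
  have hfun : (fun z : ℝ × E3 => Φ (⟪z.2, (σ:E3)⟫ - z.1, (σ:E3))) = fun z => Φ (L z + (0, (σ:E3))) := by
    funext z
    simp [hL, real_inner_comm]
  have hs : ∑ i, ⟪(σ:E3), ee i⟫ ^ 2 = 1 := by
    have := norm_sph σ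
    rw [EuclideanSpace.norm_eq, Real.sqrt_eq_one] at this
    refine Eq.trans ?_ this
    refine Finset.sum_congr rfl fun i _ => ?_
    simp [ee, EuclideanSpace.inner_single_right]
  have hdir : ∀ a : ℝ × E3, L a = (⟪(σ:E3), a.2⟫ - a.1) • ((1, 0) : ℝ × E3) := by
    intro a; simp [hL]
  rw [hfun]
  unfold box
  have h1 : ∀ {Φ : ℝ × E3 → ℝ}, ContDiff ℝ (⊤ : ℕ∞) Φ → ∀ v, dd v (fun z => Φ (L z + (0, (σ:E3)))) =
      fun z => dd (L v) Φ (L z + (0, (σ:E3))) := fun hΦ v => dd_comp hΦ L _ v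
  have h2 : ∀ v, dd v (dd v (fun z => Φ (L z + (0, (σ:E3))))) =
      fun z => dd (L v) (dd (L v) Φ) (L z + (0, (σ:E3))) := fun v => by
    rw [h1 hΦ, h1 (dd_smooth hΦ _)]
  rw [h2, Finset.sum_congr rfl fun i _ => congrFun (h2 (0, ee i)) z]
  simp only [hdir]
  have e : ∀ (c : ℝ) (z), dd (c • ((1, 0) : ℝ × E3)) (dd (c • ((1, 0) : ℝ × E3)) Φ) z
      = c ^ 2 * dd (1, 0) (dd (1, 0) Φ) z := by
    intro c z
    rw [dd_smul_dir, show dd (c • ((1, 0) : ℝ × E3)) Φ = fun z => c * dd (1, 0) Φ z from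
      funext fun z => dd_smul_dir c _ z, dd_const_mul (dd_smooth hΦ _)]
    ring
  simp only [e, sub_zero, ← Finset.sum_mul, hs]
  simp

/-! ### The advanced potential of a source with a renormalised tail -/

lemma dd_slice {P Q : Type} [NormedAddCommGroup P] [NormedSpace ℝ P] [NormedAddCommGroup Q]
    [NormedSpace ℝ Q] {G : P × Q → ℝ} (hG : ContDiff ℝ (⊤ : ℕ∞) G) (h : P) (q : Q) :
    dd h (fun z => G (z, q)) = fun z => dd (h, 0) G (z, q) := by
  have := dd_comp hG (ContinuousLinearMap.inl ℝ P Q) (0, q) h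
  simpa using this

lemma smooth_slice {P Q : Type} [NormedAddCommGroup P] [NormedSpace ℝ P] [NormedAddCommGroup Q]
    [NormedSpace ℝ Q] {G : P × Q → ℝ} (hG : ContDiff ℝ (⊤ : ℕ∞) G) (q : Q) :
    ContDiff ℝ (⊤ : ℕ∞) (fun z => G (z, q)) := hG.comp (contDiff_id.prodMk contDiff_const)

lemma box_slice {Q : Type} [NormedAddCommGroup Q] [NormedSpace ℝ Q] {G : (ℝ × E3) × Q → ℝ}
    (hG : ContDiff ℝ (⊤ : ℕ∞) G) (q : Q) (z : ℝ × E3) :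
    box (fun z => G (z, q)) z = dd ((1, 0), 0) (dd ((1, 0), 0) G) (z, q)
      - ∑ i, dd ((0, ee i), 0) (dd ((0, ee i), 0) G) (z, q) := by
  unfold box
  simp only [dd_slice hG, dd_slice (dd_smooth hG _)]

lemma ae_uIoc_mem : ∀ᵐ y : ℝ ∂(volume.restrict (Ioc (0:ℝ) 1)), id y ∈ Icc (0:ℝ) 1 :=
  (ae_restrict_mem measurableSet_Ioc).mono fun _ h => Ioc_subset_Icc_self h

lemma smooth_integral01 {P : Type} [NormedAddCommGroup P] [NormedSpace ℝ P] [ProperSpace P] {G : P × ℝ → ℝ}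
    (hG : ContDiff ℝ (⊤ : ℕ∞) G) : ContDiff ℝ (⊤ : ℕ∞) (fun z => ∫ s in (0:ℝ)..1, G (z, s)) := by
  have := param_contDiff (w := fun _ => 1) (v := id) hG (integrable_const (μ := volume.restrict (Ioc (0:ℝ) 1)) 1)
    aestronglyMeasurable_id isCompact_Icc ae_uIoc_mem
  simpa [intervalIntegral.integral_of_le] using this

lemma box_integral01 {G : (ℝ × E3) × ℝ → ℝ} (hG : ContDiff ℝ (⊤ : ℕ∞) G) (z : ℝ × E3) :
    box (fun z => ∫ s in (0:ℝ)..1, G (z, s)) z = ∫ s in (0:ℝ)..1, box (fun z => G (z, s)) z := by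
  have := box_param (w := fun _ => 1) (v := id) hG (integrable_const (μ := volume.restrict (Ioc (0:ℝ) 1)) 1)
    aestronglyMeasurable_id isCompact_Icc ae_uIoc_mem z
  simpa [intervalIntegral.integral_of_le] using this

/-- Hadamard's lemma. -/
lemma hadamard {P : Type} [NormedAddCommGroup P] [NormedSpace ℝ P] [ProperSpace P] {G : P × ℝ → ℝ}
    (hG : ContDiff ℝ (⊤ : ℕ∞) G) : ∃ G' : P × ℝ → ℝ, ContDiff ℝ (⊤ : ℕ∞) G' ∧
      ∀ z s, G (z, s) = G (z, 0) + s * G' (z, s) := by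
  refine ⟨fun p => ∫ θ in (0:ℝ)..1, dd (0, 1) G (p.1, θ * p.2), ?_, fun z s => ?_⟩
  · refine smooth_integral01 (G := fun q : (P × ℝ) × ℝ => dd (0, 1) G (q.1.1, q.2 * q.1.2)) ?_
    exact (dd_smooth hG _).comp (by fun_prop)
  · have hd : ∀ θ : ℝ, HasDerivAt (fun θ => G (z, θ * s)) (s * dd (0, 1) G (z, θ * s)) θ := by
      intro θ
      have h1 : HasDerivAt (fun θ : ℝ => (z, θ * s)) ((0 : P), s) θ :=
        (hasDerivAt_const θ z).prodMk (by simpa using (hasDerivAt_id θ).mul_const s)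
      have h2 := dd_hasDerivAt hG h1
      rwa [show ((0 : P), s) = s • ((0 : P), (1:ℝ)) by simp, dd_smul_dir] at h2
    have h3 := intervalIntegral.integral_eq_sub_of_hasDerivAt (a := 0) (b := 1) (fun θ _ => hd θ)
      (Continuous.intervalIntegrable (continuous_const.mul ((dd_smooth hG _).continuous.comp (by fun_prop))) _ _)
    rw [intervalIntegral.integral_const_mul] at h3
    simp only [one_mul, zero_mul] at h3
    simp only
    linarith

/-- `ρ` times the integral of `S` over the forward light sphere of radius `ρ` about `z`. -/
def lightMean (S : ℝ × E3 → ℝ) (p : (ℝ × E3) × ℝ) : ℝ :=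
  ∫ σ : sphere (0 : E3) 1, p.2 * S (p.1 + p.2 • ((1:ℝ), (σ:E3))) ∂sphereMeasure

section Light
variable {S : ℝ × E3 → ℝ} (hS : ContDiff ℝ (⊤ : ℕ∞) S)
include hS

lemma light_aux : ContDiff ℝ (⊤ : ℕ∞) (fun q : ((ℝ × E3) × ℝ) × E3 => S (q.1.1 + q.1.2 • ((1:ℝ), q.2))) :=
  hS.comp (by fun_prop)

lemma light_aux' : ContDiff ℝ (⊤ : ℕ∞) (fun q : ((ℝ × E3) × ℝ) × E3 => q.1.2 * S (q.1.1 + q.1.2 • ((1:ℝ), q.2))) :=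
  contDiff_fst.snd.mul (light_aux hS)

lemma lightMean_smooth : ContDiff ℝ (⊤ : ℕ∞) (lightMean S) := by
  have := param_contDiff (light_aux' hS) (sphere_integrable continuous_const : Integrable (fun _ => (1:ℝ)) sphereMeasure)
    sph_meas (isCompact_sphere 0 1) (.of_forall coe_sph_mem)
  simp only [one_smul] at this
  exact this

/-- The boundary term at the vertex of the cone, where the value of the source is recovered. -/
lemma lightMean_zero (z : ℝ × E3) :
    2 * dd ((1, 0), 0) (lightMean S) (z, 0) - dd (0, 1) (lightMean S) (z, 0) = - (4 * π * S z) := by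
  set g : (ℝ × E3) × ℝ → ℝ := fun p => ∫ σ : sphere (0 : E3) 1, S (p.1 + p.2 • ((1:ℝ), (σ:E3))) ∂sphereMeasure with hgdef
  have hg : ContDiff ℝ (⊤ : ℕ∞) g := by
    have := param_contDiff (light_aux hS) (sphere_integrable continuous_const : Integrable (fun _ => (1:ℝ)) sphereMeasure)
      sph_meas (isCompact_sphere 0 1) (.of_forall coe_sph_mem)
    simpa only [one_smul] using this
  have hm : lightMean S = fun p => p.2 * g p := by
    funext p; simp only [lightMean, hgdef, integral_const_mul]
  have hd : ∀ v : (ℝ × E3) × ℝ, dd v (fun p : (ℝ × E3) × ℝ => p.2) (z, 0) = v.2 := by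
    intro v; unfold dd; rw [fderiv_snd]; rfl
  rw [hm, dd_mul contDiff_snd hg, dd_mul contDiff_snd hg]
  simp only [hd]
  simp only [hgdef, zero_smul, add_zero, integral_const, sphereMeasure_real_univ, smul_eq_mul]
  ring

/-- Darboux's equation. -/
lemma darboux (z : ℝ × E3) {ρ : ℝ} (hρ : ρ ≠ 0) :
    box (fun z => lightMean S (z, ρ)) z =
      dd (0, 1) (fun p => 2 * dd ((1, 0), 0) (lightMean S) p - dd (0, 1) (lightMean S) p) (z, ρ) := by
  have hm := lightMean_smooth hS
  set D : (ℝ × E3) × ℝ := ((1, 0), -1) with hD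
  -- it suffices to compare the second derivative along `∂_t - ∂_ρ` with the Laplacian
  suffices h : dd D (dd D (lightMean S)) (z, ρ) =
      ∑ i, dd ((0, ee i), 0) (dd ((0, ee i), 0) (lightMean S)) (z, ρ) by
    rw [box_slice hm, ← h]
    have hsub : (fun p => 2 * dd ((1, 0), 0) (lightMean S) p - dd (0, 1) (lightMean S) p) =
      fun p => 2 * dd ((1, 0), 0) (lightMean S) p + (-1) * dd (0, 1) (lightMean S) p := by funext p; ring
    rw [hsub, dd_add (contDiff_const.mul (dd_smooth hm _)) (contDiff_const.mul (dd_smooth hm _)),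
      dd_const_mul (dd_smooth hm _), dd_const_mul (dd_smooth hm _)]
    have hD' : D = ((1, 0), 0) + (-1 : ℝ) • ((0, 1) : (ℝ × E3) × ℝ) := by simp [hD]
    have e1 : ∀ G : (ℝ × E3) × ℝ → ℝ, dd D G = fun p => dd ((1, 0), 0) G p + (-1) * dd (0, 1) G p := by
      intro G; funext p; rw [hD', dd_add_dir, dd_smul_dir]
    rw [e1 (dd D _), e1, dd_add (dd_smooth hm _) (contDiff_const.mul (dd_smooth hm _)),
      dd_add (dd_smooth hm _) (contDiff_const.mul (dd_smooth hm _)),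
      dd_const_mul (dd_smooth hm _), dd_const_mul (dd_smooth hm _), dd_comm hm (0, 1) ((1, 0), 0)]
    ring
  have hw : Integrable (fun _ : sphere (0:E3) 1 => (1:ℝ)) sphereMeasure := sphere_integrable continuous_const
  have hpar : ∀ {Φ : ((ℝ × E3) × ℝ) × E3 → ℝ}, ContDiff ℝ (⊤ : ℕ∞) Φ → ∀ h,
      dd h (fun p => ∫ σ : sphere (0:E3) 1, Φ (p, σ) ∂sphereMeasure) =
      fun p => ∫ σ : sphere (0:E3) 1, dd (h, 0) Φ (p, σ) ∂sphereMeasure := by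
    intro Φ hΦ h
    have := dd_param hΦ hw sph_meas (isCompact_sphere 0 1) (.of_forall coe_sph_mem) h
    simpa using this
  have hΦ := light_aux' hS
  set Φ := fun q : ((ℝ × E3) × ℝ) × E3 => q.1.2 * S (q.1.1 + q.1.2 • ((1:ℝ), q.2)) with hΦdef
  have hmΦ : lightMean S = fun p => ∫ σ : sphere (0:E3) 1, Φ (p, σ) ∂sphereMeasure := rfl
  rw [hmΦ]
  have hint : ∀ h : (ℝ × E3) × ℝ, Integrable (fun σ : sphere (0:E3) 1 => dd (h, 0) (dd (h, 0) Φ) ((z, ρ), (σ:E3))) sphereMeasure :=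
    fun h => sphere_integrable ((dd_smooth (dd_smooth hΦ _) _).continuous.comp (by fun_prop))
  rw [hpar hΦ, hpar (dd_smooth hΦ _), ← sub_eq_zero]
  have e2 : ∀ i : Fin 3, dd ((0, ee i), 0) (dd ((0, ee i), 0) (fun p => ∫ σ : sphere (0:E3) 1, Φ (p, σ) ∂sphereMeasure)) (z, ρ)
      = ∫ σ : sphere (0:E3) 1, dd ((((0:ℝ), ee i), (0:ℝ)), (0:E3)) (dd ((((0:ℝ), ee i), (0:ℝ)), (0:E3)) Φ) ((z, ρ), (σ:E3)) ∂sphereMeasure := by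
    intro i
    rw [hpar hΦ, hpar (dd_smooth hΦ _)]
  simp only [e2]
  rw [← integral_finsetSum _ (fun i _ => hint _), ← integral_sub (hint _) (integrable_finsetSum _ fun i _ => hint _)]
  -- the second derivatives of the integrand in terms of those of `S`
  have hdd : ∀ (h : (ℝ × E3) × ℝ) (y : E3), dd (h, 0) (dd (h, 0) Φ) ((z, ρ), y) =
      2 * h.2 * dd (h.1 + h.2 • ((1:ℝ), y)) S (z + ρ • ((1:ℝ), y)) +
      ρ * dd (h.1 + h.2 • ((1:ℝ), y)) (dd (h.1 + h.2 • ((1:ℝ), y)) S) (z + ρ • ((1:ℝ), y)) := by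
    intro h y
    set L : (ℝ × E3) × ℝ →L[ℝ] ℝ × E3 := ContinuousLinearMap.fst ℝ (ℝ × E3) ℝ +
      (ContinuousLinearMap.snd ℝ (ℝ × E3) ℝ).smulRight ((1:ℝ), y) with hL
    have e3 : ∀ {G : ℝ × E3 → ℝ}, ContDiff ℝ (⊤ : ℕ∞) G → dd h (fun p => G (L p + 0)) = fun p => dd (L h) G (L p + 0) :=
      fun hG => dd_comp hG L 0 h
    have hf : (fun p => Φ (p, y)) = fun p => p.2 * S (L p + 0) := by
      funext p; simp [hΦdef, hL]
    have hd : dd h (fun p : (ℝ × E3) × ℝ => p.2) = fun _ => h.2 := by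
      funext p; unfold dd; rw [fderiv_snd]; rfl
    have hLs : ∀ {G : ℝ × E3 → ℝ}, ContDiff ℝ (⊤ : ℕ∞) G → ContDiff ℝ (⊤ : ℕ∞) (fun p => G (L p + 0)) :=
      fun hG => hG.comp (L.contDiff.add contDiff_const)
    have h4 : dd (h, 0) (dd (h, 0) Φ) ((z, ρ), y) = dd h (dd h (fun p => Φ (p, y))) (z, ρ) := by
      rw [dd_slice hΦ, dd_slice (dd_smooth hΦ _)]
    rw [h4, hf, dd_mul contDiff_snd (hLs hS), e3 hS, hd, dd_add (contDiff_snd.mul (hLs (dd_smooth hS _)))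
      ((hLs hS).mul contDiff_const), dd_mul contDiff_snd (hLs (dd_smooth hS _)), e3 (dd_smooth hS _), hd]
    have h5 : (fun p => S (L p + 0) * h.2) = fun p => h.2 * S (L p + 0) := by funext p; ring
    rw [h5, dd_const_mul (hLs hS), e3 hS]
    have hLh : L h = h.1 + h.2 • ((1:ℝ), y) := by simp [hL]
    have hLz : L (z, ρ) + 0 = z + ρ • ((1:ℝ), y) := by simp [hL]
    simp only [hLh, hLz]
    ring
  have hsph := integral_sphLap (fun y => S (z + ρ • ((1:ℝ), y))) ((hS.comp (by fun_prop)).of_le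
    (WithTop.coe_le_coe.2 (le_top : (2:ℕ∞) ≤ ⊤)))
  have hfs : ContDiff ℝ (⊤ : ℕ∞) (fun y : E3 => S (z + ρ • ((1:ℝ), y))) := hS.comp (by fun_prop)
  have hcomp : ∀ {G : ℝ × E3 → ℝ}, ContDiff ℝ (⊤ : ℕ∞) G → ∀ v : E3, dd v (fun y => G (z + ρ • ((1:ℝ), y))) =
      fun y => ρ * dd (0, v) G (z + ρ • ((1:ℝ), y)) := by
    intro G hG v
    have := dd_comp hG (ρ • ContinuousLinearMap.inr ℝ ℝ E3) (z + ρ • ((1:ℝ), 0)) v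
    have e5 : ∀ y : E3, (ρ • ContinuousLinearMap.inr ℝ ℝ E3) y + (z + ρ • ((1:ℝ), 0)) = z + ρ • ((1:ℝ), y) := by
      intro y
      ext <;> simp
      ring
    simp only [e5] at this
    rw [this]
    funext y
    rw [show (ρ • ContinuousLinearMap.inr ℝ ℝ E3) v = ρ • ((0:ℝ), v) by simp, dd_smul_dir]
  have h6 : ∀ v y : E3, fderiv ℝ (fderiv ℝ (fun y => S (z + ρ • ((1:ℝ), y)))) y v v =
      ρ ^ 2 * dd (0, v) (dd (0, v) S) (z + ρ • ((1:ℝ), y)) := by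
    intro v y
    rw [← dd_dd hfs, hcomp hS, dd_const_mul (G := fun y => dd (0, v) S (z + ρ • ((1:ℝ), y)))
      ((dd_smooth hS _).comp (by fun_prop)), hcomp (dd_smooth hS _)]
    ring
  have h7 : ∀ v y : E3, fderiv ℝ (fun y => S (z + ρ • ((1:ℝ), y))) y v = ρ * dd (0, v) S (z + ρ • ((1:ℝ), y)) :=
    fun v y => congrFun (hcomp hS v) y
  simp only [h6, h7] at hsph
  simp only [hdd]
  have h8 : ∀ y : E3, D.1 + D.2 • ((1:ℝ), y) = (-1 : ℝ) • ((0:ℝ), y) := by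
    intro y; simp [hD]
  have h9 : ∀ i, (0, ee i) + (0:ℝ) • ((1:ℝ), (0:E3)) = ((0:ℝ), ee i) := by intro i; simp
  have h10 : ∀ v w, dd ((-1 : ℝ) • v) (dd ((-1:ℝ) • v) S) w = dd v (dd v S) w := by
    intro v w
    rw [dd_smul_dir, show dd ((-1:ℝ) • v) S = fun w => (-1) * dd v S w from funext fun w => dd_smul_dir _ _ _,
      dd_const_mul (dd_smooth hS _)]
    ring
  simp only [h8, h10, dd_smul_dir, mul_zero, zero_mul, zero_smul, add_zero, zero_add]
  rw [← mul_right_inj' (neg_ne_zero.2 hρ), mul_zero, ← integral_const_mul]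
  refine Eq.trans ?_ hsph
  congr 1
  funext σ
  simp only [← Finset.mul_sum, hD]
  ring

/-- If the light-cone means of `S` are asymptotic to a plane wave superposition `p`, the advanced
potential, with `p` subtracted at large distances, is smooth and solves the wave equation. -/
lemma potential {p : ℝ × E3 → ℝ} (hp : ContDiff ℝ (⊤ : ℕ∞) p) (hpb : ∀ z, box p z = 0)
    {m : (ℝ × E3) × ℝ → ℝ} (hm : ContDiff ℝ (⊤ : ℕ∞) m)
    (h : ∀ z ε, 0 < ε → lightMean S (z, 1 / ε) = ε * p z + ε ^ 2 * m (z, ε)) (z : ℝ × E3) :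
    box (fun z => (∫ ρ in (0:ℝ)..1, lightMean S (z, ρ)) + ∫ ε in (0:ℝ)..1, m (z, ε)) z = 4 * π * S z := by
  have hl := lightMean_smooth hS
  rw [box_add (smooth_integral01 hl) (smooth_integral01 hm), box_integral01 hl, box_integral01 hm]
  set b : (ℝ × E3) × ℝ → ℝ := fun p => 2 * dd ((1, 0), 0) (lightMean S) p - dd (0, 1) (lightMean S) p with hb
  have hbs : ContDiff ℝ (⊤ : ℕ∞) b := (contDiff_const.mul (dd_smooth hl _)).sub (dd_smooth hl _)
  have hbd : ∀ ρ, HasDerivAt (fun ρ => b (z, ρ)) (dd (0, 1) b (z, ρ)) ρ := fun ρ =>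
    dd_hasDerivAt hbs ((hasDerivAt_const ρ z).prodMk (hasDerivAt_id ρ))
  have hbc : Continuous fun ρ : ℝ => dd (0, 1) b (z, ρ) := (dd_smooth hbs _).continuous.comp (by fun_prop)
  have h1 : ∫ ρ in (0:ℝ)..1, box (fun z => lightMean S (z, ρ)) z = b (z, 1) - b (z, 0) := by
    rw [← intervalIntegral.integral_eq_sub_of_hasDerivAt (fun ρ _ => hbd ρ) (hbc.intervalIntegrable _ _)]
    refine intervalIntegral.integral_congr_ae (.of_forall fun ρ hρ => ?_)
    rw [uIoc_of_le zero_le_one] at hρ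
    exact darboux hS z hρ.1.ne'
  -- `b` in the variable `ε = 1 / ρ` extends smoothly to `ε = 0`
  set c : ℝ → ℝ := fun ε => 2 * (ε * dd (1, 0) p z + ε ^ 2 * dd ((1, 0), 0) m (z, ε)) +
    ε ^ 2 * (p z + 2 * ε * m (z, ε) + ε ^ 2 * dd (0, 1) m (z, ε)) with hc
  have hmd : ∀ ε, HasDerivAt (fun ε => m (z, ε)) (dd (0, 1) m (z, ε)) ε := fun ρ =>
    dd_hasDerivAt hm ((hasDerivAt_const ρ z).prodMk (hasDerivAt_id ρ))
  have hcb : ∀ ε, 0 < ε → c ε = b (z, 1 / ε) := by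
    intro ε hε
    have e1 : dd ((1, 0), 0) (lightMean S) (z, 1 / ε) = ε * dd (1, 0) p z + ε ^ 2 * dd ((1, 0), 0) m (z, ε) := by
      have : (fun z => lightMean S (z, 1 / ε)) = fun z => ε * p z + ε ^ 2 * m (z, ε) := funext fun z => h z ε hε
      rw [← congrFun (dd_slice hl (1, 0) (1 / ε)) z, this, dd_add (contDiff_const.mul hp)
        (contDiff_const.mul (smooth_slice hm ε)), dd_const_mul hp, dd_const_mul (smooth_slice hm ε), dd_slice hm]
    have e2 : HasDerivAt (fun ε => lightMean S (z, 1 / ε)) (dd (0, 1) (lightMean S) (z, 1 / ε) * (-(1 / ε ^ 2))) ε := by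
      have hi : HasDerivAt (fun ε : ℝ => 1 / ε) (-(1 / ε ^ 2)) ε := by
        simpa [neg_div] using hasDerivAt_inv hε.ne'
      have := dd_hasDerivAt hl ((hasDerivAt_const ε z).prodMk hi)
      rwa [show ((0 : ℝ × E3), -(1 / ε ^ 2)) = (-(1 / ε ^ 2)) • ((0 : ℝ × E3), (1:ℝ)) by simp, dd_smul_dir,
        mul_comm] at this
    have e3 : HasDerivAt (fun ε => lightMean S (z, 1 / ε)) (p z + 2 * ε * m (z, ε) + ε ^ 2 * dd (0, 1) m (z, ε)) ε := by
      have h5 := ((hasDerivAt_id ε).mul_const (p z)).add ((hasDerivAt_pow 2 ε).mul (hmd ε))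
      refine (h5.congr_deriv (by simp; ring)).congr_of_eventuallyEq ?_
      filter_upwards [lt_mem_nhds hε] with ε' hε'
      rw [h z ε' hε']; rfl
    have e4 := e2.unique e3
    simp only [hc, hb, e1, ← e4]
    field_simp
    ring
  have hcs : ContDiff ℝ (⊤ : ℕ∞) c := by
    have a1 : ContDiff ℝ (⊤ : ℕ∞) (fun ε : ℝ => (z, ε)) := by fun_prop
    have a2 := (dd_smooth hm ((1, 0), 0)).comp a1
    have a3 := (dd_smooth hm (0, 1)).comp a1
    have a4 := hm.comp a1
    exact (contDiff_const.mul ((contDiff_id.mul contDiff_const).add ((contDiff_id.pow 2).mul a2))).add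
      ((contDiff_id.pow 2).mul ((contDiff_const.add ((contDiff_const.mul contDiff_id).mul a4)).add
        ((contDiff_id.pow 2).mul a3)))
  have h2 : ∫ ε in (0:ℝ)..1, box (fun z => m (z, ε)) z = -(c 1 - c 0) := by
    have hcd : ∀ ε, HasDerivAt c (deriv c ε) ε := fun ε => (smooth_diff hcs ε).hasDerivAt
    rw [← intervalIntegral.integral_eq_sub_of_hasDerivAt (fun ε _ => hcd ε)
      ((hcs.continuous_deriv (by exact_mod_cast le_top)).intervalIntegrable _ _), ← intervalIntegral.integral_neg]
    refine intervalIntegral.integral_congr_ae (.of_forall fun ε hε => ?_)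
    rw [uIoc_of_le zero_le_one] at hε
    have hε0 := hε.1
    have e1 : box (fun z => lightMean S (z, 1 / ε)) z = ε ^ 2 * box (fun z => m (z, ε)) z := by
      rw [show (fun z => lightMean S (z, 1 / ε)) = fun z => ε * p z + ε ^ 2 * m (z, ε) from funext fun z => h z ε hε0,
        box_add (contDiff_const.mul hp) (contDiff_const.mul (smooth_slice hm ε)), box_const_mul hp,
        box_const_mul (smooth_slice hm ε), hpb]
      ring
    rw [darboux hS z (by positivity)] at e1
    have hi : HasDerivAt (fun ε : ℝ => 1 / ε) (-(1 / ε ^ 2)) ε := by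
      simpa [neg_div] using hasDerivAt_inv hε0.ne'
    have e2 : HasDerivAt c (dd (0, 1) b (z, 1 / ε) * (-(1 / ε ^ 2))) ε := by
      refine ((hbd (1 / ε)).comp ε hi).congr_of_eventuallyEq ?_
      filter_upwards [lt_mem_nhds hε0] with ε' hε'
      exact hcb ε' hε'
    rw [e2.deriv, e1]
    field_simp
  have h3 : b (z, 0) = -(4 * π * S z) := lightMean_zero hS z
  have h4 := hcb 1 one_pos
  have h5 : c 0 = 0 := by simp [hc]
  rw [h1, h2, h3, h4, h5]
  simp

end Light

/-! ### The source term and its advanced potential -/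

lemma jb_pos (q : ℝ) : 0 < jb q := Real.sqrt_pos.2 (by positivity)

lemma one_le_jb (q : ℝ) : 1 ≤ jb q := Real.one_le_sqrt.2 (by nlinarith [sq_nonneg q])

lemma jb_sq (q : ℝ) : jb q ^ 2 = 1 + q ^ 2 := Real.sq_sqrt (by positivity)

lemma abs_le_jb (q : ℝ) : |q| ≤ jb q := by
  rw [← Real.sqrt_sq_eq_abs]; exact Real.sqrt_le_sqrt (by linarith)

lemma jb_neg (q : ℝ) : jb (-q) = jb q := by simp [jb]

lemma jb_smooth : ContDiff ℝ (⊤ : ℕ∞) jb :=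
  ContDiff.sqrt (by fun_prop) fun q => by positivity

/-- A smooth radial function vanishing near the origin and equal to `1` on the unit sphere. -/
def eta (y : E3) : ℝ := Real.smoothTransition (4 * ‖y‖ ^ 2 - 1)

lemma eta_smooth : ContDiff ℝ (⊤ : ℕ∞) eta :=
  Real.smoothTransition.contDiff.comp ((contDiff_const.mul (contDiff_norm_sq ℝ)).sub contDiff_const)

lemma eta_sph (σ : sphere (0 : E3) 1) : eta σ = 1 :=
  Real.smoothTransition.one_of_one_le (by rw [norm_sph]; norm_num)

lemma eta_zero {y : E3} (h : ‖y‖ ≤ 1/2) : eta y = 0 :=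
  Real.smoothTransition.zero_of_nonpos (by nlinarith [norm_nonneg y])

/-- A function on `ℝ × S²`, cut off near the origin of the angular variable: a globally smooth
function with the same values on `ℝ × S²`. -/
def extQ (f : ℝ → E3 → ℝ) (p : ℝ × E3) : ℝ := eta p.2 * f p.1 p.2

lemma extQ_sph (f : ℝ → E3 → ℝ) (q : ℝ) (σ : sphere (0 : E3) 1) : extQ f (q, σ) = f q σ := by
  simp [extQ, eta_sph]

lemma smoothQ_at {f : ℝ → E3 → ℝ} (hf : SmoothQSphere f) {p : ℝ × E3} (hp : p.2 ≠ 0) :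
    ContDiffAt ℝ (⊤ : ℕ∞) (fun p : ℝ × E3 => f p.1 p.2) p :=
  hf.2.contDiffAt ((isOpen_ne.preimage continuous_snd).mem_nhds hp)

lemma extQ_smooth {f : ℝ → E3 → ℝ} (hf : SmoothQSphere f) : ContDiff ℝ (⊤ : ℕ∞) (extQ f) := by
  rw [contDiff_iff_contDiffAt]
  intro p
  by_cases hp : p.2 = 0
  · have : extQ f =ᶠ[𝓝 p] fun _ => 0 := by
      have h1 : ∀ᶠ q : ℝ × E3 in 𝓝 p, ‖q.2‖ < 1/2 :=
        (continuous_snd.norm.continuousAt (x := p)).eventually_lt continuousAt_const (by simp [hp])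
      filter_upwards [h1] with q hq
      simp [extQ, eta_zero hq.le]
    exact contDiffAt_const.congr_of_eventuallyEq this
  · exact ((eta_smooth.comp contDiff_snd).contDiffAt).mul (smoothQ_at hf hp)

/-- The even version of the cutoff `χ`; it agrees with `χ` on the positive axis. -/
def cut2 (χ : ℝ → ℝ) (s : ℝ) : ℝ := χ s * χ (-s)

section Cut
variable {χ : ℝ → ℝ} (hχ : IsCutChi χ)
include hχ

lemma cut2_smooth : ContDiff ℝ (⊤ : ℕ∞) (cut2 χ) := hχ.1.mul (hχ.1.comp contDiff_neg)

lemma cut2_eq {s : ℝ} (hs : 0 ≤ s) : cut2 χ s = χ s := by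
  rw [cut2, hχ.2.2.1 (-s) (by linarith), mul_one]

lemma cut2_zero {s : ℝ} (hs : 1/2 ≤ |s|) : cut2 χ s = 0 := by
  rcases le_abs.1 hs with h | h
  · rw [cut2, hχ.2.2.2 s h, zero_mul]
  · rw [cut2, hχ.2.2.2 (-s) h, mul_zero]

lemma cut2_one {s : ℝ} (hs : |s| ≤ 1/4) : cut2 χ s = 1 := by
  rw [abs_le] at hs
  rw [cut2, hχ.2.2.1 s hs.2, hχ.2.2.1 (-s) (by linarith), mul_one]

lemma abs_cut2_le (s : ℝ) : |cut2 χ s| ≤ 1 := by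
  have h1 := hχ.2.1 s
  have h2 := hχ.2.1 (-s)
  rw [cut2, abs_mul, abs_of_nonneg h1.1, abs_of_nonneg h2.1]
  nlinarith [h1.1, h1.2, h2.1, h2.2]

end Cut

/-- The source in rescaled variables: `q` is the value of `r - t`, `y` is the position in units of
`1 / ε`. -/
def core (χ : ℝ → ℝ) (n : ℝ → E3 → ℝ) (p : ℝ × E3 × ℝ) : ℝ :=
  cut2 χ (jb p.1 * p.2.2 / ‖p.2.1‖) * n p.1 p.2.1 / ‖p.2.1‖ ^ 2

/-- The source term. -/
def src (χ : ℝ → ℝ) (n : ℝ → E3 → ℝ) (z : ℝ × E3) : ℝ := core χ n (‖z.2‖ - z.1, z.2, 1)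

/-- The value of `|x + ρ σ| - (t + ρ)`, where `ρ = 1 / ε`, written so as to be smooth at `ε = 0`. -/
def phase (z : ℝ × E3) (ε : ℝ) (s : E3) : ℝ :=
  (2 * ⟪s, z.2⟫ + ε * ‖z.2‖ ^ 2) / (‖s + ε • z.2‖ + 1) - z.1

/-- `ε⁻²` times the source at the point at distance `1 / ε` from `z` in the direction `s`. -/
def srcW (χ : ℝ → ℝ) (n : ℝ → E3 → ℝ) (p : ((ℝ × E3) × ℝ) × E3) : ℝ :=
  eta p.2 * core χ n (phase p.1.1 p.1.2 p.2, p.2 + p.1.2 • p.1.1.2, p.1.2)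

section Source
variable {χ : ℝ → ℝ} (hχ : IsCutChi χ) {n : ℝ → E3 → ℝ} (hn : SmoothQSphere n)

include hχ in
/-- As `⟨q⟩ ≥ 1`, the cutoff vanishes near `y = 0` for `ε ≠ 0`, where the other factors are singular. -/
lemma core_zero {q ε : ℝ} {y : E3} (h : ‖y‖ < 2 * |ε|) : core χ n (q, y, ε) = 0 := by
  rcases eq_or_ne y 0 with rfl | hy
  · simp [core]
  · have hy' : 0 < ‖y‖ := norm_pos_iff.2 hy
    have : cut2 χ (jb q * ε / ‖y‖) = 0 := by
      apply cut2_zero hχ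
      rw [abs_div, abs_mul, abs_of_pos (jb_pos q), abs_of_pos hy', le_div_iff₀ hy']
      nlinarith [one_le_jb q, abs_nonneg ε]
    simp [core, this]

include hχ hn in
lemma core_contDiffAt {p : ℝ × E3 × ℝ} (hp : p.2.1 ≠ 0) : ContDiffAt ℝ (⊤ : ℕ∞) (core χ n) p := by
  have h1 : ContDiffAt ℝ (⊤ : ℕ∞) (fun p : ℝ × E3 × ℝ => ‖p.2.1‖) p :=
    (contDiff_fst.comp contDiff_snd).contDiffAt.norm ℝ hp
  have hne : ‖p.2.1‖ ≠ 0 := norm_ne_zero_iff.2 hp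
  have h2 : ContDiffAt ℝ (⊤ : ℕ∞) (fun p : ℝ × E3 × ℝ => n p.1 p.2.1) p :=
    ContDiffAt.comp (f := fun p : ℝ × E3 × ℝ => (p.1, p.2.1)) (g := fun p : ℝ × E3 => n p.1 p.2) p
      (smoothQ_at hn hp) (by fun_prop)
  have h3 : ContDiffAt ℝ (⊤ : ℕ∞) (fun p : ℝ × E3 × ℝ => jb p.1 * p.2.2 / ‖p.2.1‖) p :=
    (((jb_smooth.comp contDiff_fst).contDiffAt).mul (by fun_prop)).div h1 hne
  exact ((((cut2_smooth hχ).contDiffAt).comp p h3).mul h2).div (h1.pow 2) (pow_ne_zero 2 hne)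

include hχ hn in
lemma src_smooth : ContDiff ℝ (⊤ : ℕ∞) (src χ n) := by
  rw [contDiff_iff_contDiffAt]
  intro z
  by_cases hz : z.2 = 0
  · have : src χ n =ᶠ[𝓝 z] fun _ => 0 := by
      have h1 : ∀ᶠ q : ℝ × E3 in 𝓝 z, ‖q.2‖ < 2 * |1| :=
        (continuous_snd.norm.continuousAt (x := z)).eventually_lt continuousAt_const (by simp [hz])
      filter_upwards [h1] with q hq
      exact core_zero hχ hq
    exact contDiffAt_const.congr_of_eventuallyEq this
  · have h1 : ContDiffAt ℝ (⊤ : ℕ∞) (fun z : ℝ × E3 => (‖z.2‖ - z.1, z.2, (1:ℝ))) z :=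
      ((contDiffAt_snd.norm ℝ hz).sub contDiffAt_fst).prodMk (contDiffAt_snd.prodMk contDiffAt_const)
    exact ContDiffAt.comp (g := core χ n) (f := fun z : ℝ × E3 => (‖z.2‖ - z.1, z.2, (1:ℝ))) z
      (core_contDiffAt hχ hn hz) h1

include hχ hn in
lemma srcW_smooth : ContDiff ℝ (⊤ : ℕ∞) (srcW χ n) := by
  rw [contDiff_iff_contDiffAt]
  intro p
  have hcy : Continuous fun p : ((ℝ × E3) × ℝ) × E3 => p.2 + p.1.2 • p.1.1.2 := by fun_prop
  by_cases hs : p.2 = 0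
  · have : srcW χ n =ᶠ[𝓝 p] fun _ => 0 := by
      have h1 : ∀ᶠ q : ((ℝ × E3) × ℝ) × E3 in 𝓝 p, ‖q.2‖ < 1/2 :=
        (continuous_snd.norm.continuousAt (x := p)).eventually_lt continuousAt_const (by simp [hs])
      filter_upwards [h1] with q hq
      simp [srcW, eta_zero hq.le]
    exact contDiffAt_const.congr_of_eventuallyEq this
  by_cases hy : p.2 + p.1.2 • p.1.1.2 = 0
  · have hε : p.1.2 ≠ 0 := by
      intro h0
      rw [h0, zero_smul, add_zero] at hy
      exact hs hy
    have : srcW χ n =ᶠ[𝓝 p] fun _ => 0 := by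
      have h1 : ∀ᶠ q : ((ℝ × E3) × ℝ) × E3 in 𝓝 p, ‖q.2 + q.1.2 • q.1.1.2‖ < 2 * |q.1.2| := by
        apply ContinuousAt.eventually_lt hcy.norm.continuousAt (by fun_prop)
        rw [hy, norm_zero]
        have := abs_pos.2 hε
        positivity
      filter_upwards [h1] with q hq
      rw [srcW, core_zero hχ hq, mul_zero]
    exact contDiffAt_const.congr_of_eventuallyEq this
  · have hy1 : ContDiffAt ℝ (⊤ : ℕ∞) (fun p : ((ℝ × E3) × ℝ) × E3 => p.2 + p.1.2 • p.1.1.2) p := by fun_prop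
    have hph : ContDiffAt ℝ (⊤ : ℕ∞) (fun p : ((ℝ × E3) × ℝ) × E3 => phase p.1.1 p.1.2 p.2) p := by
      refine ContDiffAt.sub (ContDiffAt.div ?_ ((hy1.norm ℝ hy).add contDiffAt_const) ?_) (by fun_prop)
      · exact (contDiffAt_const.mul (contDiffAt_snd.inner ℝ (by fun_prop))).add
          (ContDiffAt.mul (by fun_prop) (ContDiffAt.norm_sq ℝ (by fun_prop)))
      · positivity
    refine (eta_smooth.comp contDiff_snd).contDiffAt.mul ?_
    exact ContDiffAt.comp (g := core χ n) (f := fun p : ((ℝ × E3) × ℝ) × E3 =>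
      (phase p.1.1 p.1.2 p.2, p.2 + p.1.2 • p.1.1.2, p.1.2)) p
      (core_contDiffAt hχ hn hy) (hph.prodMk (hy1.prodMk (by fun_prop)))

lemma phase_eq (z : ℝ × E3) {ρ : ℝ} (hρ : 0 < ρ) (σ : sphere (0 : E3) 1) :
    ‖z.2 + ρ • (σ:E3)‖ - (z.1 + ρ) = phase z (1 / ρ) σ := by
  have h1 : z.2 + ρ • (σ:E3) = ρ • ((σ:E3) + (1 / ρ) • z.2) := by
    rw [smul_add, smul_smul, mul_one_div_cancel hρ.ne', one_smul, add_comm]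
  have h2 : ‖z.2 + ρ • (σ:E3)‖ = ρ * ‖(σ:E3) + (1 / ρ) • z.2‖ := by
    rw [h1, norm_smul, Real.norm_of_nonneg hρ.le]
  have h3 : ‖(σ:E3) + (1 / ρ) • z.2‖ ^ 2 = 1 + 2 * ((1 / ρ) * ⟪(σ:E3), z.2⟫) + (1 / ρ) ^ 2 * ‖z.2‖ ^ 2 := by
    rw [norm_add_sq_real, norm_sph, real_inner_smul_right, norm_smul, Real.norm_of_nonneg (by positivity)]
    ring
  unfold phase
  rw [h2]
  set a := ‖(σ:E3) + (1 / ρ) • z.2‖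
  have ha : 0 < a + 1 := by positivity
  have h4 : 2 * ⟪(σ:E3), z.2⟫ + 1 / ρ * ‖z.2‖ ^ 2 = ρ * (a ^ 2 - 1) := by
    rw [h3]; field_simp; ring
  rw [h4]
  field_simp
  ring

include hn in
/-- The source on the forward light cone in the variable `ε = 1 / ρ`, by homogeneity of `n` in the
angular variable. -/
lemma src_eq_srcW (z : ℝ × E3) {ρ : ℝ} (hρ : 0 < ρ) (σ : sphere (0 : E3) 1) :
    src χ n (z + ρ • ((1:ℝ), (σ:E3))) = (1 / ρ) ^ 2 * srcW χ n ((z, 1 / ρ), σ) := by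
  have h1 : z.2 + ρ • (σ:E3) = ρ • ((σ:E3) + (1 / ρ) • z.2) := by
    rw [smul_add, smul_smul, mul_one_div_cancel hρ.ne', one_smul, add_comm]
  have h2 : ‖z.2 + ρ • (σ:E3)‖ = ρ * ‖(σ:E3) + (1 / ρ) • z.2‖ := by
    rw [h1, norm_smul, Real.norm_of_nonneg hρ.le]
  have h3 : n (phase z (1 / ρ) σ) (z.2 + ρ • (σ:E3)) = n (phase z (1 / ρ) σ) ((σ:E3) + (1 / ρ) • z.2) := by
    rw [h1]; exact hn.1 _ ρ hρ _
  have h4 : src χ n (z + ρ • ((1:ℝ), (σ:E3))) = core χ n (phase z (1 / ρ) σ, z.2 + ρ • (σ:E3), 1) := by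
    simp only [src, Prod.snd_add, Prod.smul_snd, Prod.fst_add, Prod.smul_fst, smul_eq_mul, mul_one]
    rw [phase_eq z hρ σ]
  rw [h4]
  simp only [srcW, eta_sph, core, one_mul, h3, h2]
  rw [show jb (phase z (1 / ρ) ↑σ) * 1 / (ρ * ‖(σ:E3) + (1 / ρ) • z.2‖) =
    jb (phase z (1 / ρ) ↑σ) * (1 / ρ) / ‖(σ:E3) + (1 / ρ) • z.2‖ by field_simp]
  ring

/-- The superposition of plane waves asymptotic to `ρ` times the light-cone means of the source. -/
def srcP (n : ℝ → E3 → ℝ) : ℝ × E3 → ℝ := planeWave (fun _ => 1) (extQ n)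

lemma srcP_eq (z : ℝ × E3) : srcP n z = ∫ σ : sphere (0 : E3) 1, n (⟪z.2, (σ:E3)⟫ - z.1) σ ∂sphereMeasure := by
  simp [srcP, planeWave, extQ_sph]

include hχ hn in
/-- The advanced potential of the source. -/
lemma exists_adv : ∃ A : ℝ × E3 → ℝ, ContDiff ℝ (⊤ : ℕ∞) A ∧ (∀ z, box A z = src χ n z) ∧
    ∀ z R, 1 ≤ R →
      IntegrableOn (fun ρ => lightMean (src χ n) (z, ρ) - srcP n z / ρ) (Ioi R) ∧
      4 * π * A z = (∫ ρ in (0:ℝ)..R, lightMean (src χ n) (z, ρ)) - Real.log R * srcP n z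
        + ∫ ρ in Ioi R, (lightMean (src χ n) (z, ρ) - srcP n z / ρ) := by
  have hS := src_smooth hχ hn
  have hl := lightMean_smooth hS
  have hW := srcW_smooth hχ hn
  have hP : ContDiff ℝ (⊤ : ℕ∞) (srcP n) := planeWave_smooth continuous_const (extQ_smooth hn)
  set mW : (ℝ × E3) × ℝ → ℝ := fun p => ∫ σ : sphere (0 : E3) 1, srcW χ n (p, σ) ∂sphereMeasure with hmW
  have hmWs : ContDiff ℝ (⊤ : ℕ∞) mW := by
    have := param_contDiff hW (sphere_integrable continuous_const : Integrable (fun _ => (1:ℝ)) sphereMeasure)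
      sph_meas (isCompact_sphere 0 1) (.of_forall coe_sph_mem)
    simp only [one_smul] at this
    exact this
  obtain ⟨m, hm, hmm⟩ := hadamard hmWs
  have hm0 : ∀ z, mW (z, 0) = srcP n z := by
    intro z
    rw [srcP_eq]
    simp only [hmW, srcW, eta_sph, core, phase, zero_smul, add_zero, mul_zero, zero_mul, zero_div, norm_sph]
    congr 1
    funext σ
    rw [cut2_one hχ (by norm_num), real_inner_comm]
    norm_num
  have hlW : ∀ z ε, 0 < ε → lightMean (src χ n) (z, 1 / ε) = ε * srcP n z + ε ^ 2 * m (z, ε) := by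
    intro z ε hε
    have : lightMean (src χ n) (z, 1 / ε) = ε * mW (z, ε) := by
      simp only [lightMean, hmW, ← integral_const_mul]
      congr 1
      funext σ
      rw [src_eq_srcW hn z (by positivity) σ, one_div_one_div]
      field_simp
    rw [this, hmm z ε, hm0]
    ring
  have hpot := potential hS hP (fun z => planeWave_box continuous_const (extQ_smooth hn) z) hm hlW
  set G : ℝ × E3 → ℝ := fun z => (∫ ρ in (0:ℝ)..1, lightMean (src χ n) (z, ρ)) + ∫ ε in (0:ℝ)..1, m (z, ε) with hG
  have hGs : ContDiff ℝ (⊤ : ℕ∞) G := (smooth_integral01 hl).add (smooth_integral01 hm)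
  refine ⟨fun z => 1 / (4 * π) * G z, contDiff_const.mul hGs, fun z => ?_, fun z R hR => ?_⟩
  · rw [box_const_mul hGs, hpot z]
    field_simp
  -- the substitution `ρ = 1 / ε`
  have himg : (fun ε : ℝ => ε⁻¹) '' Ioo 0 1 = Ioi 1 := by
    ext ρ
    constructor
    · rintro ⟨ε, hε, rfl⟩
      exact (one_lt_inv₀ hε.1).2 hε.2
    · intro hρ
      have h0 : (0:ℝ) < ρ := lt_trans one_pos hρ
      exact ⟨ρ⁻¹, ⟨by positivity, inv_lt_one_of_one_lt₀ hρ⟩, inv_inv ρ⟩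
  have hder : ∀ ε ∈ Ioo (0:ℝ) 1, HasDerivWithinAt (fun ε : ℝ => ε⁻¹) (-(ε ^ 2)⁻¹) (Ioo 0 1) ε :=
    fun ε hε => (hasDerivAt_inv hε.1.ne').hasDerivWithinAt
  have hinj : InjOn (fun ε : ℝ => ε⁻¹) (Ioo 0 1) := fun a _ b _ h => inv_injective h
  set g : ℝ → ℝ := fun ρ => lightMean (src χ n) (z, ρ) - srcP n z / ρ with hg
  have hgm : ∀ ε ∈ Ioo (0:ℝ) 1, |-(ε ^ 2)⁻¹| • g ε⁻¹ = m (z, ε) := by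
    intro ε hε
    have h0 := hε.1
    rw [abs_neg, abs_of_pos (by positivity)]
    simp only [hg]
    rw [← one_div ε, hlW z ε h0]
    simp only [smul_eq_mul]
    field_simp
    ring
  have hmc : Continuous fun ε : ℝ => m (z, ε) := hm.continuous.comp (by fun_prop)
  have hmi : IntegrableOn (fun ε : ℝ => m (z, ε)) (Ioo 0 1) :=
    (hmc.integrableOn_Icc (a := 0) (b := 1)).mono_set Ioo_subset_Icc_self
  have hgi1 : IntegrableOn g (Ioi 1) := by
    rw [← himg, integrableOn_image_iff_integrableOn_abs_deriv_smul measurableSet_Ioo hder hinj]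
    exact hmi.congr_fun (fun ε hε => (hgm ε hε).symm) measurableSet_Ioo
  have hgi : ∫ ρ in Ioi 1, g ρ = ∫ ε in (0:ℝ)..1, m (z, ε) := by
    rw [← himg, integral_image_eq_integral_abs_deriv_smul measurableSet_Ioo hder hinj,
      setIntegral_congr_fun measurableSet_Ioo hgm, intervalIntegral.integral_of_le zero_le_one,
      integral_Ioc_eq_integral_Ioo]
  refine ⟨hgi1.mono_set (Ioi_subset_Ioi hR), ?_⟩
  have hR0 : 0 < R := by linarith
  have hlc : Continuous fun ρ : ℝ => lightMean (src χ n) (z, ρ) := hl.continuous.comp (by fun_prop)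
  have hpi : IntervalIntegrable (fun ρ : ℝ => srcP n z / ρ) volume 1 R := by
    simp only [div_eq_mul_inv]
    refine (intervalIntegral.intervalIntegrable_inv (fun x hx => ?_) continuousOn_id).const_mul _
    rw [uIcc_of_le hR] at hx
    exact (lt_of_lt_of_le one_pos hx.1).ne'
  have hsplit : ∫ ρ in Ioi 1, g ρ = (∫ ρ in (1:ℝ)..R, g ρ) + ∫ ρ in Ioi R, g ρ :=
    (intervalIntegral.integral_interval_add_Ioi hgi1 (hgi1.mono_set (Ioi_subset_Ioi hR))).symm
  have h1R : ∫ ρ in (1:ℝ)..R, g ρ = (∫ ρ in (1:ℝ)..R, lightMean (src χ n) (z, ρ)) - Real.log R * srcP n z := by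
    simp only [hg]
    rw [intervalIntegral.integral_sub (hlc.intervalIntegrable _ _) hpi]
    simp only [div_eq_mul_inv]
    rw [intervalIntegral.integral_const_mul, integral_inv_of_pos one_pos hR0, div_one, mul_comm (Real.log R)]
  have hadd := intervalIntegral.integral_add_adjacent_intervals
    (hlc.intervalIntegrable (μ := volume) 0 1) (hlc.intervalIntegrable (μ := volume) 1 R)
  rw [show 4 * π * (1 / (4 * π) * G z) = G z by field_simp]
  simp only [hG]
  rw [← hgi, hsplit, h1R, ← hadd]
  ring

end Source

/-! ### Decay estimates -/

/-- Decay of order `m` of a function on `ℝ × S²`, with a common constant `C` for its size, its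
radial derivative and its angular Lipschitz constant. -/
structure Bd (m : ℕ) (C : ℝ) (f : ℝ → E3 → ℝ) : Prop where
  pos : 0 < C
  val : ∀ s y, y ≠ 0 → |f s y| ≤ C / jb s ^ m
  der : ∀ s y, y ≠ 0 → |deriv (fun s => f s y) s| ≤ C / jb s ^ (m + 1)
  lip : ∀ s y y', ‖y‖ = 1 → y' ≠ 0 → |f s y - f s y'| ≤ C / jb s ^ m * ‖y - y'‖

lemma homog_normalize {g : E3 → ℝ} (hg : HomogZero g) {y : E3} (hy : y ≠ 0) :
    g (‖y‖⁻¹ • y) = g y := hg _ (by positivity) y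

lemma norm_normalize {y : E3} (hy : y ≠ 0) : ‖‖y‖⁻¹ • y‖ = 1 := by
  rw [norm_smul, norm_inv, norm_norm, inv_mul_cancel₀ (norm_ne_zero_iff.2 hy)]

lemma norm_clm_le (L : E3 →L[ℝ] ℝ) {B : ℝ} (hB : ∀ i, |L (EuclideanSpace.single i 1)| ≤ B) :
    ‖L‖ ≤ 3 * B := by
  have hB0 : 0 ≤ B := (abs_nonneg _).trans (hB 0)
  refine L.opNorm_le_bound (by positivity) fun v => ?_
  have h := sum_ee v
  have h1 : L v = ∑ i, v i * L (EuclideanSpace.single i 1) := by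
    conv_lhs => rw [h]
    rw [map_sum]; simp [ee]
  rw [h1, Real.norm_eq_abs]
  refine (Finset.abs_sum_le_sum_abs _ _).trans ?_
  have : ∀ i ∈ Finset.univ, |v i * L (EuclideanSpace.single i 1)| ≤ ‖v‖ * B := by
    intro i _
    rw [abs_mul]
    exact mul_le_mul (by simpa using PiLp.norm_apply_le v i) (hB i) (abs_nonneg _) (norm_nonneg _)
  refine (Finset.sum_le_sum this).trans ?_
  simp; nlinarith

/-- The derivative of a function homogeneous of degree zero is homogeneous of degree `-1`. -/
lemma fderiv_homog {g : E3 → ℝ} (hg : HomogZero g)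
    (hs : ∀ y, y ≠ 0 → DifferentiableAt ℝ g y) {y : E3} (hy : y ≠ 0) :
    fderiv ℝ g y = ‖y‖⁻¹ • fderiv ℝ g (‖y‖⁻¹ • y) := by
  have h1 : g = fun x => g (‖y‖⁻¹ • x) := by ext x; exact (hg _ (by positivity) x).symm
  have hy' : ‖y‖⁻¹ • y ≠ 0 := by
    rw [← norm_ne_zero_iff, norm_normalize hy]; norm_num
  have h2 : HasFDerivAt (fun x => g (‖y‖⁻¹ • x))
      ((fderiv ℝ g (‖y‖⁻¹ • y)).comp (‖y‖⁻¹ • ContinuousLinearMap.id ℝ E3)) y :=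
    HasFDerivAt.comp y (f := fun x : E3 => ‖y‖⁻¹ • x) (hs _ hy').hasFDerivAt
      (‖y‖⁻¹ • ContinuousLinearMap.id ℝ E3).hasFDerivAt
  have h3 := h2.fderiv
  rw [← h1] at h3
  rw [h3]; ext v; simp

/-- The symbol bounds with at most one derivative. They are only available on the unit sphere and
extend to `ℝ³ ∖ {0}` by homogeneity. The Lipschitz bound uses the mean value inequality for nearby
points and the bound on the values otherwise. -/
lemma exists_bd {f : ℝ → E3 → ℝ} (hf : SmoothQSphere f) {κ : ℝ} (hd : SymbolDecay κ f) {m : ℕ}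
    (hm : (m : ℝ) ≤ κ) : ∃ C, Bd m C f := by
  have hpw : ∀ s, jb s ^ (-κ) ≤ 1 / jb s ^ m := by
    intro s
    rw [one_div, ← Real.rpow_natCast, ← Real.rpow_neg (jb_pos s).le]
    exact Real.rpow_le_rpow_of_exponent_le (one_le_jb s) (by linarith)
  have key : ∀ k α, ∃ C, 0 < C ∧ ∀ (q : ℝ) (ω : E3), ‖ω‖ = 1 →
      |qIter k (fun s => pdMulti α (f s) ω) q| ≤ C / jb q ^ m := by
    intro k α
    obtain ⟨C, hC⟩ := hd k α
    refine ⟨|C| + 1, by positivity, fun q ω hω => (hC q ω hω).trans ?_⟩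
    rw [div_eq_mul_one_div]
    exact mul_le_mul ((le_abs_self C).trans (by linarith)) (hpw q)
      (Real.rpow_nonneg (jb_pos q).le _) (by positivity)
  have hsm : ∀ s y, y ≠ 0 → DifferentiableAt ℝ (f s) y := by
    intro s y hy
    have h := (smoothQ_at hf (p := (s, y)) hy).differentiableAt (by simp)
    exact h.comp y (f := fun y : E3 => (s, y)) (by fun_prop)
  obtain ⟨C0, hC0, h0⟩ := key 0 []
  obtain ⟨C1, hC1, h1⟩ := key 1 []
  choose D hD hD' using fun i => key 0 [i]
  have hgrad : ∀ s w, ‖w‖ = 1 → ‖fderiv ℝ (f s) w‖ ≤ 3 * ((D 0 + D 1 + D 2) / jb s ^ m) := by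
    intro s w hw
    apply norm_clm_le
    intro i
    refine (hD' i s w hw).trans ?_
    have := hD 0; have := hD 1; have := hD 2
    have := jb_pos s
    gcongr
    fin_cases i <;> simp <;> linarith
  set S := D 0 + D 1 + D 2 with hS
  have hS0 : 0 < S := by have := hD 0; have := hD 1; have := hD 2; positivity
  have hval : ∀ s y, y ≠ 0 → |f s y| ≤ C0 / jb s ^ m := by
    intro s y hy
    have := h0 s _ (norm_normalize hy)
    simp only [qIter, pdMulti] at this
    rwa [homog_normalize (hf.1 s) hy] at this
  have hgrad2 : ∀ s z, 1/2 ≤ ‖z‖ → ‖fderiv ℝ (f s) z‖ ≤ 6 * (S / jb s ^ m) := by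
    intro s z hz
    have hz0 : z ≠ 0 := by rintro rfl; norm_num at hz
    rw [fderiv_homog (hf.1 s) (hsm s) hz0, norm_smul, norm_inv, norm_norm]
    have h2 : ‖z‖⁻¹ ≤ 2 := by rw [inv_le_comm₀ (by linarith) (by norm_num)]; linarith
    calc _ ≤ 2 * (3 * (S / jb s ^ m)) :=
          mul_le_mul h2 (hgrad s _ (norm_normalize hz0)) (norm_nonneg _) (by norm_num)
      _ = _ := by ring
  refine ⟨4 * C0 + C1 + 6 * S, by positivity, ?_, ?_, ?_⟩
  · intro s y hy
    have := jb_pos s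
    refine (hval s y hy).trans ?_
    gcongr; linarith
  · intro s y hy
    have hh := h1 s _ (norm_normalize hy)
    simp only [qIter, pdMulti] at hh
    have hfun : (fun s => f s (‖y‖⁻¹ • y)) = fun s => f s y := by
      ext s; exact homog_normalize (hf.1 s) hy
    rw [hfun, abs_mul, abs_of_pos (jb_pos s)] at hh
    have hj := jb_pos s
    rw [pow_succ, ← div_div, le_div_iff₀ hj, mul_comm]
    refine hh.trans ?_
    gcongr; linarith
  · intro s y y' hy hy'
    have hj := jb_pos s
    rcases le_or_gt ‖y - y'‖ (1/2) with h | h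
    · have hcv : Convex ℝ (closedBall y (1/2)) := convex_closedBall y _
      have hnb : ∀ z ∈ closedBall y (1/2), 1/2 ≤ ‖z‖ := by
        intro z hz
        rw [mem_closedBall, dist_eq_norm] at hz
        have := norm_sub_norm_le y z
        rw [norm_sub_rev] at hz
        linarith
      have := hcv.norm_image_sub_le_of_norm_fderiv_le (f := f s) (C := 6 * (S / jb s ^ m))
        (x := y') (y := y)
        (fun z hz => hsm s z (by rintro rfl; have := hnb 0 hz; norm_num at this))
        (fun z hz => hgrad2 s z (hnb z hz))
        (by rw [mem_closedBall, dist_eq_norm, norm_sub_rev]; exact h) (by simp)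
      rw [Real.norm_eq_abs] at this
      refine this.trans ?_
      gcongr
      rw [← mul_div_assoc]
      gcongr; linarith
    · have hy0 : y ≠ 0 := by rintro rfl; norm_num at hy
      have := (abs_sub (f s y) (f s y')).trans (add_le_add (hval s y hy0) (hval s y' hy'))
      refine this.trans ?_
      calc _ = 4 * C0 / jb s ^ m * (1/2) := by ring
        _ ≤ _ := by
          apply mul_le_mul _ h.le (by norm_num) (by positivity)
          gcongr; linarith

/-- Peetre's inequality. -/
lemma peetre (q b : ℝ) : 1 + |b| ≤ (2 + |q|) * jb (q - b) := by
  have h1 : |b| ≤ |q| + |q - b| := by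
    have := abs_sub q (q - b); simpa using this
  have h2 := abs_le_jb (q - b)
  have h3 := one_le_jb (q - b)
  nlinarith [abs_nonneg q, abs_nonneg (q - b)]

lemma jb_le_one_add_abs (q : ℝ) : jb q ≤ 1 + |q| := by
  rw [jb, Real.sqrt_le_left (by positivity)]
  nlinarith [abs_nonneg q, sq_abs q]

/-! ### The advanced potential along outgoing light rays -/

lemma rpow_neg_two {a : ℝ} (ha : 0 < a) : a ^ (-2 : ℝ) = 1 / a ^ 2 := by
  rw [Real.rpow_neg ha.le, one_div]; norm_cast

lemma one_div_jb_le {q d b : ℝ} (hb : 0 ≤ b) (h : b ≤ q - d) :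
    1 / jb d ≤ (2 + |q|) / (1 + b) := by
  rw [div_le_div_iff₀ (jb_pos d) (by linarith)]
  have := peetre q (q - d)
  rw [sub_sub_cancel] at this
  have := le_abs_self (q - d)
  linarith

lemma one_div_jb_pow_le {q d b : ℝ} (hb : 0 ≤ b) (h : b ≤ q - d) {m k : ℕ} (hk : k ≤ m) :
    1 / jb d ^ m ≤ (2 + |q|) ^ k / (1 + b) ^ k := by
  have hj := one_le_jb d
  calc 1 / jb d ^ m ≤ 1 / jb d ^ k := by
        apply one_div_le_one_div_of_le (by positivity)
        exact pow_le_pow_right₀ hj hk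
    _ = (1 / jb d) ^ k := by rw [div_pow, one_pow]
    _ ≤ ((2 + |q|) / (1 + b)) ^ k := by
        have := jb_pos d
        exact pow_le_pow_left₀ (by positivity) (one_div_jb_le hb h) k
    _ = _ := by rw [div_pow]

/-- The value of `r - t` at the point at rescaled distance `l` along a light ray issuing from
`(r - q, r ω)`, where `w = r (1 - ⟪σ, ω⟫)`. -/
def rayD (q w l : ℝ) (y : E3) : ℝ := q - 2 * l * w / (‖y‖ + 1 + l)

/-- The rescaled integrand of the spherical means of the source over the light cone with vertex
`(r - q, r ω)`; here `ε = 1 / r` and `w = r (1 - ⟪σ, ω⟫)`. -/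
def rayPsi (χ : ℝ → ℝ) (n : ℝ → E3 → ℝ) (q : ℝ) (ω : E3) (l ε w : ℝ) (σ : E3) : ℝ :=
  l * core χ n (rayD q w l (ω + l • σ), ω + l • σ, ε)

lemma ray_norm_sq (ω σ : sphere (0 : E3) 1) (l : ℝ) :
    ‖(ω : E3) + l • (σ : E3)‖ ^ 2 = (1 + l) ^ 2 - 2 * l * (1 - ⟪(σ : E3), (ω : E3)⟫) := by
  rw [norm_add_sq_real, norm_smul, norm_sph, norm_sph, real_inner_smul_right,
    real_inner_comm, Real.norm_eq_abs, mul_one, sq_abs]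
  ring

lemma ray_norm_le (ω σ : sphere (0 : E3) 1) {l : ℝ} (hl : 0 < l) :
    ‖(ω : E3) + l • (σ : E3)‖ ≤ 1 + l := by
  refine (norm_add_le _ _).trans ?_
  rw [norm_smul, norm_sph, norm_sph, Real.norm_eq_abs, abs_of_pos hl, mul_one]

lemma ray_norm_ge (ω σ : sphere (0 : E3) 1) {l : ℝ} (hl : 0 < l) :
    l - 1 ≤ ‖(ω : E3) + l • (σ : E3)‖ ∧ 1 - l ≤ ‖(ω : E3) + l • (σ : E3)‖ := by
  have h1 : ‖l • (σ : E3)‖ = l := by rw [norm_smul, norm_sph, Real.norm_eq_abs, abs_of_pos hl, mul_one]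
  constructor
  · have := norm_sub_norm_le (l • (σ : E3)) (-(ω : E3))
    rw [h1, norm_neg, norm_sph, sub_neg_eq_add, add_comm (l • (σ : E3))] at this
    exact this
  · have := norm_sub_norm_le (ω : E3) (-(l • (σ : E3)))
    rw [norm_neg, h1, norm_sph, sub_neg_eq_add] at this
    exact this

lemma core_scale {χ : ℝ → ℝ} {n : ℝ → E3 → ℝ} (hn : SmoothQSphere n) (d : ℝ) (y : E3) {r : ℝ}
    (hr : 0 < r) : core χ n (d, r • y, 1) = core χ n (d, y, 1 / r) / r ^ 2 := by
  simp only [core, norm_smul, Real.norm_eq_abs, abs_of_pos hr, hn.1 d r hr y]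
  rw [show jb d * 1 / (r * ‖y‖) = jb d * (1 / r) / ‖y‖ by
    rcases eq_or_ne ‖y‖ 0 with h | h
    · simp [h]
    · field_simp]
  rcases eq_or_ne ‖y‖ 0 with h | h
  · simp [h]
  · field_simp

lemma ray_arg (ω σ : sphere (0 : E3) 1) (q : ℝ) {r l : ℝ} (hl : 0 < l) :
    r * ‖(ω : E3) + l • (σ : E3)‖ - (r - q + r * l)
      = rayD q (r * (1 - ⟪(σ : E3), (ω : E3)⟫)) l ((ω : E3) + l • (σ : E3)) := by
  have h := ray_norm_sq ω σ l
  have hp := norm_nonneg ((ω : E3) + l • (σ : E3))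
  rw [rayD, eq_sub_iff_add_eq, ← eq_sub_iff_add_eq', div_eq_iff (by positivity)]
  linear_combination r * h

section
variable {χ : ℝ → ℝ} (hχ : IsCutChi χ) {n : ℝ → E3 → ℝ} (hn : SmoothQSphere n)

include hn in
/-- The spherical means over the light cone with vertex on an outgoing ray, at rescaled radius `l`. -/
lemma lightMean_ray (ω : sphere (0 : E3) 1) (q : ℝ) {r l : ℝ} (hr : 0 < r) (hl : 0 < l) :
    r * (r * lightMean (src χ n) ((r - q, r • (ω : E3)), r * l))
      = r * ∫ σ : sphere (0 : E3) 1,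
          rayPsi χ n q ω l (1 / r) (r * (1 - ⟪(σ : E3), (ω : E3)⟫)) σ ∂sphereMeasure := by
  congr 1
  rw [lightMean, ← integral_const_mul]
  congr 1; ext σ
  simp only [src, Prod.fst_add, Prod.snd_add, Prod.smul_fst, Prod.smul_snd, smul_eq_mul, mul_one]
  have h1 : r • (ω : E3) + (r * l) • (σ : E3) = r • ((ω : E3) + l • (σ : E3)) := by
    rw [smul_add, smul_smul]
  rw [h1, core_scale hn _ _ hr, norm_smul, Real.norm_eq_abs, abs_of_pos hr, ray_arg ω σ q hl, rayPsi]
  field_simp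

include hχ hn in
lemma rayPsi_continuous (ω : sphere (0 : E3) 1) (q : ℝ) {l : ℝ} (hl : 0 < l) (hl1 : l ≠ 1) :
    Continuous fun p : ℝ × ℝ × sphere (0 : E3) 1 => rayPsi χ n q ω l p.1 p.2.1 p.2.2 := by
  have hy : Continuous fun p : ℝ × ℝ × sphere (0 : E3) 1 => (ω : E3) + l • (p.2.2 : E3) := by
    fun_prop
  refine continuous_const.mul (continuous_iff_continuousAt.2 fun p => ?_)
  have hne : (ω : E3) + l • (p.2.2 : E3) ≠ 0 := by
    intro h
    have := ray_norm_ge ω p.2.2 hl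
    rw [h, norm_zero] at this
    exact hl1 (le_antisymm (by linarith) (by linarith))
  refine ContinuousAt.comp
    (f := fun p : ℝ × ℝ × sphere (0 : E3) 1 =>
      (rayD q p.2.1 l ((ω : E3) + l • (p.2.2 : E3)), (ω : E3) + l • (p.2.2 : E3), p.1))
    (core_contDiffAt hχ hn (p := (_, _, _)) hne).continuousAt ?_
  have h3 : Continuous fun p : ℝ × ℝ × sphere (0 : E3) 1 =>
      rayD q p.2.1 l ((ω : E3) + l • (p.2.2 : E3)) := by
    refine continuous_const.sub (Continuous.div (by fun_prop) (by fun_prop) fun p => ?_)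
    positivity
  exact (h3.prodMk (hy.prodMk continuous_fst)).continuousAt

variable {C : ℝ} (hB : Bd 3 C n)

include hχ hB in
/-- Domination required by `conc`. The rescaled source decays like `⟨d⟩⁻²` with `d` the value of
`r - t`, and `d` moves away from `q` at least linearly in `w`. -/
lemma rayPsi_bound (ω σ : sphere (0 : E3) 1) (q : ℝ) {r l : ℝ} (hr : 2 * |q| + 1 ≤ r) (hl : 0 < l) :
    |rayPsi χ n q ω l (1 / r) (r * (1 - ⟪(σ : E3), (ω : E3)⟫)) σ|
      ≤ (9 * l / (1 + l) ^ 2 * (C * (2 + |q|) ^ 2)) *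
        (1 + l / (1 + l) * (r * (1 - ⟪(σ : E3), (ω : E3)⟫))) ^ (-2 : ℝ) := by
  set w := r * (1 - ⟪(σ : E3), (ω : E3)⟫) with hw
  have hr0 : 0 < r := by have := abs_nonneg q; linarith
  have hw0 : 0 ≤ w := mul_nonneg hr0.le (u_nonneg (norm_sph ω) σ)
  have hC := hB.pos
  have hcw : 0 ≤ l / (1 + l) * w := by positivity
  rw [rpow_neg_two (by positivity)]
  set y := (ω : E3) + l • (σ : E3) with hy
  have hle := ray_norm_le ω σ hl
  have harg := ray_arg ω σ q (r := r) hl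
  rw [← hy] at hle harg
  rw [← hw] at harg
  rcases eq_or_ne y 0 with hy0 | hy0
  · rw [rayPsi, core]; simp only [← hy, hy0, norm_zero]
    norm_num
    positivity
  by_cases hc : cut2 χ (jb (rayD q w l y) * (1 / r) / ‖y‖) = 0
  · rw [rayPsi, core]; simp only [← hy, hc, zero_mul, zero_div, mul_zero, abs_zero]
    positivity
  have hyp : 0 < ‖y‖ := norm_pos_iff.2 hy0
  have hsup : jb (rayD q w l y) < r * ‖y‖ / 2 := by
    by_contra hcon
    push Not at hcon
    apply hc
    apply cut2_zero hχ
    have := jb_pos (rayD q w l y)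
    rw [abs_of_nonneg (by positivity), le_div_iff₀ hyp, ← div_eq_mul_one_div, le_div_iff₀ hr0]
    linarith
  have h3 : (1 + l) / 3 ≤ ‖y‖ := by
    have h4 := abs_le_jb (rayD q w l y)
    have h5 := neg_abs_le (rayD q w l y)
    have h6 := le_abs_self q
    have h7 : r * (1 + l) ≤ |q| + 3 / 2 * (r * ‖y‖) := by linarith
    have h8 : 2 * |q| ≤ r * (1 + l) := by nlinarith [abs_nonneg q]
    have h9 : r * ((1 + l) / 3) ≤ r * ‖y‖ := by linarith
    exact le_of_mul_le_mul_left h9 hr0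
  have hb : l / (1 + l) * w ≤ q - rayD q w l y := by
    rw [rayD, sub_sub_cancel, div_mul_eq_mul_div, div_le_div_iff₀ (by positivity) (by positivity)]
    have : 0 ≤ l * w := by positivity
    nlinarith
  have hn1 : |n (rayD q w l y) y| ≤ C * ((2 + |q|) ^ 2 / (1 + l / (1 + l) * w) ^ 2) := by
    refine (hB.val _ y hy0).trans ?_
    rw [div_eq_mul_one_div]
    exact mul_le_mul_of_nonneg_left (one_div_jb_pow_le hcw hb (by norm_num)) hC.le
  have hcut := abs_cut2_le hχ (jb (rayD q w l y) * (1 / r) / ‖y‖)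
  rw [rayPsi, core]
  simp only [← hy]
  rw [abs_mul, abs_of_pos hl, abs_div, abs_mul, abs_of_pos (by positivity : 0 < ‖y‖ ^ 2)]
  have h10 : 1 / ‖y‖ ^ 2 ≤ 9 / (1 + l) ^ 2 := by
    rw [div_le_div_iff₀ (by positivity) (by positivity)]
    nlinarith
  calc _ = l * ((|cut2 χ (jb (rayD q w l y) * (1 / r) / ‖y‖)| * |n (rayD q w l y) y|)
          * (1 / ‖y‖ ^ 2)) := by ring
    _ ≤ l * ((1 * (C * ((2 + |q|) ^ 2 / (1 + l / (1 + l) * w) ^ 2))) * (9 / (1 + l) ^ 2)) := by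
        gcongr
    _ = _ := by ring
end

/-- The mass of `n` on `(-∞, q]` in the direction `ω`. -/
def massL (n : ℝ → E3 → ℝ) (q : ℝ) (ω : E3) : ℝ := ∫ s in Iic q, n s ω

lemma integral_ray (g : ℝ → ℝ) (q : ℝ) {c : ℝ} (hc : 0 < c) :
    ∫ w in Ioi (0:ℝ), g (q - c * w) = c⁻¹ * ∫ s in Iic q, g s := by
  rw [integral_comp_mul_left_Ioi (fun x => g (q - x)) 0 hc, mul_zero, smul_eq_mul]
  congr 1
  rw [← integral_indicator measurableSet_Ioi, ← integral_Iic_eq_integral_Iio.symm,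
    ← integral_indicator measurableSet_Iio,
    ← integral_sub_left_eq_self (fun s => (Iio q).indicator g s) volume q]
  congr 1; ext x
  by_cases hx : 0 < x
  · rw [indicator_of_mem (by exact hx), indicator_of_mem (by simpa using hx)]
  · rw [indicator_of_notMem (by simpa using hx), indicator_of_notMem (by simpa using hx)]

lemma continuous_slice {f : ℝ → E3 → ℝ} (hf : SmoothQSphere f) {ω : E3} (hω : ω ≠ 0) :
    Continuous fun s => f s ω := by
  rw [continuous_iff_continuousAt]
  intro s
  exact ContinuousAt.comp (f := fun s => (s, ω)) (g := fun p : ℝ × E3 => f p.1 p.2)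
    (smoothQ_at hf (p := (s, ω)) hω).continuousAt (by fun_prop)

lemma jb_neg_two_integrable : Integrable fun s => 1 / jb s ^ 2 := by
  simpa [jb_sq] using integrable_inv_one_add_sq

lemma one_div_jb_pow_anti (s : ℝ) {m k : ℕ} (h : k ≤ m) : 1 / jb s ^ m ≤ 1 / jb s ^ k := by
  have := one_le_jb s
  exact one_div_le_one_div_of_le (by positivity) (pow_le_pow_right₀ this h)

lemma Bd.integrable {f : ℝ → E3 → ℝ} (hf : SmoothQSphere f) {m : ℕ} {C : ℝ} (hB : Bd m C f)
    (hm : 2 ≤ m) {ω : E3} (hω : ω ≠ 0) : Integrable fun s => f s ω := by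
  refine (jb_neg_two_integrable.const_mul C).mono' (continuous_slice hf hω).aestronglyMeasurable
    (ae_of_all _ fun s => ?_)
  refine (hB.val s ω hω).trans ?_
  rw [div_eq_mul_one_div]
  exact mul_le_mul_of_nonneg_left (one_div_jb_pow_anti s hm) hB.pos.le

section
variable {χ : ℝ → ℝ} (hχ : IsCutChi χ) {n : ℝ → E3 → ℝ} (hn : SmoothQSphere n)
  {C : ℝ} (hB : Bd 3 C n)

include hn in
/-- At the pole `σ = ω` and `ε = 0` the cutoff is `1` and only the profile of `n` in the direction `ω`
remains. -/
lemma rayPsi_zero (ω : sphere (0 : E3) 1) (q : ℝ) (hχ : IsCutChi χ) {l w : ℝ} (hl : 0 < l) :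
    rayPsi χ n q ω l 0 w ω = l / (1 + l) ^ 2 * n (q - l / (1 + l) * w) ω := by
  have h1 : (ω : E3) + l • (ω : E3) = (1 + l) • (ω : E3) := by rw [add_smul, one_smul]
  have h2 : ‖(1 + l) • (ω : E3)‖ = 1 + l := by
    rw [norm_smul, norm_sph, mul_one, Real.norm_eq_abs, abs_of_pos (by linarith)]
  rw [rayPsi, core, rayD]
  simp only [h1, h2]
  rw [hn.1 _ (1 + l) (by linarith), mul_zero, zero_div, cut2_one hχ (by norm_num)]
  have : q - 2 * l * w / (1 + l + 1 + l) = q - l / (1 + l) * w := by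
    congr 1
    field_simp
    ring
  rw [this]; ring

include hχ hn hB in
/-- Concentration of the spherical means. The excluded value `l = 1` is the one for which the light
sphere passes through the origin. -/
lemma ray_tendsto (ω : sphere (0 : E3) 1) (q : ℝ) {l : ℝ} (hl : 0 < l) (hl1 : l ≠ 1) :
    Tendsto (fun r => r * (r * lightMean (src χ n) ((r - q, r • (ω : E3)), r * l))) atTop
      (𝓝 (2 * π * massL n q ω * (1 / (1 + l)))) := by
  have hC := hB.pos
  have h := conc (ω := ω) (Ψ := fun ε w σ => rayPsi χ n q ω l ε w σ)
    (rayPsi_continuous hχ hn ω q hl hl1) (C := 9 * l / (1 + l) ^ 2 * (C * (2 + |q|) ^ 2))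
    (c := l / (1 + l)) (r₀ := 2 * |q| + 1) (by positivity) (by positivity)
    (fun r hr σ => rayPsi_bound hχ hB ω σ q hr hl) (fun w hw => ?_)
  · have h2 : ∫ w in Ioi (0:ℝ), rayPsi χ n q ω l 0 w ω = massL n q ω * (1 / (1 + l)) := by
      simp only [rayPsi_zero hn ω q hχ hl]
      rw [integral_const_mul, integral_ray (fun s => n s ω) q (by positivity), massL]
      field_simp
    rw [h2, ← mul_assoc] at h
    refine h.congr' ?_
    filter_upwards [eventually_gt_atTop 0] with r hr
    exact (lightMean_ray hn ω q hr hl).symm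
  · have hcw : 0 ≤ l / (1 + l) * w := by positivity
    rw [rayPsi_zero hn ω q hχ hl, rpow_neg_two (by positivity), abs_mul,
      abs_of_pos (by positivity : 0 < l / (1 + l) ^ 2)]
    have h1 := hB.val (q - l / (1 + l) * w) ω (sph_ne ω)
    have h2 := one_div_jb_pow_le (q := q) (d := q - l / (1 + l) * w) hcw (by linarith)
      (show 2 ≤ 3 by norm_num)
    rw [div_eq_mul_one_div C] at h1
    calc _ ≤ l / (1 + l) ^ 2 * (C * ((2 + |q|) ^ 2 / (1 + l / (1 + l) * w) ^ 2)) := by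
          exact mul_le_mul_of_nonneg_left
            (h1.trans (mul_le_mul_of_nonneg_left h2 hC.le)) (by positivity)
      _ ≤ 9 * (l / (1 + l) ^ 2 * (C * ((2 + |q|) ^ 2 / (1 + l / (1 + l) * w) ^ 2))) :=
          le_mul_of_one_le_left (by positivity) (by norm_num)
      _ = _ := by ring

include hχ hn hB in
lemma ray_bound (ω : sphere (0 : E3) 1) (q : ℝ) {r l : ℝ} (hr : 2 * |q| + 1 ≤ r) (hl : 0 < l) :
    |r * (r * lightMean (src χ n) ((r - q, r • (ω : E3)), r * l))|
      ≤ 18 * π * (C * (2 + |q|) ^ 2) := by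
  have hr0 : 0 < r := by have := abs_nonneg q; linarith
  have hC := hB.pos
  have hc : 0 < l / (1 + l) := by positivity
  rw [lightMean_ray hn ω q hr0 hl, abs_mul, abs_of_pos hr0]
  have h1 := norm_integral_le_of_norm_le
    (f := fun σ : sphere (0 : E3) 1 => rayPsi χ n q ω l (1 / r) (r * (1 - ⟪(σ : E3), (ω : E3)⟫)) σ)
    ((conc_integrable (norm_sph ω) 2 hc hr0).const_mul
      (9 * l / (1 + l) ^ 2 * (C * (2 + |q|) ^ 2)))
    (ae_of_all _ fun σ => rayPsi_bound hχ hB ω σ q hr hl)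
  rw [integral_const_mul] at h1
  have h2 := sphere_conc_bound (norm_sph ω) (s := 2) hc (by norm_num) hr0
  calc _ ≤ r * (9 * l / (1 + l) ^ 2 * (C * (2 + |q|) ^ 2) * _) :=
        mul_le_mul_of_nonneg_left h1 hr0.le
    _ = 9 * l / (1 + l) ^ 2 * (C * (2 + |q|) ^ 2) * (r * _) := by ring
    _ ≤ 9 * l / (1 + l) ^ 2 * (C * (2 + |q|) ^ 2) * _ :=
        mul_le_mul_of_nonneg_left h2 (by positivity)
    _ = 18 * π * (C * (2 + |q|) ^ 2) * (1 / (1 + l)) := by field_simp; ring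
    _ ≤ _ := mul_le_of_le_one_right (by positivity) (by rw [div_le_one (by positivity)]; linarith)

include hn hB in
/-- The spherical means of `n` along outgoing rays, with a rate of convergence. -/
lemma srcP_rate (ω : sphere (0 : E3) 1) (q : ℝ) :
    ∃ K, ∀ r, 1 ≤ r → |r * srcP n (r - q, r • (ω : E3)) - 2 * π * massL n q ω| ≤ K / √r := by
  have hC := hB.pos
  set Q := 2 + |q| with hQ
  have hQ0 : 0 < Q := by positivity
  set I := ∫ w in Ioi (0:ℝ), (1 + 1 * w) ^ (-2 : ℝ) with hI
  refine ⟨2 * (C * Q ^ 3) * (2 * π) + 2 * π * (C * Q ^ 3 * I), fun r hr => ?_⟩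
  have hr0 : 0 < r := by linarith
  have hval : ∀ w, 0 ≤ w → ∀ m, 2 ≤ m → 1 / jb (q - w) ^ m ≤ Q ^ 2 * (1 + w) ^ (-2 : ℝ) := by
    intro w hw m hm
    have := one_div_jb_pow_le (q := q) (d := q - w) hw (by linarith) hm
    rw [rpow_neg_two (by linarith), mul_one_div]
    exact this
  have hcs : Continuous fun σ : sphere (0 : E3) 1 => n (q - r * (1 - ⟪(σ : E3), (ω : E3)⟫)) σ := by
    have := (extQ_smooth hn).continuous.comp
      (f := fun σ : sphere (0 : E3) 1 => (q - r * (1 - ⟪(σ : E3), (ω : E3)⟫), (σ : E3))) (by fun_prop)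
    simpa only [Function.comp_def, extQ_sph] using this
  have hcω : Continuous fun s => n s ω := continuous_slice hn (sph_ne ω)
  have hcw : Continuous fun σ : sphere (0 : E3) 1 => n (q - r * (1 - ⟪(σ : E3), (ω : E3)⟫)) ω :=
    hcω.comp (by fun_prop)
  have h0 : srcP n (r - q, r • (ω : E3)) = ∫ σ : sphere (0 : E3) 1,
      n (q - r * (1 - ⟪(σ : E3), (ω : E3)⟫)) σ ∂sphereMeasure := by
    rw [srcP_eq]
    congr 1; ext σ
    simp only [real_inner_comm]
    congr 1
    rw [real_inner_smul_right, real_inner_comm]; ring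
  -- the difference between the densities at `σ` and at `ω`
  have h1 : |r * ((∫ σ : sphere (0 : E3) 1, n (q - r * (1 - ⟪(σ : E3), (ω : E3)⟫)) σ ∂sphereMeasure)
      - ∫ σ : sphere (0 : E3) 1, n (q - r * (1 - ⟪(σ : E3), (ω : E3)⟫)) ω ∂sphereMeasure)|
      ≤ 2 * (C * Q ^ 3) * (2 * π) / √r := by
    rw [← integral_sub (sphere_integrable hcs) (sphere_integrable hcw), abs_mul, abs_of_pos hr0]
    have hb : ∀ σ : sphere (0 : E3) 1,
        ‖n (q - r * (1 - ⟪(σ : E3), (ω : E3)⟫)) σ - n (q - r * (1 - ⟪(σ : E3), (ω : E3)⟫)) ω‖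
        ≤ 2 * (C * Q ^ 3) / √r * (1 + 1 * (r * (1 - ⟪(σ : E3), (ω : E3)⟫))) ^ (-2 : ℝ) := by
      intro σ
      have hu := u_nonneg (norm_sph ω) σ
      set w := r * (1 - ⟪(σ : E3), (ω : E3)⟫) with hw
      have hw0 : 0 ≤ w := by positivity
      refine (hB.lip (q - w) σ ω (norm_sph σ) (sph_ne ω)).trans ?_
      have h3 : ‖(σ : E3) - ω‖ ≤ 2 * (√w / √r) := by
        rw [← Real.sqrt_div hw0]
        apply le_of_sq_le_sq _ (by positivity)
        rw [mul_pow, Real.sq_sqrt (by positivity), norm_sub_sq_sph (norm_sph ω), hw,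
          mul_div_cancel_left₀ _ hr0.ne']
        linarith
      have h4 : √w ≤ Q * jb (q - w) := by
        refine le_trans ?_ (peetre q w)
        rw [Real.sqrt_le_left (by positivity), abs_of_nonneg hw0]
        nlinarith
      have hj := jb_pos (q - w)
      rw [one_mul]
      calc _ ≤ C / jb (q - w) ^ 3 * (2 * (Q * jb (q - w) / √r)) := by gcongr; exact h3.trans (by gcongr)
        _ = 2 * (C * Q) / √r * (1 / jb (q - w) ^ 2) := by field_simp
        _ ≤ 2 * (C * Q) / √r * (Q ^ 2 * (1 + w) ^ (-2 : ℝ)) :=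
          mul_le_mul_of_nonneg_left (hval w hw0 2 le_rfl) (by positivity)
        _ = _ := by ring
    have := norm_integral_le_of_norm_le
      ((conc_integrable (norm_sph ω) 2 one_pos hr0).const_mul (2 * (C * Q ^ 3) / √r))
      (ae_of_all _ hb)
    rw [integral_const_mul] at this
    have h2 := sphere_conc_bound (norm_sph ω) (s := 2) one_pos (by norm_num) hr0
    calc _ ≤ r * (2 * (C * Q ^ 3) / √r * _) := mul_le_mul_of_nonneg_left this hr0.le
      _ = 2 * (C * Q ^ 3) / √r * (r * _) := by ring
      _ ≤ 2 * (C * Q ^ 3) / √r * _ := mul_le_mul_of_nonneg_left h2 (by positivity)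
      _ = _ := by norm_num; ring
  have hi : Integrable fun s => n s ω := hB.integrable hn (by norm_num) (sph_ne ω)
  have h2 : r * (∫ σ : sphere (0 : E3) 1, n (q - r * (1 - ⟪(σ : E3), (ω : E3)⟫)) ω ∂sphereMeasure)
      = 2 * π * (massL n q ω - massL n (q - 2 * r) ω) := by
    rw [sphere_u_integral (norm_sph ω) (g := fun u => n (q - r * u) ω)
      (hcω.comp (by fun_prop)).measurable,
      intervalIntegral.integral_comp_sub_mul (fun s => n s ω) hr0.ne', massL, massL,
      intervalIntegral.integral_Iic_sub_Iic hi.integrableOn hi.integrableOn, smul_eq_mul,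
      mul_zero, sub_zero, mul_comm r 2]
    field_simp
  have h3 : |massL n (q - 2 * r) ω| ≤ C * Q ^ 3 * I / √r := by
    have e := integral_ray (fun s => n s ω) (q - 2 * r) one_pos
    rw [inv_one, one_mul] at e
    rw [massL, ← e]
    have hb : ∀ᵐ w ∂volume.restrict (Ioi (0:ℝ)), ‖n (q - 2 * r - 1 * w) ω‖
        ≤ C * Q ^ 3 / √r * (1 + 1 * w) ^ (-2 : ℝ) := by
      refine (ae_restrict_iff' measurableSet_Ioi).2 (ae_of_all _ fun w hw => ?_)
      have hw : 0 < w := hw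
      refine (hB.val _ ω (sph_ne ω)).trans ?_
      rw [one_mul, rpow_neg_two (by linarith), div_eq_mul_one_div]
      have := one_div_jb_pow_le (q := q) (d := q - 2 * r - w) (b := 2 * r + w) (by positivity)
        (by linarith) (le_refl 3)
      have h5 : √r * (1 + w) ^ 2 ≤ (1 + (2 * r + w)) ^ 3 := by
        have h6 : √r ≤ 1 + (2 * r + w) := by
          rw [Real.sqrt_le_left (by positivity)]; nlinarith
        calc _ ≤ (1 + (2 * r + w)) * (1 + (2 * r + w)) ^ 2 := by gcongr; linarith
          _ = _ := by ring
      calc _ ≤ C * (Q ^ 3 / (1 + (2 * r + w)) ^ 3) := mul_le_mul_of_nonneg_left this hC.le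
        _ ≤ C * (Q ^ 3 / (√r * (1 + w) ^ 2)) := by gcongr
        _ = _ := by field_simp
    have := norm_integral_le_of_norm_le ((integrableOn_conc one_pos (s := 2) (by norm_num)).const_mul
      (C * Q ^ 3 / √r)) hb
    rw [integral_const_mul] at this
    rw [Real.norm_eq_abs] at this
    exact this.trans_eq (by rw [hI]; ring)
  rw [h0]
  have h4 : ∀ X Y Z : ℝ, r * Y = 2 * π * (massL n q ω - Z) →
      r * X - 2 * π * massL n q ω = r * (X - Y) - 2 * π * Z := by
    intro X Y Z h; linear_combination h
  rw [h4 _ _ _ h2]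
  refine (abs_sub _ _).trans ?_
  rw [abs_mul (2 * π), abs_of_pos (by positivity : 0 < 2 * π), add_div]
  refine add_le_add h1 ?_
  calc _ ≤ 2 * π * (C * Q ^ 3 * I / √r) := mul_le_mul_of_nonneg_left h3 (by positivity)
    _ = _ := by ring
end

section
variable {χ : ℝ → ℝ} (hχ : IsCutChi χ) {n : ℝ → E3 → ℝ} (hn : SmoothQSphere n)
  {C : ℝ} (hB : Bd 3 C n)

include hn in
lemma slice_differentiable {ω : E3} (hω : ω ≠ 0) : Differentiable ℝ fun s => n s ω := by
  intro s
  exact DifferentiableAt.comp (f := fun s => (s, ω)) (g := fun p : ℝ × E3 => n p.1 p.2) s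
    ((smoothQ_at hn (p := (s, ω)) hω).differentiableAt (by simp)) (by fun_prop)

set_option maxHeartbeats 1000000 in
include hχ hn hB in
/-- Far out along the light cone, the rescaled source differs from its leading part by an integrable
error. -/
lemma rayPsi_far (ω σ : sphere (0 : E3) 1) (q : ℝ) {r l : ℝ} (hr : 2 * |q| + 1 ≤ r) (hl : 24 ≤ l) :
    |rayPsi χ n q ω l (1 / r) (r * (1 - ⟪(σ : E3), (ω : E3)⟫)) σ
        - n (q - r * (1 - ⟪(σ : E3), (ω : E3)⟫)) σ / l|
      ≤ (C * (13 * (2 + |q|) ^ 2 + 2 * (2 + |q|) ^ 3)) / l ^ 2 *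
        (1 + 1 / 2 * (r * (1 - ⟪(σ : E3), (ω : E3)⟫))) ^ (-2 : ℝ) := by
  have hu0 := u_nonneg (norm_sph ω) σ
  have hu2 := u_le_two (norm_sph ω) σ
  set w := r * (1 - ⟪(σ : E3), (ω : E3)⟫) with hw
  have hr0 : 0 < r := by have := abs_nonneg q; linarith
  have hl0 : 0 < l := by linarith
  have hw0 : 0 ≤ w := mul_nonneg hr0.le hu0
  have hw2 : w ≤ 2 * r := by rw [hw]; nlinarith
  have hC := hB.pos
  rw [rpow_neg_two (by positivity)]
  set y := (ω : E3) + l • (σ : E3) with hy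
  have hle := ray_norm_le ω σ hl0
  have hge := (ray_norm_ge ω σ hl0).1
  have hsq := ray_norm_sq ω σ l
  rw [← hy] at hle hge hsq
  have hyp : 0 < ‖y‖ := by linarith
  have hy0 : y ≠ 0 := norm_pos_iff.1 hyp
  set Q := 2 + |q| with hQ
  have hQ0 : 0 < Q := by positivity
  set D := rayD q w l y with hD
  have hqD : q - D = 2 * l * w / (‖y‖ + 1 + l) := by rw [hD, rayD, sub_sub_cancel]
  have hb : 1 / 2 * w ≤ q - D := by
    rw [hqD, le_div_iff₀ (by positivity)]
    nlinarith
  have hb2 : q - D ≤ w := by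
    rw [hqD, div_le_iff₀ (by positivity)]
    nlinarith
  have hDw : D - (q - w) ≤ w / l := by
    have : D - (q - w) = w * (‖y‖ + 1 - l) / (‖y‖ + 1 + l) := by
      rw [show D - (q - w) = w - (q - D) by ring, hqD]
      field_simp; ring
    rw [this, div_le_div_iff₀ (by positivity) hl0]
    have : (‖y‖ + 1 - l) * l ≤ ‖y‖ + 1 + l := by nlinarith
    nlinarith
  have hcut : cut2 χ (jb D * (1 / r) / ‖y‖) = 1 := by
    apply cut2_one hχ
    have hj := jb_pos D
    rw [abs_of_nonneg (by positivity), div_le_iff₀ hyp, ← div_eq_mul_one_div, div_le_iff₀ hr0]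
    have h1 : |D| ≤ |q| + 2 * r := by
      rw [abs_le]; have := neg_abs_le q; have := le_abs_self q
      constructor <;> linarith
    have h2 := jb_le_one_add_abs D
    have := abs_nonneg q
    nlinarith
  have hP : rayPsi χ n q ω l (1 / r) w σ = l / ‖y‖ ^ 2 * n D y := by
    rw [rayPsi, core]; simp only [← hy, ← hD, hcut]; ring
  set B := 1 / (1 + 1 / 2 * w) ^ 2 with hBd
  have hB0 : 0 < B := by positivity
  have hj3 : 1 / jb D ^ 3 ≤ Q ^ 2 * B := by
    rw [hBd, mul_one_div]; exact one_div_jb_pow_le (by positivity) hb (by norm_num)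
  have hnD : |n D y| ≤ C * (Q ^ 2 * B) := by
    refine (hB.val D y hy0).trans ?_
    rw [div_eq_mul_one_div]
    exact mul_le_mul_of_nonneg_left hj3 hC.le
  have h1 : |(l / ‖y‖ ^ 2 - 1 / l) * n D y| ≤ 12 / l ^ 2 * (C * (Q ^ 2 * B)) := by
    rw [abs_mul]
    refine mul_le_mul ?_ hnD (abs_nonneg _) (by positivity)
    have e : l / ‖y‖ ^ 2 - 1 / l = (l ^ 2 - ‖y‖ ^ 2) / (l * ‖y‖ ^ 2) := by field_simp
    have hy2 : l ^ 2 / 4 ≤ ‖y‖ ^ 2 := by nlinarith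
    have h2 : |l ^ 2 - ‖y‖ ^ 2| ≤ 3 * l := by
      have g1 := mul_le_mul_of_nonneg_left hu2 hl0.le
      have g2 := mul_nonneg hl0.le hu0
      rw [hsq, abs_le]; constructor <;> linarith
    rw [e, abs_div, abs_of_pos (by positivity : 0 < l * ‖y‖ ^ 2),
      div_le_div_iff₀ (by positivity) (by positivity)]
    calc _ ≤ 3 * l * l ^ 2 := by gcongr
      _ = 12 * (l * (l ^ 2 / 4)) := by ring
      _ ≤ 12 * (l * ‖y‖ ^ 2) := by gcongr
  have h2 : |1 / l * (n D y - n D σ)| ≤ 1 / l ^ 2 * (C * (Q ^ 2 * B)) := by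
    have e : y = l • ((σ : E3) + (1 / l) • (ω : E3)) := by
      rw [smul_add, smul_smul, mul_one_div_cancel hl0.ne', one_smul, add_comm]
    have e1 : n D y = n D ((σ : E3) + (1 / l) • (ω : E3)) := by rw [e]; exact hn.1 D l hl0 _
    have h3 := hB.lip D σ ((σ : E3) + (1 / l) • (ω : E3)) (norm_sph σ)
      (by intro h; rw [h, smul_zero] at e; exact hy0 e)
    rw [← e1, sub_add_cancel_left, norm_neg, norm_smul, norm_sph, Real.norm_eq_abs,
      abs_of_pos (by positivity : 0 < 1 / l), abs_sub_comm] at h3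
    rw [abs_mul, abs_of_pos (by positivity : 0 < 1 / l)]
    calc _ ≤ 1 / l * (C / jb D ^ 3 * (1 / l * 1)) := mul_le_mul_of_nonneg_left h3 (by positivity)
      _ = 1 / l ^ 2 * (C * (1 / jb D ^ 3)) := by field_simp
      _ ≤ _ := by gcongr
  have h3 : |1 / l * (n D σ - n (q - w) σ)| ≤ 1 / l ^ 2 * (2 * C * Q ^ 3 * B) := by
    have hm := Convex.norm_image_sub_le_of_norm_deriv_le (𝕜 := ℝ) (f := fun s => n s σ)
      (s := Icc (q - w) D) (C := C * (Q ^ 3 / (1 + 1 / 2 * w) ^ 3)) (x := q - w) (y := D)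
      (fun s _ => slice_differentiable hn (sph_ne σ) s) (fun s hs => ?_) (convex_Icc _ _)
      ⟨le_rfl, by linarith⟩ ⟨by linarith, le_rfl⟩
    · rw [Real.norm_eq_abs, Real.norm_eq_abs, abs_of_nonneg (by linarith : 0 ≤ D - (q - w))] at hm
      rw [abs_mul, abs_of_pos (by positivity : 0 < 1 / l)]
      calc _ ≤ 1 / l * (C * (Q ^ 3 / (1 + 1 / 2 * w) ^ 3) * (w / l)) :=
            mul_le_mul_of_nonneg_left (hm.trans (by gcongr)) (by positivity)
        _ = 1 / l ^ 2 * (C * Q ^ 3 * B * (w / (1 + 1 / 2 * w))) := by rw [hBd]; field_simp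
        _ ≤ 1 / l ^ 2 * (C * Q ^ 3 * B * 2) := by
          gcongr
          rw [div_le_iff₀ (by positivity)]; linarith
        _ = _ := by ring
    · refine (hB.der s σ (sph_ne σ)).trans ?_
      rw [div_eq_mul_one_div]
      exact mul_le_mul_of_nonneg_left (one_div_jb_pow_le (by positivity)
        (by have := hs.2; linarith) (by norm_num)) hC.le
  have e : rayPsi χ n q ω l (1 / r) w σ - n (q - w) σ / l = (l / ‖y‖ ^ 2 - 1 / l) * n D y
      + 1 / l * (n D y - n D σ) + 1 / l * (n D σ - n (q - w) σ) := by rw [hP]; ring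
  rw [e]
  refine (abs_add_three _ _ _).trans ?_
  calc _ ≤ 12 / l ^ 2 * (C * (Q ^ 2 * B)) + 1 / l ^ 2 * (C * (Q ^ 2 * B))
        + 1 / l ^ 2 * (2 * C * Q ^ 3 * B) := by gcongr
    _ = _ := by ring

lemma srcP_ray {n : ℝ → E3 → ℝ} (ω : sphere (0 : E3) 1) (q r : ℝ) :
    srcP n (r - q, r • (ω : E3)) = ∫ σ : sphere (0 : E3) 1,
      n (q - r * (1 - ⟪(σ : E3), (ω : E3)⟫)) σ ∂sphereMeasure := by
  rw [srcP_eq]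
  congr 1; ext σ
  congr 1
  rw [real_inner_smul_left, real_inner_comm]; ring

lemma continuous_srcP_integrand {n : ℝ → E3 → ℝ} (hn : SmoothQSphere n) (ω : sphere (0 : E3) 1)
    (q r : ℝ) :
    Continuous fun σ : sphere (0 : E3) 1 => n (q - r * (1 - ⟪(σ : E3), (ω : E3)⟫)) σ := by
  have := (extQ_smooth hn).continuous.comp
    (f := fun σ : sphere (0 : E3) 1 => (q - r * (1 - ⟪(σ : E3), (ω : E3)⟫), (σ : E3))) (by fun_prop)
  simpa only [Function.comp_def, extQ_sph] using this

include hχ hn hB in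
/-- The difference between the spherical means and the renormalising term, uniformly integrable
in `l` at infinity. -/
lemma ray_far_bound (ω : sphere (0 : E3) 1) (q : ℝ) :
    ∃ K, ∀ r l, 2 * |q| + 1 ≤ r → 24 ≤ l →
      |r * (r * lightMean (src χ n) ((r - q, r • (ω : E3)), r * l)
        - srcP n (r - q, r • (ω : E3)) / l)| ≤ K / l ^ 2 := by
  refine ⟨C * (13 * (2 + |q|) ^ 2 + 2 * (2 + |q|) ^ 3) * (4 * π), fun r l hr hl => ?_⟩
  have hr0 : 0 < r := by have := abs_nonneg q; linarith
  have hl0 : 0 < l := by linarith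
  have hC := hB.pos
  rw [mul_sub, lightMean_ray hn ω q hr0 hl0, srcP_ray, ← mul_sub, ← integral_div]
  have hi1 : Integrable (fun σ : sphere (0 : E3) 1 => rayPsi χ n q ω l (1 / r)
      (r * (1 - ⟪(σ : E3), (ω : E3)⟫)) σ) sphereMeasure := by
    apply sphere_integrable
    exact (rayPsi_continuous hχ hn ω q hl0 (by linarith)).comp
      (f := fun σ : sphere (0 : E3) 1 => (1 / r, r * (1 - ⟪(σ : E3), (ω : E3)⟫), σ)) (by fun_prop)
  rw [← integral_sub hi1 (sphere_integrable ((continuous_srcP_integrand hn ω q r).div_const l)),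
    abs_mul, abs_of_pos hr0]
  have h1 := norm_integral_le_of_norm_le
    (f := fun σ : sphere (0 : E3) 1 => rayPsi χ n q ω l (1 / r) (r * (1 - ⟪(σ : E3), (ω : E3)⟫)) σ
      - n (q - r * (1 - ⟪(σ : E3), (ω : E3)⟫)) σ / l)
    ((conc_integrable (norm_sph ω) 2 one_half_pos hr0).const_mul
      ((C * (13 * (2 + |q|) ^ 2 + 2 * (2 + |q|) ^ 3)) / l ^ 2))
    (ae_of_all _ fun σ => rayPsi_far hχ hn hB ω σ q hr hl)
  rw [integral_const_mul] at h1
  have h2 := sphere_conc_bound (norm_sph ω) (s := 2) one_half_pos (by norm_num) hr0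
  calc _ ≤ r * ((C * (13 * (2 + |q|) ^ 2 + 2 * (2 + |q|) ^ 3)) / l ^ 2 * _) :=
        mul_le_mul_of_nonneg_left h1 hr0.le
    _ = (C * (13 * (2 + |q|) ^ 2 + 2 * (2 + |q|) ^ 3)) / l ^ 2 * (r * _) := by ring
    _ ≤ (C * (13 * (2 + |q|) ^ 2 + 2 * (2 + |q|) ^ 3)) / l ^ 2 * _ :=
        mul_le_mul_of_nonneg_left h2 (by positivity)
    _ = _ := by ring
end

lemma deriv_log_ratio {l : ℝ} (hl : 0 < l) :
    HasDerivAt (fun l => Real.log (l + 1) - Real.log l) (1 / (1 + l) - 1 / l) l := by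
  have h1 := ((hasDerivAt_id l).add_const 1).log (by simp; linarith)
  have h2 := Real.hasDerivAt_log hl.ne'
  exact (h1.sub h2).congr_deriv (by simp [add_comm])

section
variable {χ : ℝ → ℝ} (hχ : IsCutChi χ) {n : ℝ → E3 → ℝ} (hn : SmoothQSphere n)
  {C : ℝ} (hB : Bd 3 C n)

/-- The property of the advanced potential used in the asymptotic analysis: Kirchhoff's formula
with the logarithmically divergent part of the integral removed. -/
def AdvFormula (χ : ℝ → ℝ) (n : ℝ → E3 → ℝ) (A : ℝ × E3 → ℝ) : Prop :=
  ∀ z R, 1 ≤ R →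
    IntegrableOn (fun ρ => lightMean (src χ n) (z, ρ) - srcP n z / ρ) (Ioi R) ∧
    4 * π * A z = (∫ ρ in (0:ℝ)..R, lightMean (src χ n) (z, ρ)) - Real.log R * srcP n z
      + ∫ ρ in Ioi R, (lightMean (src χ n) (z, ρ) - srcP n z / ρ)

/-- The formula for the advanced potential with `ρ = r l`, cut at `l = 24`; on the rays in
question the cutoff in the source is `1` for `l ≥ 24`. The choice of the number is immaterial otherwise. -/
lemma AdvFormula.rescaled {A : ℝ × E3 → ℝ} (hA : AdvFormula χ n A) (z : ℝ × E3) {r : ℝ}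
    (hr : 1 ≤ r) :
    4 * π * (r * A z) = (∫ l in (0:ℝ)..24, r * (r * lightMean (src χ n) (z, r * l)))
      + (∫ l in Ioi (24:ℝ), r * (r * lightMean (src χ n) (z, r * l) - srcP n z / l))
      - Real.log (24 * r) * (r * srcP n z) := by
  have hr0 : 0 < r := by linarith
  have h := (hA z (24 * r) (by linarith)).2
  have e1 := intervalIntegral.mul_integral_comp_mul_left (a := 0) (b := 24) r
    (f := fun ρ => lightMean (src χ n) (z, ρ))
  have e2 := integral_comp_mul_left_Ioi (fun ρ => lightMean (src χ n) (z, ρ) - srcP n z / ρ) 24 hr0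
  rw [smul_eq_mul, inv_mul_eq_div, eq_div_iff hr0.ne'] at e2
  rw [mul_zero] at e1
  rw [mul_comm 24 r, ← e1, ← e2] at h
  simp only [intervalIntegral.integral_const_mul, integral_const_mul]
  have e3 : ∫ l in Ioi (24:ℝ), (r * lightMean (src χ n) (z, r * l) - srcP n z / l)
      = (∫ l in Ioi (24:ℝ), (lightMean (src χ n) (z, r * l) - srcP n z / (r * l))) * r := by
    rw [← integral_mul_const]
    refine setIntegral_congr_fun measurableSet_Ioi fun l hl => ?_
    have hl : (24:ℝ) < l := hl
    have hl0 : l ≠ 0 := by linarith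
    field_simp
  rw [e3, mul_comm 24 r]
  linear_combination r * h

include hχ hn hB in
/-- Along outgoing light rays the advanced potential is `-(1/2) log r / r` times the mass of `n` on
`(-∞, q]`, with no further contribution at order `1 / r`. -/
lemma adv_outgoing {A : ℝ × E3 → ℝ} (hA : AdvFormula χ n A) (ω : sphere (0 : E3) 1) (q : ℝ) :
    Tendsto (fun r => r * A (r - q, r • (ω : E3)) + 1 / 2 * massL n q ω * Real.log r)
      atTop (𝓝 0) := by
  set m := massL n q ω with hm
  have hLc : ∀ r, Continuous fun l => lightMean (src χ n) ((r - q, r • (ω : E3)), r * l) := by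
    intro r
    exact (lightMean_smooth (src_smooth hχ hn)).continuous.comp
      (f := fun l : ℝ => ((r - q, r • (ω : E3)), r * l)) (by fun_prop)
  obtain ⟨K, hK⟩ := srcP_rate hn hB ω q
  have hK0 : 0 ≤ K := by
    have := (abs_nonneg _).trans (hK 1 le_rfl); simpa using this
  have hdiff : Tendsto (fun r => r * srcP n (r - q, r • (ω : E3)) - 2 * π * m) atTop (𝓝 0) := by
    refine squeeze_zero_norm' (a := fun r => K / √r) ?_ ?_
    · filter_upwards [eventually_ge_atTop 1] with r hr using hK r hr
    · exact tendsto_const_nhds.div_atTop Real.tendsto_sqrt_atTop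
  have hsP : Tendsto (fun r => r * srcP n (r - q, r • (ω : E3))) atTop (𝓝 (2 * π * m)) := by
    simpa using hdiff.add_const (2 * π * m)
  have hlogdiff : Tendsto (fun r => Real.log r * (r * srcP n (r - q, r • (ω : E3)) - 2 * π * m))
      atTop (𝓝 0) := by
    refine squeeze_zero_norm' (a := fun r => K * (Real.log r / r ^ (1 / 2 : ℝ))) ?_ ?_
    · filter_upwards [eventually_ge_atTop 1] with r hr
      rw [norm_mul, Real.norm_eq_abs, Real.norm_eq_abs, abs_of_nonneg (Real.log_nonneg hr)]
      calc _ ≤ Real.log r * (K / √r) :=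
            mul_le_mul_of_nonneg_left (hK r hr) (Real.log_nonneg hr)
        _ = _ := by rw [Real.sqrt_eq_rpow]; ring
    · have := (isLittleO_log_rpow_atTop (one_half_pos (α := ℝ))).tendsto_div_nhds_zero
      simpa using this.const_mul K
  have hne1 : ∀ᵐ l : ℝ, l ≠ 1 := by
    simp [ae_iff]
  have hg1 : Tendsto (fun r => ∫ l in (0:ℝ)..24,
      r * (r * lightMean (src χ n) ((r - q, r • (ω : E3)), r * l))) atTop
      (𝓝 (∫ l in (0:ℝ)..24, 2 * π * m * (1 / (1 + l)))) := by
    refine intervalIntegral.tendsto_integral_filter_of_dominated_convergence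
      (fun _ => 18 * π * (C * (2 + |q|) ^ 2)) (Eventually.of_forall fun r => ?_) ?_
      intervalIntegrable_const ?_
    · exact (((hLc r).const_mul r).const_mul r).aestronglyMeasurable
    · filter_upwards [eventually_ge_atTop (2 * |q| + 1)] with r hr
      refine ae_of_all _ fun l hl => ?_
      rw [uIoc_of_le (by norm_num)] at hl
      exact ray_bound hχ hn hB ω q hr hl.1
    · filter_upwards [hne1] with l hl1 hl
      rw [uIoc_of_le (by norm_num)] at hl
      exact ray_tendsto hχ hn hB ω q hl.1 hl1
  have hg2 : Tendsto (fun r => ∫ l in Ioi (24:ℝ),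
      r * (r * lightMean (src χ n) ((r - q, r • (ω : E3)), r * l)
        - srcP n (r - q, r • (ω : E3)) / l)) atTop
      (𝓝 (∫ l in Ioi (24:ℝ), 2 * π * m * (1 / (1 + l) - 1 / l))) := by
    obtain ⟨K', hK'⟩ := ray_far_bound hχ hn hB ω q
    refine tendsto_integral_filter_of_dominated_convergence (fun l => K' * l ^ (-2 : ℝ))
      (Eventually.of_forall fun r => ?_) ?_ ?_ ?_
    · exact ((((hLc r).const_mul r).measurable.sub (measurable_const.div measurable_id)).const_mul
        r).aestronglyMeasurable
    · filter_upwards [eventually_ge_atTop (2 * |q| + 1)] with r hr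
      refine (ae_restrict_iff' measurableSet_Ioi).2 (ae_of_all _ fun l hl => ?_)
      have hl : (24:ℝ) < l := hl
      rw [rpow_neg_two (by linarith), mul_one_div]
      exact hK' r l hr hl.le
    · exact (integrableOn_Ioi_rpow_of_lt (by norm_num) (by norm_num)).const_mul K'
    · refine (ae_restrict_iff' measurableSet_Ioi).2 (ae_of_all _ fun l hl => ?_)
      have hl : (24:ℝ) < l := hl
      have h1 := ray_tendsto hχ hn hB ω q (l := l) (by linarith) (by linarith)
      have h2 := h1.sub (hsP.div_const l)
      rw [show 2 * π * m * (1 / (1 + l) - 1 / l)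
        = 2 * π * m * (1 / (1 + l)) - 2 * π * m / l by ring]
      refine h2.congr fun r => ?_
      ring
  have hI1 : ∫ l in (0:ℝ)..24, 1 / (1 + l) = Real.log 25 := by
    have := intervalIntegral.integral_comp_add_left (a := 0) (b := 24) (fun x : ℝ => 1 / x) 1
    rw [this, integral_one_div_of_pos (by norm_num) (by norm_num)]
    norm_num
  have hI2 : ∫ l in Ioi (24:ℝ), (1 / (1 + l) - 1 / l) = 0 - (Real.log (24 + 1) - Real.log 24) := by
    refine integral_Ioi_of_hasDerivAt_of_nonpos (g := fun l => Real.log (l + 1) - Real.log l)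
      (deriv_log_ratio (by norm_num)).continuousAt.continuousWithinAt
      (fun l hl => deriv_log_ratio (by have : (24:ℝ) < l := hl; linarith)) (fun l hl => ?_) ?_
    · have hl : (24:ℝ) < l := hl
      rw [sub_nonpos]
      exact one_div_le_one_div_of_le (by linarith) (by linarith)
    · exact Real.tendsto_log_comp_add_sub_log 1
  rw [intervalIntegral.integral_const_mul, hI1] at hg1
  rw [integral_const_mul, hI2] at hg2
  -- The constants `log 25`, `log 25 - log 24` and `log 24` cancel, and `log r · O(r^{-1/2}) → 0`.
  have hlim := (((hg1.add hg2).sub (hsP.const_mul (Real.log 24))).sub hlogdiff).const_mul (1 / (4 * π))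
  have e0 : 1 / (4 * π) * (2 * π * m * Real.log 25 + 2 * π * m * (0 - (Real.log (24 + 1) - Real.log 24))
      - Real.log 24 * (2 * π * m) - 0) = 0 := by norm_num; ring
  rw [e0] at hlim
  refine hlim.congr' ?_
  filter_upwards [eventually_ge_atTop 1] with r hr
  have h := hA.rescaled (r - q, r • (ω : E3)) hr
  rw [Real.log_mul (by norm_num) (by linarith)] at h
  rw [one_div, inv_mul_eq_iff_eq_mul₀ (by positivity)]
  linear_combination -h
end

/-! ### The advanced potential at timelike infinity -/

section
variable {χ : ℝ → ℝ} (hχ : IsCutChi χ) {n : ℝ → E3 → ℝ} (hn : SmoothQSphere n)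
  {C : ℝ} (hB : Bd 3 C n)

include hn in
lemma lightMean_timelike (x : E3) {a l : ℝ} (ha : 0 < a) (hl : 0 < l) :
    a * lightMean (src χ n) ((a, a • x), a * l)
      = ∫ σ : sphere (0 : E3) 1, l * core χ n (a * (‖x + l • (σ : E3)‖ - 1 - l),
          x + l • (σ : E3), 1 / a) ∂sphereMeasure := by
  rw [lightMean, ← integral_const_mul]
  congr 1; ext σ
  simp only [src, Prod.fst_add, Prod.snd_add, Prod.smul_fst, Prod.smul_snd, smul_eq_mul, mul_one]
  have h1 : a • x + (a * l) • (σ : E3) = a • (x + l • (σ : E3)) := by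
    rw [smul_add, smul_smul]
  rw [h1, core_scale hn _ _ ha, norm_smul, Real.norm_eq_abs, abs_of_pos ha,
    show a * ‖x + l • (σ : E3)‖ - (a + a * l) = a * (‖x + l • (σ : E3)‖ - 1 - l) by ring]
  field_simp

lemma one_div_jb_pow_le' {d b : ℝ} (hb : 0 < b) (h : d ≤ -b) (m : ℕ) :
    1 / jb d ^ m ≤ 1 / b ^ m := by
  have h1 := abs_le_jb d
  have h2 := neg_abs_le d
  exact one_div_le_one_div_of_le (by positivity) (pow_le_pow_left₀ hb.le (by linarith) m)

lemma sphere_integral_abs_le {f : sphere (0 : E3) 1 → ℝ} {B : ℝ} (h : ∀ σ, |f σ| ≤ B) :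
    |∫ σ, f σ ∂sphereMeasure| ≤ B * (4 * π) := by
  have := norm_integral_le_of_norm_le_const (μ := sphereMeasure) (f := f) (ae_of_all _ h)
  rwa [sphereMeasure_real_univ] at this

variable {x : E3} (hx : ‖x‖ < 1)

lemma time_norm_le (σ : sphere (0 : E3) 1) {l : ℝ} (hl : 0 < l) : ‖x + l • (σ : E3)‖ ≤ ‖x‖ + l := by
  refine (norm_add_le _ _).trans ?_
  rw [norm_smul, norm_sph, Real.norm_eq_abs, abs_of_pos hl, mul_one]

include hχ hB in
/-- On light cones issuing from `(a, a x)` with `‖x‖ < 1`, the value of `r - t` is at most `-a δ`, so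
that `n` is of size `(a δ)⁻³`. -/
lemma time_near (σ : sphere (0 : E3) 1) {a l : ℝ} (ha : 0 < a) (hl : 0 < l) {δ : ℝ} (hδ : 0 < δ)
    (hx : ‖x‖ ≤ 1 - δ) :
    |l * core χ n (a * (‖x + l • (σ : E3)‖ - 1 - l), x + l • (σ : E3), 1 / a)|
      ≤ l * (C / (a * δ) ^ 3 / δ ^ 2) := by
  have hC := hB.pos
  set y := x + l • (σ : E3) with hy
  have hle := time_norm_le (x := x) σ hl
  rw [← hy] at hle
  set D := a * (‖y‖ - 1 - l) with hD
  have hDa : D ≤ -(a * δ) := by rw [hD]; nlinarith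
  rw [abs_mul, abs_of_pos hl]
  refine mul_le_mul_of_nonneg_left ?_ hl.le
  rcases eq_or_ne y 0 with hy0 | hy0
  · rw [core]; simp only [hy0, norm_zero]
    norm_num
    positivity
  have hyp := norm_pos_iff.2 hy0
  by_cases hc : cut2 χ (jb D * (1 / a) / ‖y‖) = 0
  · rw [core]; simp only [hc, zero_mul, zero_div, abs_zero]; positivity
  have h1 : δ ≤ ‖y‖ := by
    by_contra hcon
    push Not at hcon
    apply hc
    apply cut2_zero hχ
    have := jb_pos D
    have h2 := abs_le_jb D
    have h3 := neg_abs_le D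
    rw [abs_of_nonneg (by positivity), le_div_iff₀ hyp, ← div_eq_mul_one_div, le_div_iff₀ ha]
    nlinarith
  have hcut := abs_cut2_le hχ (jb D * (1 / a) / ‖y‖)
  have hnb : |n D y| ≤ C / (a * δ) ^ 3 := by
    refine (hB.val D y hy0).trans ?_
    rw [div_eq_mul_one_div, div_eq_mul_one_div C]
    exact mul_le_mul_of_nonneg_left (one_div_jb_pow_le' (by positivity) hDa 3) hC.le
  rw [core]
  simp only []
  rw [abs_div, abs_mul, abs_of_pos (by positivity : 0 < ‖y‖ ^ 2)]
  gcongr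
  calc _ ≤ 1 * (C / (a * δ) ^ 3) := by gcongr
    _ = _ := one_mul _

set_option maxHeartbeats 1000000 in
include hχ hn hB in
/-- Far out along light cones issuing from timelike rays, the source differs from its leading
part by an integrable error which is small for large `a`. -/
lemma time_far (σ : sphere (0 : E3) 1) {a l : ℝ} (ha : 1 ≤ a) (hl : 24 ≤ l) {δ : ℝ} (hδ : 0 < δ)
    (hx : ‖x‖ ≤ 1 - δ) :
    |l * core χ n (a * (‖x + l • (σ : E3)‖ - 1 - l), x + l • (σ : E3), 1 / a)
        - n (a * (⟪x, (σ : E3)⟫ - 1)) σ / l|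
      ≤ 1 / l ^ 2 * (13 * (C / (a * δ) ^ 3) + a * (C / (a * δ) ^ 4)) := by
  have hC := hB.pos
  have ha0 : 0 < a := by linarith
  have hl0 : 0 < l := by linarith
  have hn0 := norm_nonneg x
  have hin := abs_le.1 (abs_real_inner_le_norm x (σ : E3))
  rw [norm_sph, mul_one] at hin
  set v := ⟪x, (σ : E3)⟫ with hv
  set y := x + l • (σ : E3) with hy
  have hle := time_norm_le (x := x) σ hl0
  have hge : l - ‖x‖ ≤ ‖y‖ := by
    have := norm_sub_norm_le (l • (σ : E3)) (-x)
    rw [norm_neg, sub_neg_eq_add, add_comm (l • (σ : E3)), norm_smul, norm_sph, Real.norm_eq_abs,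
      abs_of_pos hl0, mul_one] at this
    exact this
  have hsq : ‖y‖ ^ 2 = ‖x‖ ^ 2 + 2 * (l * v) + l ^ 2 := by
    rw [hy, norm_add_sq_real, norm_smul, norm_sph, real_inner_smul_right, Real.norm_eq_abs, mul_one,
      sq_abs]
  rw [← hy] at hle
  have hyp : 0 < ‖y‖ := by linarith
  have hy0 : y ≠ 0 := norm_pos_iff.1 hyp
  set D := a * (‖y‖ - 1 - l) with hD
  have hDa : D ≤ -(a * δ) := by rw [hD]; nlinarith
  have hlv : 0 < ‖y‖ + l + v := by linarith
  have hDD : D - a * (v - 1) = a * ((‖x‖ ^ 2 - v ^ 2) / (‖y‖ + l + v)) := by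
    have : ‖y‖ - l - v = (‖x‖ ^ 2 - v ^ 2) / (‖y‖ + l + v) := by
      rw [eq_div_iff hlv.ne']
      linear_combination hsq
    rw [← this, hD]; ring
  have hvx : v ^ 2 ≤ ‖x‖ ^ 2 := sq_le_sq' hin.1 hin.2
  have hDD0 : 0 ≤ D - a * (v - 1) := by
    rw [hDD]
    have : 0 ≤ ‖x‖ ^ 2 - v ^ 2 := by linarith
    positivity
  have hDDl : D - a * (v - 1) ≤ a / l := by
    rw [hDD, div_eq_mul_one_div a]
    refine mul_le_mul_of_nonneg_left ?_ ha0.le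
    rw [div_le_div_iff₀ hlv hl0]
    have g1 : ‖x‖ ^ 2 ≤ 1 := by nlinarith
    have g2 : (‖x‖ ^ 2 - v ^ 2) * l ≤ 1 * l :=
      mul_le_mul_of_nonneg_right (by linarith [sq_nonneg v]) hl0.le
    linarith
  have hcut : cut2 χ (jb D * (1 / a) / ‖y‖) = 1 := by
    apply cut2_one hχ
    have hj := jb_pos D
    rw [abs_of_nonneg (by positivity), div_le_iff₀ hyp, ← div_eq_mul_one_div, div_le_iff₀ ha0]
    have h1 : |D| ≤ 2 * a := by
      rw [abs_le, hD]
      constructor <;> nlinarith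
    have h2 := jb_le_one_add_abs D
    nlinarith
  have hP : l * core χ n (D, y, 1 / a) = l / ‖y‖ ^ 2 * n D y := by
    rw [core]; simp only [hcut]; ring
  have hj3 : 1 / jb D ^ 3 ≤ 1 / (a * δ) ^ 3 := one_div_jb_pow_le' (by positivity) hDa 3
  have hnD : |n D y| ≤ C / (a * δ) ^ 3 := by
    refine (hB.val D y hy0).trans ?_
    rw [div_eq_mul_one_div, div_eq_mul_one_div C]
    exact mul_le_mul_of_nonneg_left hj3 hC.le
  have h1 : |(l / ‖y‖ ^ 2 - 1 / l) * n D y| ≤ 12 / l ^ 2 * (C / (a * δ) ^ 3) := by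
    rw [abs_mul]
    refine mul_le_mul ?_ hnD (abs_nonneg _) (by positivity)
    have e : l / ‖y‖ ^ 2 - 1 / l = (l ^ 2 - ‖y‖ ^ 2) / (l * ‖y‖ ^ 2) := by field_simp
    have hy2 : l ^ 2 / 4 ≤ ‖y‖ ^ 2 := by nlinarith
    have h2 : |l ^ 2 - ‖y‖ ^ 2| ≤ 3 * l := by
      have g1 : l * v ≤ l * 1 := mul_le_mul_of_nonneg_left (by linarith) hl0.le
      have g2 : l * (-1) ≤ l * v := mul_le_mul_of_nonneg_left (by linarith) hl0.le
      have g3 : ‖x‖ ^ 2 ≤ 1 := by nlinarith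
      have g4 := sq_nonneg ‖x‖
      rw [hsq, abs_le]; constructor <;> linarith
    rw [e, abs_div, abs_of_pos (by positivity : 0 < l * ‖y‖ ^ 2),
      div_le_div_iff₀ (by positivity) (by positivity)]
    calc _ ≤ 3 * l * l ^ 2 := by gcongr
      _ = 12 * (l * (l ^ 2 / 4)) := by ring
      _ ≤ 12 * (l * ‖y‖ ^ 2) := by gcongr
  have h2 : |1 / l * (n D y - n D σ)| ≤ 1 / l ^ 2 * (C / (a * δ) ^ 3) := by
    have e : y = l • ((σ : E3) + (1 / l) • x) := by
      rw [smul_add, smul_smul, mul_one_div_cancel hl0.ne', one_smul, add_comm]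
    have e1 : n D y = n D ((σ : E3) + (1 / l) • x) := by rw [e]; exact hn.1 D l hl0 _
    have h3 := hB.lip D σ ((σ : E3) + (1 / l) • x) (norm_sph σ)
      (by intro h; rw [h, smul_zero] at e; exact hy0 e)
    rw [← e1, sub_add_cancel_left, norm_neg, norm_smul, Real.norm_eq_abs,
      abs_of_pos (by positivity : 0 < 1 / l), abs_sub_comm] at h3
    rw [abs_mul, abs_of_pos (by positivity : 0 < 1 / l)]
    have hj := jb_pos D
    calc _ ≤ 1 / l * (C / jb D ^ 3 * (1 / l * 1)) := by
          refine mul_le_mul_of_nonneg_left (h3.trans ?_) (by positivity)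
          gcongr; linarith
      _ = 1 / l ^ 2 * (C * (1 / jb D ^ 3)) := by field_simp
      _ ≤ 1 / l ^ 2 * (C * (1 / (a * δ) ^ 3)) := by gcongr
      _ = _ := by ring
  have h3 : |1 / l * (n D σ - n (a * (v - 1)) σ)| ≤ 1 / l ^ 2 * (a * (C / (a * δ) ^ 4)) := by
    have hm := Convex.norm_image_sub_le_of_norm_deriv_le (𝕜 := ℝ) (f := fun s => n s σ)
      (s := Icc (a * (v - 1)) D) (C := C / (a * δ) ^ 4) (x := a * (v - 1)) (y := D)
      (fun s _ => slice_differentiable hn (sph_ne σ) s) (fun s hs => ?_) (convex_Icc _ _)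
      ⟨le_rfl, by linarith⟩ ⟨by linarith, le_rfl⟩
    · rw [Real.norm_eq_abs, Real.norm_eq_abs, abs_of_nonneg hDD0] at hm
      rw [abs_mul, abs_of_pos (by positivity : 0 < 1 / l)]
      calc _ ≤ 1 / l * (C / (a * δ) ^ 4 * (a / l)) :=
            mul_le_mul_of_nonneg_left (hm.trans (by gcongr)) (by positivity)
        _ = _ := by ring
    · refine (hB.der s σ (sph_ne σ)).trans ?_
      rw [div_eq_mul_one_div, div_eq_mul_one_div C]
      exact mul_le_mul_of_nonneg_left (one_div_jb_pow_le' (by positivity) (hs.2.trans hDa) 4) hC.le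
  have e : l * core χ n (D, y, 1 / a) - n (a * (v - 1)) σ / l = (l / ‖y‖ ^ 2 - 1 / l) * n D y
      + 1 / l * (n D y - n D σ) + 1 / l * (n D σ - n (a * (v - 1)) σ) := by rw [hP]; ring
  rw [e]
  refine (abs_add_three _ _ _).trans ?_
  calc _ ≤ 12 / l ^ 2 * (C / (a * δ) ^ 3) + 1 / l ^ 2 * (C / (a * δ) ^ 3)
        + 1 / l ^ 2 * (a * (C / (a * δ) ^ 4)) := by gcongr
    _ = _ := by ring

include hχ hn hB hx in
/-- The advanced potential decays faster than `1 / a` along timelike rays. -/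
lemma adv_timelike {A : ℝ × E3 → ℝ} (hA : AdvFormula χ n A) :
    Tendsto (fun a => a * A (a, a • x)) atTop (𝓝 0) := by
  have hC := hB.pos
  obtain ⟨δ, hδ, hx'⟩ : ∃ δ, 0 < δ ∧ ‖x‖ ≤ 1 - δ := ⟨1 - ‖x‖, by linarith, by linarith⟩
  set I := ∫ l in Ioi (24:ℝ), l ^ (-2 : ℝ) with hI
  have hI0 : 0 ≤ I := setIntegral_nonneg measurableSet_Ioi fun l hl =>
    Real.rpow_nonneg (by have : (24:ℝ) < l := hl; linarith) _
  set K := 24 * (24 * (C / δ ^ 5) * (4 * π)) + (13 * (C / δ ^ 3) + C / δ ^ 4) * (4 * π) * I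
    + 24 * (C / δ ^ 3 * (4 * π)) with hK
  have main : ∀ a, 1 ≤ a → |4 * π * (a * A (a, a • x))| ≤ K / a := by
    intro a ha
    have ha0 : 0 < a := by linarith
    have hsP : |srcP n (a, a • x)| ≤ C / (a * δ) ^ 3 * (4 * π) := by
      rw [srcP_eq]
      refine sphere_integral_abs_le fun σ => (hB.val _ _ (sph_ne σ)).trans ?_
      rw [div_eq_mul_one_div, div_eq_mul_one_div C]
      refine mul_le_mul_of_nonneg_left (one_div_jb_pow_le' (by positivity) ?_ 3) hC.le
      have hin := abs_le.1 (abs_real_inner_le_norm x (σ : E3))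
      rw [norm_sph, mul_one] at hin
      simp only [real_inner_smul_left]
      nlinarith
    rw [hA.rescaled _ ha]
    have b1 : |∫ l in (0:ℝ)..24, a * (a * lightMean (src χ n) ((a, a • x), a * l))|
        ≤ 24 * (24 * (C / δ ^ 5) * (4 * π)) / a := by
      have := intervalIntegral.norm_integral_le_of_norm_le_const (a := (0:ℝ)) (b := 24)
        (f := fun l => a * (a * lightMean (src χ n) ((a, a • x), a * l)))
        (C := 24 * (C / δ ^ 5) * (4 * π) / a) (fun l hl => ?_)
      · rw [Real.norm_eq_abs] at this
        refine this.trans_eq ?_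
        rw [sub_zero, abs_of_pos (by norm_num)]; ring
      · rw [uIoc_of_le (by norm_num)] at hl
        rw [lightMean_timelike hn x ha0 hl.1, norm_mul, Real.norm_eq_abs, Real.norm_eq_abs,
          abs_of_pos ha0]
        have h1 := sphere_integral_abs_le fun σ => time_near hχ hB (x := x) σ ha0 hl.1 hδ hx'
        calc _ ≤ a * (l * (C / (a * δ) ^ 3 / δ ^ 2) * (4 * π)) :=
              mul_le_mul_of_nonneg_left h1 ha0.le
          _ = l * (C / δ ^ 5) * (4 * π) / a * (1 / a) := by field_simp
          _ ≤ 24 * (C / δ ^ 5) * (4 * π) / a * 1 := by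
            have := hl.2
            have : 1 / a ≤ 1 := by rw [div_le_one ha0]; exact ha
            gcongr
          _ = _ := mul_one _
    have b2 : |∫ l in Ioi (24:ℝ), a * (a * lightMean (src χ n) ((a, a • x), a * l)
          - srcP n (a, a • x) / l)| ≤ (13 * (C / δ ^ 3) + C / δ ^ 4) * (4 * π) * I / a := by
      have := norm_integral_le_of_norm_le (μ := volume.restrict (Ioi (24:ℝ)))
        (f := fun l => a * (a * lightMean (src χ n) ((a, a • x), a * l) - srcP n (a, a • x) / l))
        (g := fun l => (13 * (C / δ ^ 3) + C / δ ^ 4) * (4 * π) / a * l ^ (-2 : ℝ))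
        ((integrableOn_Ioi_rpow_of_lt (by norm_num) (by norm_num)).const_mul _)
        ((ae_restrict_iff' measurableSet_Ioi).2 (ae_of_all _ fun l hl => ?_))
      · rw [Real.norm_eq_abs] at this
        refine this.trans_eq ((integral_const_mul _ _).trans ?_)
        rw [hI]; ring
      · have hl : (24:ℝ) < l := hl
        have hl0 : 0 < l := by linarith
        have hi1 : Integrable (fun σ : sphere (0 : E3) 1 => l * core χ n
            (a * (‖x + l • (σ : E3)‖ - 1 - l), x + l • (σ : E3), 1 / a)) sphereMeasure := by
          apply sphere_integrable
          refine continuous_const.mul (continuous_iff_continuousAt.2 fun σ => ?_)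
          have hne : x + l • (σ : E3) ≠ 0 := by
            intro h
            have h2 := congrArg norm (eq_neg_of_add_eq_zero_left h)
            rw [norm_neg, norm_smul, norm_sph, Real.norm_eq_abs, abs_of_pos hl0] at h2
            linarith
          exact ContinuousAt.comp
            (f := fun σ : sphere (0 : E3) 1 =>
              (a * (‖x + l • (σ : E3)‖ - 1 - l), x + l • (σ : E3), 1 / a))
            (core_contDiffAt hχ hn (p := (_, _, _)) hne).continuousAt (by fun_prop)
        have hi2 : Continuous fun σ : sphere (0 : E3) 1 => n (a * (⟪x, (σ : E3)⟫ - 1)) σ := by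
          have := (extQ_smooth hn).continuous.comp
            (f := fun σ : sphere (0 : E3) 1 => (a * (⟪x, (σ : E3)⟫ - 1), (σ : E3))) (by fun_prop)
          simpa only [Function.comp_def, extQ_sph] using this
        have hs : srcP n (a, a • x)
            = ∫ σ : sphere (0 : E3) 1, n (a * (⟪x, (σ : E3)⟫ - 1)) σ ∂sphereMeasure := by
          rw [srcP_eq]; congr 1; ext σ
          simp only [real_inner_smul_left, mul_sub, mul_one]
        rw [lightMean_timelike hn x ha0 hl0, hs, ← integral_div,
          ← integral_sub hi1 (sphere_integrable (hi2.div_const l)), norm_mul, Real.norm_eq_abs,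
          Real.norm_eq_abs, abs_of_pos ha0, rpow_neg_two hl0]
        have h1 := sphere_integral_abs_le fun σ => time_far hχ hn hB (x := x) σ ha hl.le hδ hx'
        calc _ ≤ a * (1 / l ^ 2 * (13 * (C / (a * δ) ^ 3) + a * (C / (a * δ) ^ 4)) * (4 * π)) :=
              mul_le_mul_of_nonneg_left h1 ha0.le
          _ = (13 * (C / δ ^ 3) + C / δ ^ 4) * (4 * π) / a * (1 / l ^ 2) * (1 / a) := by
            field_simp
          _ ≤ (13 * (C / δ ^ 3) + C / δ ^ 4) * (4 * π) / a * (1 / l ^ 2) * 1 := by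
            have : 1 / a ≤ 1 := by rw [div_le_one ha0]; exact ha
            gcongr
          _ = _ := mul_one _
    have b3 : |Real.log (24 * a) * (a * srcP n (a, a • x))| ≤ 24 * (C / δ ^ 3 * (4 * π)) / a := by
      have h1 : Real.log (24 * a) ≤ 24 * a := Real.log_le_self (by positivity)
      rw [abs_mul, abs_mul, abs_of_pos ha0, abs_of_nonneg (Real.log_nonneg (by linarith))]
      calc _ ≤ 24 * a * (a * (C / (a * δ) ^ 3 * (4 * π))) := by gcongr
        _ = _ := by field_simp
    refine (abs_sub _ _).trans ?_
    refine (add_le_add ((abs_add_le _ _).trans (add_le_add b1 b2)) b3).trans_eq ?_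
    rw [hK]; ring
  refine squeeze_zero_norm' (a := fun a => K / (4 * π) / a) ?_
    (tendsto_const_nhds.div_atTop tendsto_id)
  filter_upwards [eventually_ge_atTop 1] with a ha
  have := main a ha
  rw [abs_mul, abs_of_pos (by positivity : 0 < 4 * π), ← le_div_iff₀' (by positivity)] at this
  rw [Real.norm_eq_abs]
  exact this.trans_eq (by ring)
end

/-! ### Moments of the source and the singular angular average -/

lemma weighted_le (s : ℝ) {b : ℝ} (hb : |b| ≤ jb s) {D : ℝ} : b * (D / jb s ^ 3) ≤ |D| * (1 / jb s ^ 2) := by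
  have hj := jb_pos s
  calc b * (D / jb s ^ 3) ≤ |b * (D / jb s ^ 3)| := le_abs_self _
    _ = |b| * (|D| / jb s ^ 3) := by rw [abs_mul, abs_div, abs_of_pos (pow_pos hj 3)]
    _ ≤ jb s * (|D| / jb s ^ 3) := by gcongr
    _ = _ := by field_simp

section
variable {n : ℝ → E3 → ℝ} (hn : SmoothQSphere n) {C : ℝ} (hB : Bd 3 C n)
  {g : ℝ → ℝ} (hg : Measurable g) (hgb : ∀ s, |g s| ≤ jb s)

include hn hB hg hgb in
lemma weighted_integrable {ω : E3} (hω : ω ≠ 0) : Integrable fun s => g s * n s ω := by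
  refine (jb_neg_two_integrable.const_mul |C|).mono'
    (hg.aestronglyMeasurable.mul (continuous_slice hn hω).aestronglyMeasurable)
    (ae_of_all _ fun s => ?_)
  rw [norm_mul, Real.norm_eq_abs, Real.norm_eq_abs]
  refine (mul_le_mul_of_nonneg_left (hB.val s ω hω) (abs_nonneg _)).trans ?_
  exact weighted_le s ((abs_abs _).trans_le (hgb s))

include hn hB hg hgb in
/-- Moments of `n` with weights of linear growth are Lipschitz functions of the direction. -/
lemma weighted_lip (σ σ' : sphere (0 : E3) 1) :
    |(∫ s, g s * n s σ) - ∫ s, g s * n s σ'|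
      ≤ C * (∫ s, 1 / jb s ^ 2) * ‖(σ : E3) - σ'‖ := by
  have hC := hB.pos
  rw [← integral_sub (weighted_integrable hn hB hg hgb (sph_ne σ))
    (weighted_integrable hn hB hg hgb (sph_ne σ'))]
  have h := norm_integral_le_of_norm_le (f := fun s => g s * n s σ - g s * n s σ')
    (jb_neg_two_integrable.const_mul (C * ‖(σ : E3) - σ'‖)) (ae_of_all _ fun s => ?_)
  · refine h.trans_eq ((integral_const_mul _ _).trans ?_)
    ring
  · rw [← mul_sub, norm_mul, Real.norm_eq_abs, Real.norm_eq_abs]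
    refine (mul_le_mul_of_nonneg_left (hB.lip s σ σ' (norm_sph σ) (sph_ne σ'))
      (abs_nonneg _)).trans ?_
    have := weighted_le s (D := C * ‖(σ : E3) - σ'‖) ((abs_abs _).trans_le (hgb s))
    rw [abs_of_nonneg (by positivity : 0 ≤ C * ‖(σ : E3) - σ'‖)] at this
    refine le_trans (le_of_eq ?_) this
    ring

include hn hB hg hgb in
lemma weighted_continuous : Continuous fun σ : sphere (0 : E3) 1 => ∫ s, g s * n s σ := by
  refine (LipschitzWith.of_dist_le_mul
    (K := ⟨C * ∫ s, 1 / jb s ^ 2, mul_nonneg hB.pos.le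
      (integral_nonneg fun s => by have := jb_pos s; positivity)⟩) fun σ σ' => ?_).continuous
  rw [Real.dist_eq, Subtype.dist_eq, dist_eq_norm]
  exact weighted_lip hn hB hg hgb σ σ'

end

section
variable {N : E3 → ℝ} {K : ℝ} (hK : 0 ≤ K)
  (hN : ∀ σ σ' : sphere (0 : E3) 1, |N σ - N σ'| ≤ K * ‖(σ : E3) - σ'‖)

include hK hN in
/-- As `‖σ - ω‖² = 2 (1 - ⟪σ, ω⟫)`, a Lipschitz function makes `(N σ - N ω) / (1 - ⟪σ, ω⟫)` integrable. -/
lemma lip_sqrt (ω σ : sphere (0 : E3) 1) :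
    |N σ - N ω| ≤ 2 * K * √(1 - ⟪(σ : E3), (ω : E3)⟫) := by
  refine (hN σ ω).trans ?_
  have h1 := norm_sub_sq_sph (norm_sph ω) σ
  have h2 := u_nonneg (norm_sph ω) σ
  have h3 : ‖(σ : E3) - ω‖ ≤ 2 * √(1 - ⟪(σ : E3), (ω : E3)⟫) := by
    refine abs_le_of_sq_le_sq' ?_ (by positivity) |>.2
    rw [mul_pow, Real.sq_sqrt h2, h1]; linarith
  calc _ ≤ K * (2 * √(1 - ⟪(σ : E3), (ω : E3)⟫)) := by gcongr
    _ = _ := by ring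

lemma sqrt_mul_inv_le {u : ℝ} (hu : 0 ≤ u) : √u * u⁻¹ = u ^ (-(1/2) : ℝ) := by
  rcases hu.eq_or_lt with rfl | hu
  · simp
  · rw [Real.sqrt_eq_rpow, ← Real.rpow_neg_one, ← Real.rpow_add hu]; norm_num

include hK hN in
lemma lip_continuous : Continuous fun σ : sphere (0 : E3) 1 => N σ := by
  refine (LipschitzWith.of_dist_le_mul (K := ⟨K, hK⟩) fun σ σ' => ?_).continuous
  rw [Real.dist_eq, Subtype.dist_eq, dist_eq_norm]
  exact hN σ σ'

include hK hN in
lemma angular_integrable (ω : sphere (0 : E3) 1) :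
    Integrable (fun σ : sphere (0 : E3) 1 => (N σ - N ω) / (1 - ⟪(σ : E3), (ω : E3)⟫))
      sphereMeasure := by
  have hNc := lip_continuous hK hN
  refine ((sphere_rsqrt_integrable (norm_sph ω)).const_mul (2 * K)).mono' ?_
    (ae_of_all _ fun σ => ?_)
  · exact ((hNc.sub continuous_const).measurable.div
      (by fun_prop : Continuous fun σ : sphere (0 : E3) 1 =>
        1 - ⟪(σ : E3), (ω : E3)⟫).measurable).aestronglyMeasurable
  · have hu := u_nonneg (norm_sph ω) σ
    rw [← sqrt_mul_inv_le hu, Real.norm_eq_abs, abs_div, abs_of_nonneg hu, div_eq_mul_inv,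
      ← mul_assoc]
    exact mul_le_mul_of_nonneg_right (lip_sqrt hK hN ω σ) (inv_nonneg.2 hu)

include hK hN in
/-- The average of the difference quotient of a Lipschitz function is continuous: it is a uniform
limit of averages with regularised kernels, since the regularisation error only depends
on the angle to the pole. -/
lemma angular_continuous : Continuous fun ω : sphere (0 : E3) 1 =>
    ∫ σ : sphere (0 : E3) 1, (N σ - N ω) / (1 - ⟪(σ : E3), (ω : E3)⟫) ∂sphereMeasure := by
  have hNc := lip_continuous hK hN
  set e : ℝ → ℝ → ℝ := fun ε u => 2 * K * (√u * (u⁻¹ - (u + ε)⁻¹)) with he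
  have hem : ∀ ε, Measurable (e ε) := fun ε => by
    rw [he]; fun_prop
  have heb : ∀ ε, 0 < ε → ∀ u, 0 ≤ u → |e ε u| ≤ 2 * K * u ^ (-(1/2) : ℝ) := by
    intro ε hε u hu
    rcases hu.eq_or_lt with rfl | hu
    · simp [he]
    have h1 : (u + ε)⁻¹ ≤ u⁻¹ := inv_anti₀ hu (by linarith)
    have h2 : 0 ≤ (u + ε)⁻¹ := by positivity
    rw [← sqrt_mul_inv_le hu.le, he]
    simp only
    rw [abs_of_nonneg (by have := sub_nonneg.2 h1; positivity)]
    gcongr; linarith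
  have hri : IntervalIntegrable (fun u : ℝ => 2 * K * u ^ (-(1/2) : ℝ)) volume 0 2 :=
    (intervalIntegral.intervalIntegrable_rpow' (by norm_num)).const_mul _
  have hei : ∀ ε, 0 < ε → IntegrableOn (e ε) (Icc 0 2) := by
    intro ε hε
    rw [integrableOn_Icc_iff_integrableOn_Ioc]
    rw [intervalIntegrable_iff_integrableOn_Ioc_of_le (by norm_num)] at hri
    refine hri.mono' (hem ε).aestronglyMeasurable
      ((ae_restrict_iff' measurableSet_Ioc).2 (ae_of_all _ fun u hu => heb ε hε u hu.1.le))
  have hlim : Tendsto (fun ε => 2 * π * ∫ u in (0:ℝ)..2, e ε u) (𝓝[>] 0) (𝓝 0) := by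
    have h := intervalIntegral.tendsto_integral_filter_of_dominated_convergence
      (μ := volume) (a := 0) (b := 2) (l := 𝓝[>] (0:ℝ)) (F := e) (f := fun _ => 0)
      (fun u => 2 * K * u ^ (-(1/2) : ℝ))
      (.of_forall fun ε => (hem ε).aestronglyMeasurable) ?_ hri ?_
    · simpa using h.const_mul (2 * π)
    · filter_upwards [self_mem_nhdsWithin] with ε hε
      refine ae_of_all _ fun u hu => ?_
      rw [uIoc_of_le (by norm_num)] at hu
      exact heb ε hε u hu.1.le
    · refine ae_of_all _ fun u hu => ?_
      rw [uIoc_of_le (by norm_num)] at hu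
      have : ContinuousAt (fun ε => e ε u) 0 := by
        have h0 : u + 0 ≠ 0 := by linarith [hu.1]
        rw [he]
        exact continuousAt_const.mul (continuousAt_const.mul (continuousAt_const.sub
          ((continuousAt_const.add continuousAt_id).inv₀ h0)))
      have h2 := this.tendsto
      simp only [he, add_zero, sub_self, mul_zero] at h2
      exact h2.mono_left nhdsWithin_le_nhds
  have hreg : ∀ ε, 0 < ε → Continuous fun p : sphere (0 : E3) 1 × sphere (0 : E3) 1 =>
      (N p.2 - N p.1) / (1 - ⟪(p.2 : E3), (p.1 : E3)⟫ + ε) := by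
    intro ε hε
    refine Continuous.div ((hNc.comp continuous_snd).sub (hNc.comp continuous_fst))
      (by fun_prop) fun p => ?_
    have := u_nonneg (norm_sph p.1) p.2
    positivity
  refine TendstoUniformly.continuous (p := 𝓝[>] (0:ℝ)) (F := fun ε (ω : sphere (0 : E3) 1) =>
    ∫ σ : sphere (0 : E3) 1, (N σ - N ω) / (1 - ⟪(σ : E3), (ω : E3)⟫ + ε) ∂sphereMeasure) ?_
    (Eventually.frequently ?_)
  · rw [Metric.tendstoUniformly_iff]
    intro δ hδ
    filter_upwards [self_mem_nhdsWithin, (tendsto_order.1 hlim).2 δ hδ] with ε hε hlt ω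
    have hε : 0 < ε := hε
    refine lt_of_le_of_lt ?_ hlt
    have hi2 : Integrable (fun σ : sphere (0 : E3) 1 =>
        (N σ - N ω) / (1 - ⟪(σ : E3), (ω : E3)⟫ + ε)) sphereMeasure :=
      sphere_integrable ((hreg ε hε).comp (by fun_prop :
        Continuous fun σ : sphere (0 : E3) 1 => (ω, σ)))
    rw [Real.dist_eq, ← integral_sub (angular_integrable hK hN ω)
      hi2,
      ← sphere_u_integral (norm_sph ω) (hem ε)]
    rw [← Real.norm_eq_abs]
    refine norm_integral_le_of_norm_le (sphere_u_integrable (norm_sph ω) (hei ε hε))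
      (ae_of_all _ fun σ => ?_)
    have hu := u_nonneg (norm_sph ω) σ
    have hl := lip_sqrt hK hN ω σ
    simp only [he]
    set u := 1 - ⟪(σ : E3), (ω : E3)⟫
    rcases hu.eq_or_lt with h0 | h0
    · rw [← h0, Real.sqrt_zero, mul_zero] at hl
      rw [← h0, abs_nonpos_iff.1 hl]; simp
    · have h1 : (u + ε)⁻¹ ≤ u⁻¹ := inv_anti₀ h0 (by linarith)
      rw [div_eq_mul_inv, div_eq_mul_inv, ← mul_sub, Real.norm_eq_abs, abs_mul,
        abs_of_nonneg (sub_nonneg.2 h1), ← mul_assoc]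
      exact mul_le_mul_of_nonneg_right hl (sub_nonneg.2 h1)
  · filter_upwards [self_mem_nhdsWithin] with ε hε
    have := continuous_parametric_integral_of_continuous (μ := sphereMeasure)
      (f := fun (ω σ : sphere (0 : E3) 1) => (N σ - N ω) / (1 - ⟪(σ : E3), (ω : E3)⟫ + ε))
      (hreg ε hε) (s := univ) isCompact_univ
    simpa using this
end

/-! ### The homogeneous solution carrying the logarithm and the interior profile -/

/-- The profile `-q / ⟨q⟩²`, a primitive of which is `-log ⟨q⟩`. -/
def tail (s : ℝ) : ℝ := -s / (1 + s ^ 2)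

lemma tail_smooth : ContDiff ℝ (⊤ : ℕ∞) tail :=
  contDiff_neg.div (by fun_prop) fun s => by positivity

lemma log_jb (s : ℝ) : Real.log (jb s) = 1 / 2 * Real.log (1 + s ^ 2) := by
  rw [jb, Real.log_sqrt (by positivity)]; ring

lemma log_jb_hasDerivAt (s : ℝ) : HasDerivAt (fun s => Real.log (jb s)) (-tail s) s := by
  have h1 : HasDerivAt (fun s : ℝ => 1 + s ^ 2) (2 * s) s := by
    simpa using (hasDerivAt_pow 2 s).const_add 1
  have h2 := (h1.log (by positivity)).const_mul (1 / 2)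
  have e : (fun s => Real.log (jb s)) = fun s => 1 / 2 * Real.log (1 + s ^ 2) := by
    ext s; exact log_jb s
  rw [e]
  refine h2.congr_deriv ?_
  rw [tail]; ring

lemma abs_tail_le (s : ℝ) : |tail s| ≤ 1 / jb s := by
  have hj := jb_pos s
  rw [tail, ← jb_sq, abs_div, abs_neg, abs_of_pos (pow_pos hj 2), div_le_div_iff₀ (by positivity) hj]
  nlinarith [abs_le_jb s]

/-- The superposition of plane waves with profile `tail` and amplitude `N / 4π`. -/
def tailWave (N : E3 → ℝ) (z : ℝ × E3) : ℝ :=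
  1 / (4 * π) * planeWave (fun σ => N σ) (fun p => tail p.1) z

lemma tailWave_eq (N : E3 → ℝ) (z : ℝ × E3) : tailWave N z
    = 1 / (4 * π) * ∫ σ : sphere (0 : E3) 1, N σ * tail (⟪z.2, (σ : E3)⟫ - z.1) ∂sphereMeasure := rfl

lemma ray_phase (ω σ : E3) (r q : ℝ) :
    ⟪r • ω, σ⟫ - (r - q) = q - r * (1 - ⟪σ, ω⟫) := by
  rw [real_inner_smul_left, real_inner_comm]; ring

lemma tail_scaled {r : ℝ} (hr : 0 < r) (b : ℝ) :
    r * tail (r * b) = -b / ((1 / r) ^ 2 + b ^ 2) := by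
  have h1 : 0 < 1 + (r * b) ^ 2 := by positivity
  have h2 : (0:ℝ) < (1 / r) ^ 2 + b ^ 2 := by positivity
  rw [tail, mul_div_assoc', div_eq_div_iff h1.ne' h2.ne']
  field_simp

/-- Away from the pole the scaled profile tends to the kernel `1 / (1 - ⟪σ, ω⟫)`. -/
lemma tail_tendsto (q : ℝ) {u : ℝ} (hu : 0 < u) :
    Tendsto (fun r => r * tail (q - r * u)) atTop (𝓝 (1 / u)) := by
  have h0 : Tendsto (fun r : ℝ => 1 / r) atTop (𝓝 0) := tendsto_const_nhds.div_atTop tendsto_id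
  have hb : Tendsto (fun r : ℝ => q * (1 / r) - u) atTop (𝓝 (q * 0 - u)) :=
    (h0.const_mul q).sub_const u
  have h := hb.neg.div ((h0.pow 2).add (hb.pow 2)) (by
    have : (0:ℝ) < 0 ^ 2 + (q * 0 - u) ^ 2 := by
      rw [mul_zero, zero_sub, neg_sq]; positivity
    exact this.ne')
  have e : -(q * 0 - u) / (0 ^ 2 + (q * 0 - u) ^ 2) = 1 / u := by
    field_simp; ring
  rw [e] at h
  refine h.congr' ?_
  filter_upwards [eventually_gt_atTop 0] with r hr
  have := tail_scaled hr (q * (1 / r) - u)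
  rw [show r * (q * (1 / r) - u) = q - r * u by field_simp] at this
  exact this.symm

lemma log_jb_tendsto (q : ℝ) :
    Tendsto (fun r : ℝ => Real.log (jb (q - 2 * r)) - Real.log (2 * r)) atTop (𝓝 0) := by
  have h0 : Tendsto (fun r : ℝ => 1 / r) atTop (𝓝 0) := tendsto_const_nhds.div_atTop tendsto_id
  have h1 : Tendsto (fun r : ℝ => (1 / r) ^ 2 / 4 + (q / 2 * (1 / r) - 1) ^ 2) atTop
      (𝓝 (0 ^ 2 / 4 + (q / 2 * 0 - 1) ^ 2)) :=
    ((h0.pow 2).div_const 4).add (((h0.const_mul _).sub_const 1).pow 2)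
  have h2 := (h1.log (by norm_num)).const_mul (1 / 2)
  have e : 1 / 2 * Real.log (0 ^ 2 / 4 + (q / 2 * 0 - 1) ^ 2) = 0 := by norm_num
  rw [e] at h2
  refine h2.congr' ?_
  filter_upwards [eventually_gt_atTop 0] with r hr
  rw [log_jb, show (1 / r) ^ 2 / 4 + (q / 2 * (1 / r) - 1) ^ 2 = (1 + (q - 2 * r) ^ 2) / (2 * r) ^ 2 by
    field_simp; ring, Real.log_div (by positivity) (by positivity), Real.log_pow]
  push_cast; ring

section
variable {N : E3 → ℝ} {K : ℝ} (hK : 0 ≤ K)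
  (hN : ∀ σ σ' : sphere (0 : E3) 1, |N σ - N σ'| ≤ K * ‖(σ : E3) - σ'‖)

include hK hN in
/-- The amplitude is split as `N σ = (N σ - N ω) + N ω`: for the first part the singular kernel in
the limit is integrable and dominated convergence applies, the second part is computed explicitly by
the hat-box theorem. -/
lemma tailWave_outgoing (ω : sphere (0 : E3) 1) (q : ℝ) :
    Tendsto (fun r => r * tailWave N (r - q, r • (ω : E3)) - 1 / 2 * N ω * Real.log (2 * r)) atTop
      (𝓝 (1 / (4 * π) * (∫ σ : sphere (0 : E3) 1, (N σ - N ω) / (1 - ⟪(σ : E3), (ω : E3)⟫)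
        ∂sphereMeasure) - 1 / 2 * N ω * Real.log (jb q))) := by
  have hNc := lip_continuous hK hN
  have hω := norm_sph ω
  have hdct : Tendsto (fun r => ∫ σ : sphere (0 : E3) 1,
      (N σ - N ω) * (r * tail (q - r * (1 - ⟪(σ : E3), (ω : E3)⟫))) ∂sphereMeasure) atTop
      (𝓝 (∫ σ : sphere (0 : E3) 1, (N σ - N ω) / (1 - ⟪(σ : E3), (ω : E3)⟫) ∂sphereMeasure)) := by
    refine tendsto_integral_filter_of_dominated_convergence
      (fun σ => 2 * K * (2 + |q|) * (1 - ⟪(σ : E3), (ω : E3)⟫) ^ (-(1/2) : ℝ)) ?_ ?_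
      ((sphere_rsqrt_integrable hω).const_mul _) ?_
    · refine .of_forall fun r => Continuous.aestronglyMeasurable ?_
      exact (hNc.sub continuous_const).mul (continuous_const.mul
        (tail_smooth.continuous.comp (by fun_prop)))
    · filter_upwards [eventually_ge_atTop 0] with r hr
      refine ae_of_all _ fun σ => ?_
      have hu := u_nonneg hω σ
      have hl := lip_sqrt hK hN ω σ
      set u := 1 - ⟪(σ : E3), (ω : E3)⟫
      rw [norm_mul, Real.norm_eq_abs, Real.norm_eq_abs, ← sqrt_mul_inv_le hu]
      rcases hu.eq_or_lt with h0 | h0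
      · rw [← h0, Real.sqrt_zero, mul_zero] at hl
        rw [abs_nonpos_iff.1 hl, ← h0]; simp
      · have h1 : |r * tail (q - r * u)| ≤ (2 + |q|) * u⁻¹ := by
          have h2 := abs_tail_le (q - r * u)
          have h3 := peetre q (r * u)
          have h4 := jb_pos (q - r * u)
          rw [abs_mul, abs_of_nonneg hr, ← div_eq_mul_inv, le_div_iff₀ h0]
          rw [abs_of_nonneg (by positivity)] at h3
          calc r * |tail (q - r * u)| * u ≤ r * (1 / jb (q - r * u)) * u := by gcongr
            _ = r * u / jb (q - r * u) := by ring
            _ ≤ 2 + |q| := by rw [div_le_iff₀ h4]; linarith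
        calc _ ≤ 2 * K * √u * ((2 + |q|) * u⁻¹) := by gcongr
          _ = _ := by ring
    · filter_upwards [ae_u_pos hω] with σ hσ
      have := (tail_tendsto q hσ).const_mul (N σ - N ω)
      rwa [mul_one_div] at this
  have hmain : ∀ r, 0 < r → r * tailWave N (r - q, r • (ω : E3))
      = 1 / (4 * π) * (∫ σ : sphere (0 : E3) 1,
        (N σ - N ω) * (r * tail (q - r * (1 - ⟪(σ : E3), (ω : E3)⟫))) ∂sphereMeasure)
        + 1 / 2 * N ω * (Real.log (jb (q - 2 * r)) - Real.log (jb q)) := by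
    intro r hr
    have e1 : ∫ σ : sphere (0 : E3) 1, tail (q - r * (1 - ⟪(σ : E3), (ω : E3)⟫)) ∂sphereMeasure
        = 2 * π * (r⁻¹ * (Real.log (jb (q - 2 * r)) - Real.log (jb q))) := by
      rw [sphere_u_integral (g := fun u => tail (q - r * u)) hω
        (tail_smooth.continuous.comp (by fun_prop)).measurable,
        intervalIntegral.integral_comp_sub_mul (fun s => tail s) hr.ne']
      have := intervalIntegral.integral_eq_sub_of_hasDerivAt (a := q - r * 2) (b := q - r * 0)
        (fun s _ => (log_jb_hasDerivAt s).neg)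
        (by simpa using tail_smooth.continuous.intervalIntegrable _ _)
      simp only [neg_neg] at this
      rw [this, smul_eq_mul, mul_zero, sub_zero, mul_comm r 2]
      simp only [Pi.neg_apply]
      ring
    have hc : Continuous fun σ : sphere (0 : E3) 1 =>
        tail (q - r * (1 - ⟪(σ : E3), (ω : E3)⟫)) := tail_smooth.continuous.comp (by fun_prop)
    have e2 : ∫ σ : sphere (0 : E3) 1, N σ * tail (q - r * (1 - ⟪(σ : E3), (ω : E3)⟫)) ∂sphereMeasure
        = r⁻¹ * (∫ σ : sphere (0 : E3) 1,
          (N σ - N ω) * (r * tail (q - r * (1 - ⟪(σ : E3), (ω : E3)⟫))) ∂sphereMeasure)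
          + N ω * ∫ σ : sphere (0 : E3) 1, tail (q - r * (1 - ⟪(σ : E3), (ω : E3)⟫)) ∂sphereMeasure := by
      rw [← integral_const_mul, ← integral_const_mul, ← integral_add]
      · congr 1; ext σ; field_simp; ring
      · exact (sphere_integrable ((hNc.sub continuous_const).mul (continuous_const.mul hc))).const_mul _
      · exact (sphere_integrable hc).const_mul _
    rw [tailWave_eq]
    simp only [ray_phase]
    rw [e2, e1]
    field_simp
    ring
  have h := (hdct.const_mul (1 / (4 * π))).add
    (((log_jb_tendsto q).sub_const (Real.log (jb q))).const_mul (1 / 2 * N ω))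
  rw [zero_sub, mul_neg, ← sub_eq_add_neg] at h
  refine h.congr' ?_
  filter_upwards [eventually_gt_atTop 0] with r hr
  rw [hmain r hr]; ring

include hK hN in
lemma tailWave_timelike {x : E3} (hx : ‖x‖ < 1) :
    Tendsto (fun a => a * tailWave N (a, a • x)) atTop
      (𝓝 (1 / (4 * π) * ∫ σ : sphere (0 : E3) 1, N σ / (1 - ⟪(σ : E3), x⟫) ∂sphereMeasure)) := by
  have hNc := lip_continuous hK hN
  have hpos : ∀ σ : sphere (0 : E3) 1, 1 - ‖x‖ ≤ 1 - ⟪(σ : E3), x⟫ := fun σ => by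
    have := (abs_le.1 (abs_real_inner_le_norm (σ : E3) x)).2
    rw [norm_sph, one_mul] at this
    linarith
  have hdct : Tendsto (fun a => ∫ σ : sphere (0 : E3) 1,
      N σ * (a * tail (0 - a * (1 - ⟪(σ : E3), x⟫))) ∂sphereMeasure) atTop
      (𝓝 (∫ σ : sphere (0 : E3) 1, N σ / (1 - ⟪(σ : E3), x⟫) ∂sphereMeasure)) := by
    refine tendsto_integral_filter_of_dominated_convergence
      (fun σ => |N σ| * (1 / (1 - ‖x‖))) ?_ ?_ (sphere_integrable (hNc.abs.mul continuous_const)) ?_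
    · refine .of_forall fun r => Continuous.aestronglyMeasurable ?_
      exact hNc.mul (continuous_const.mul (tail_smooth.continuous.comp (by fun_prop)))
    · filter_upwards [eventually_gt_atTop 0] with a ha
      refine ae_of_all _ fun σ => ?_
      rw [norm_mul, Real.norm_eq_abs, Real.norm_eq_abs]
      refine mul_le_mul_of_nonneg_left ?_ (abs_nonneg _)
      have hu := hpos σ
      set u := 1 - ⟪(σ : E3), x⟫
      have hx0 : 0 < 1 - ‖x‖ := by linarith
      have hu0 : 0 < u := by linarith
      have h1 := abs_tail_le (0 - a * u)
      have h2 := abs_le_jb (0 - a * u)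
      rw [zero_sub, abs_neg, abs_of_pos (by positivity), ← zero_sub] at h2
      rw [abs_mul, abs_of_pos ha]
      calc a * |tail (0 - a * u)| ≤ a * (1 / (a * u)) := by
            refine mul_le_mul_of_nonneg_left (h1.trans ?_) ha.le
            exact one_div_le_one_div_of_le (by positivity) h2
        _ = 1 / u := by field_simp
        _ ≤ _ := one_div_le_one_div_of_le hx0 hu
    · refine ae_of_all _ fun σ => ?_
      have := (tail_tendsto 0 (u := 1 - ⟪(σ : E3), x⟫) (by linarith [hpos σ])).const_mul (N σ)
      rwa [mul_one_div] at this
  refine (hdct.const_mul (1 / (4 * π))).congr fun a => ?_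
  rw [tailWave_eq]
  have e : ∀ σ : E3, ⟪a • x, σ⟫ - a = 0 - a * (1 - ⟪σ, x⟫) := fun σ => by
    rw [real_inner_smul_left, real_inner_comm]; ring
  simp only [e]
  rw [mul_left_comm, ← integral_const_mul a]
  refine congrArg _ (integral_congr_ae (ae_of_all _ fun σ => ?_))
  simp only
  ring

end

/-! ### Homogeneous solutions with a prescribed decaying radiation field -/

section
variable {Fd : ℝ → sphere (0 : E3) 1 → ℝ}
  (hc : Continuous fun p : ℝ × sphere (0 : E3) 1 => Fd p.1 p.2)
  {C : ℝ} (hC : 0 ≤ C) (hd : ∀ s, s ≤ -2 → ∀ σ, |Fd s σ| ≤ C * (1 / jb s ^ 2))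

include hc hC hd in
lemma profile_bound (Q : ℝ) : ∃ B, 0 < B ∧ ∀ s, s ≤ Q → ∀ σ, |Fd s σ| ≤ B * (1 / jb s ^ 2) := by
  have hg : Continuous fun p : ℝ × sphere (0 : E3) 1 => |Fd p.1 p.2| * jb p.1 ^ 2 :=
    hc.abs.mul ((jb_smooth.continuous.comp continuous_fst).pow 2)
  obtain ⟨B, hB⟩ := ((isCompact_Icc (a := (-2:ℝ)) (b := Q)).prod
    (isCompact_univ (X := sphere (0 : E3) 1))).bddAbove_image hg.continuousOn
  refine ⟨C + |B| + 1, by positivity, fun s hs σ => ?_⟩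
  have hj : 0 < jb s ^ 2 := pow_pos (jb_pos s) 2
  rcases le_total s (-2) with h | h
  · exact (hd s h σ).trans (mul_le_mul_of_nonneg_right (by have := abs_nonneg B; linarith)
      (by positivity))
  · have := hB (mem_image_of_mem _ (show (s, σ) ∈ Icc (-2:ℝ) Q ×ˢ univ from ⟨⟨h, hs⟩, mem_univ _⟩))
    rw [mul_one_div, le_div_iff₀ hj]
    refine this.trans ?_
    have := le_abs_self B
    linarith

include hc hC hd in
/-- The superposition of plane waves with profile `∂_q F` has radiation field `2π F`. -/
lemma profile_outgoing (ω : sphere (0 : E3) 1) (q : ℝ) {F : ℝ → ℝ}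
    (hF : ∀ s, HasDerivAt F (Fd s ω) s) (hF0 : Tendsto F atBot (𝓝 0)) :
    Tendsto (fun r => r * ∫ σ : sphere (0 : E3) 1, Fd (q - r * (1 - ⟪(σ : E3), (ω : E3)⟫)) σ
      ∂sphereMeasure) atTop (𝓝 (2 * π * F q)) := by
  obtain ⟨B, hB0, hB⟩ := profile_bound hc hC hd q
  have hb : ∀ w, 0 ≤ w → ∀ σ, |Fd (q - w) σ| ≤ B * (2 + |q|) ^ 2 * (1 + 1 * w) ^ (-2 : ℝ) := by
    intro w hw σ
    have h := one_div_jb_pow_le (q := q) (d := q - w) hw (by linarith) (le_refl 2)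
    rw [one_mul, rpow_neg_two (by linarith), mul_assoc, mul_one_div]
    exact (hB _ (by linarith) σ).trans (mul_le_mul_of_nonneg_left h hB0.le)
  have h := conc (ω := ω) (Ψ := fun _ w σ => Fd (q - w) σ) (C := B * (2 + |q|) ^ 2) (c := 1)
    (r₀ := 0) (hc.comp (by fun_prop :
      Continuous fun p : ℝ × ℝ × sphere (0 : E3) 1 => (q - p.2.1, p.2.2)))
    (by positivity) one_pos
    (fun r hr σ => hb _ (mul_nonneg hr (u_nonneg (norm_sph ω) σ)) σ) (fun w hw => hb w hw ω)
  have e : ∫ w in Ioi (0:ℝ), Fd (q - w) ω = F q := by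
    have h1 := integral_ray (fun s => Fd s ω) q one_pos
    simp only [one_mul, inv_one] at h1
    rw [h1]
    have hi : IntegrableOn (fun s => Fd s ω) (Iic q) := by
      refine ((jb_neg_two_integrable.const_mul B).integrableOn).mono'
        (hc.comp (by fun_prop : Continuous fun s : ℝ => (s, ω))).aestronglyMeasurable
        ((ae_restrict_iff' measurableSet_Iic).2 (ae_of_all _ fun s hs => hB s hs ω))
    rw [integral_Iic_of_hasDerivAt_of_tendsto' (fun s _ => hF s) hi hF0, sub_zero]
  rwa [e] at h

include hC hd in
/-- On timelike rays the profile is evaluated at arguments below a negative multiple of `a`, where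
it is of size `a⁻²`. -/
lemma profile_timelike {x : E3} (hx : ‖x‖ < 1) :
    Tendsto (fun a => a * ∫ σ : sphere (0 : E3) 1, Fd (a * (⟪x, (σ : E3)⟫ - 1)) σ ∂sphereMeasure)
      atTop (𝓝 0) := by
  set δ := 1 - ‖x‖ with hδ
  have hδ0 : 0 < δ := by linarith
  refine squeeze_zero_norm' (a := fun a => C * (1 / δ ^ 2) * (4 * π) / a) ?_
    (tendsto_const_nhds.div_atTop tendsto_id)
  filter_upwards [eventually_ge_atTop (2 / δ)] with a ha
  have ha0 : 0 < a := lt_of_lt_of_le (by positivity) ha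
  rw [div_le_iff₀ hδ0] at ha
  have h := sphere_integral_abs_le (f := fun σ : sphere (0 : E3) 1 => Fd (a * (⟪x, (σ : E3)⟫ - 1)) σ)
    (B := C * (1 / (a * δ) ^ 2)) fun σ => by
      have hv := (abs_le.1 (abs_real_inner_le_norm x (σ : E3))).2
      rw [norm_sph, mul_one] at hv
      have hs : a * (⟪x, (σ : E3)⟫ - 1) ≤ -(a * δ) := by
        have := mul_le_mul_of_nonneg_left (show ⟪x, (σ : E3)⟫ - 1 ≤ -δ by linarith) ha0.le
        linarith
      exact (hd _ (by linarith) σ).trans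
        (mul_le_mul_of_nonneg_left (one_div_jb_pow_le' (by positivity) hs 2) hC)
  rw [norm_mul, Real.norm_eq_abs, Real.norm_eq_abs, abs_of_pos ha0]
  refine (mul_le_mul_of_nonneg_left h ha0.le).trans_eq ?_
  field_simp
end

/-! ### The correction of the radiation field -/

lemma massL_integral {n : ℝ → E3 → ℝ} (s : ℝ) (ω : E3) :
    massL n s ω = ∫ τ, (Iic s).indicator (fun _ => (1:ℝ)) τ * n τ ω := by
  rw [massL, ← integral_indicator measurableSet_Iic]
  congr 1; ext τ
  by_cases h : τ ∈ Iic s <;> simp [h]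

lemma abs_indicator_one_le_jb (s τ : ℝ) : |(Iic s).indicator (fun _ => (1:ℝ)) τ| ≤ jb τ := by
  have := one_le_jb τ
  by_cases h : τ ∈ Iic s <;> simp [h] <;> linarith

lemma jb_anti {s τ : ℝ} (h : τ ≤ s) (hs : s ≤ 0) : jb s ≤ jb τ :=
  Real.sqrt_le_sqrt (by nlinarith)

/-- The primitive of `extQ n` in the first variable vanishing at `0`. -/
def primQ (n : ℝ → E3 → ℝ) (p : ℝ × E3) : ℝ := p.1 * ∫ θ in (0:ℝ)..1, extQ n (θ * p.1, p.2)

lemma primQ_smooth {n : ℝ → E3 → ℝ} (hn : SmoothQSphere n) : ContDiff ℝ (⊤ : ℕ∞) (primQ n) :=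
  contDiff_fst.mul (smooth_integral01
    (G := fun p : (ℝ × E3) × ℝ => extQ n (p.2 * p.1.1, p.1.2)) ((extQ_smooth hn).comp (by fun_prop)))

section
variable {n : ℝ → E3 → ℝ} (hn : SmoothQSphere n) {C : ℝ} (hB : Bd 3 C n)

include hn hB in
lemma massL_primQ (s : ℝ) (σ : sphere (0 : E3) 1) : massL n s σ = massL n 0 σ + primQ n (s, σ) := by
  have hi := hB.integrable hn (by norm_num) (sph_ne σ)
  have h := intervalIntegral.integral_Iic_sub_Iic (f := fun τ => n τ σ) (a := 0) (b := s)
    (μ := volume) hi.integrableOn hi.integrableOn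
  have h2 : primQ n (s, σ) = ∫ τ in (0:ℝ)..s, n τ σ := by
    rw [primQ]
    simp only [extQ_sph]
    have := intervalIntegral.smul_integral_comp_mul_right (a := 0) (b := 1) (fun τ => n τ (σ : E3)) s
    rwa [zero_mul, one_mul, smul_eq_mul] at this
  rw [h2, ← h, massL, massL]; ring

include hn hB in
lemma massL_hasDerivAt (s : ℝ) (σ : sphere (0 : E3) 1) :
    HasDerivAt (fun s => massL n s σ) (n s σ) s := by
  have hi := hB.integrable hn (by norm_num) (sph_ne σ)
  have e : (fun s => massL n s σ) = fun s => massL n 0 σ + ∫ τ in (0:ℝ)..s, n τ σ := by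
    ext s
    rw [← intervalIntegral.integral_Iic_sub_Iic hi.integrableOn hi.integrableOn, massL, massL]
    ring
  rw [e]
  have hcs := continuous_slice hn (sph_ne σ)
  exact (intervalIntegral.integral_hasDerivAt_right (hcs.intervalIntegrable _ _)
    (hcs.stronglyMeasurableAtFilter _ _) hcs.continuousAt).const_add _

include hn hB in
lemma massL_continuous (s : ℝ) : Continuous fun σ : sphere (0 : E3) 1 => massL n s σ := by
  simp only [massL_integral]
  exact weighted_continuous hn hB (measurable_const.indicator measurableSet_Iic)
    (abs_indicator_one_le_jb s)

include hB in
/-- The mass near `q = -∞` decays. -/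
lemma abs_massL_le {s : ℝ} (hs : s ≤ 0) (σ : sphere (0 : E3) 1) :
    |massL n s σ| ≤ C * (∫ τ, 1 / jb τ ^ 2) * (1 / jb s) := by
  have hC := hB.pos
  have hj := jb_pos s
  rw [massL_integral]
  have h := norm_integral_le_of_norm_le
    (f := fun τ => (Iic s).indicator (fun _ => (1:ℝ)) τ * n τ (σ : E3))
    (jb_neg_two_integrable.const_mul (C * (1 / jb s))) (ae_of_all _ fun τ => ?_)
  · refine h.trans_eq ((integral_const_mul _ _).trans ?_)
    ring
  · have hjt := jb_pos τ
    by_cases h : τ ∈ Iic s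
    · rw [indicator_of_mem h, one_mul]
      refine (hB.val τ σ (sph_ne σ)).trans ?_
      have := one_div_le_one_div_of_le hj (jb_anti h hs)
      calc C / jb τ ^ 3 = C * (1 / jb τ) * (1 / jb τ ^ 2) := by field_simp
        _ ≤ _ := by gcongr
    · rw [indicator_of_notMem h, zero_mul, norm_zero]; positivity

end

lemma deriv_tail (s : ℝ) : HasDerivAt tail ((s ^ 2 - 1) / (1 + s ^ 2) ^ 2) s := by
  have h1 : HasDerivAt (fun s : ℝ => 1 + s ^ 2) (2 * s) s := by
    simpa using (hasDerivAt_pow 2 s).const_add 1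
  have := (hasDerivAt_id s).neg.div h1 (by positivity)
  refine this.congr_deriv ?_
  simp only [id, Pi.neg_apply]
  congr 1; ring

lemma abs_deriv_tail_le (s : ℝ) : |(s ^ 2 - 1) / (1 + s ^ 2) ^ 2| ≤ 1 / jb s ^ 2 := by
  rw [jb_sq, abs_div, abs_of_pos (by positivity : 0 < (1 + s ^ 2) ^ 2),
    div_le_div_iff₀ (by positivity) (by positivity)]
  have : |s ^ 2 - 1| ≤ 1 + s ^ 2 := by rw [abs_le]; constructor <;> nlinarith [sq_nonneg s]
  nlinarith [sq_nonneg s]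

lemma log_jb_le (s : ℝ) : |Real.log 2 - Real.log (jb s)| ≤ jb s := by
  have h1 := Real.log_nonneg (one_le_jb s)
  have h2 := Real.log_le_sub_one_of_pos (jb_pos s)
  have h3 := Real.log_pos one_lt_two
  have h4 := Real.log_two_lt_d9
  have h5 := one_le_jb s
  rw [abs_le]; constructor <;> linarith

lemma jb_tendsto : Tendsto jb atBot atTop := by
  refine tendsto_atTop_mono (fun s => (neg_le_abs s).trans (abs_le_jb s)) tendsto_neg_atBot_atTop

lemma one_div_jb_tendsto : Tendsto (fun s => 1 / jb s) atBot (𝓝 0) :=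
  tendsto_const_nhds.div_atTop jb_tendsto

lemma log_div_jb_tendsto :
    Tendsto (fun s => |Real.log 2 - Real.log (jb s)| * (1 / jb s)) atBot (𝓝 0) := by
  have h1 : Tendsto (fun x : ℝ => Real.log x / x) atTop (𝓝 0) := by
    simpa using Real.tendsto_pow_log_div_mul_add_atTop 1 0 1 one_ne_zero
  have h2 := ((one_div_jb_tendsto.const_mul (Real.log 2)).sub (h1.comp jb_tendsto)).abs
  rw [mul_zero, sub_zero, abs_zero] at h2
  refine h2.congr fun s => ?_
  have := jb_pos s
  rw [Function.comp, mul_one_div, ← sub_div, abs_div, abs_of_pos this, mul_one_div]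

section
variable {n : ℝ → E3 → ℝ} (hn : SmoothQSphere n) {C : ℝ} (hB : Bd 3 C n)
  {f : ℝ → ℝ} (hf : IsCutNeg f) {h : ℝ → E3 → ℝ} (hh : SmoothQSphere h) {C' : ℝ} (hB' : Bd 2 C' h)
  {b₀ b₁ : sphere (0 : E3) 1 → ℝ} (hb₀ : Continuous b₀) (hb₁ : Continuous b₁)

/-- The part of the correction profile with smooth dependence on all variables. -/
def corrS (n h : ℝ → E3 → ℝ) (p : ℝ × E3) : ℝ :=
  dd (1, 0) (extQ h) p - 1 / 2 * (extQ n p * (Real.log 2 - Real.log (jb p.1)))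
    - 1 / 2 * (tail p.1 * primQ n p)

/-- The derivative in `s` of the correction `corr`. -/
def corrD (n h : ℝ → E3 → ℝ) (f : ℝ → ℝ) (b₀ b₁ : sphere (0 : E3) 1 → ℝ) (s : ℝ)
    (σ : sphere (0 : E3) 1) : ℝ :=
  b₀ σ * deriv f s + b₁ σ * deriv (fun s => -tail s * f s) s + massL n 0 σ * (-(1 / 2) * tail s)
    + 1 * corrS n h (s, σ)

/-- The radiation field of the correction: what remains of the prescribed field once the
contributions of the advanced potential and of `tailWave` are subtracted. Here `h` is the free datum,
`f` the cutoff, and `b₀`, `b₁` are the coefficients of `1` and `s / ⟨s⟩²`. -/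
def corr (n h : ℝ → E3 → ℝ) (f : ℝ → ℝ) (b₀ b₁ : sphere (0 : E3) 1 → ℝ) (s : ℝ)
    (σ : sphere (0 : E3) 1) : ℝ :=
  b₀ σ * (f s - 1) + b₁ σ * (-tail s * f s) + h s σ
    - 1 / 2 * (massL n s σ * (Real.log 2 - Real.log (jb s)))

/-- The superposition of plane waves with profile `corrD / 2π`. -/
def corrWave (n h : ℝ → E3 → ℝ) (f : ℝ → ℝ) (b₀ b₁ : sphere (0 : E3) 1 → ℝ) (z : ℝ × E3) : ℝ :=
  1 / (2 * π) * (planeWave b₀ (fun p => deriv f p.1) z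
    + (planeWave b₁ (fun p => deriv (fun s => -tail s * f s) p.1) z
    + (planeWave (fun σ => massL n 0 σ) (fun p => -(1 / 2) * tail p.1) z
    + planeWave (fun _ => 1) (corrS n h) z)))

lemma smooth_deriv {g : ℝ → ℝ} (hg : ContDiff ℝ (⊤ : ℕ∞) g) : ContDiff ℝ (⊤ : ℕ∞) (deriv g) :=
  (contDiff_infty_iff_deriv.1 hg).2

include hn hh in
lemma corrS_smooth : ContDiff ℝ (⊤ : ℕ∞) (corrS n h) := by
  have hl : ContDiff ℝ (⊤ : ℕ∞) fun p : ℝ × E3 => Real.log (jb p.1) :=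
    (jb_smooth.comp contDiff_fst).log fun p => (jb_pos _).ne'
  exact ((dd_smooth (extQ_smooth hh) _).sub (contDiff_const.mul ((extQ_smooth hn).mul
    (contDiff_const.sub hl)))).sub (contDiff_const.mul ((tail_smooth.comp contDiff_fst).mul
      (primQ_smooth hn)))

include hf in
lemma cut_deriv_smooth : ContDiff ℝ (⊤ : ℕ∞) (deriv fun s => -tail s * f s) :=
  smooth_deriv (tail_smooth.neg.mul hf.1)

include hn hB hf hh hb₀ hb₁ in
lemma corrWave_smooth : ContDiff ℝ (⊤ : ℕ∞) (corrWave n h f b₀ b₁) :=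
  contDiff_const.mul ((planeWave_smooth hb₀ ((smooth_deriv hf.1).comp contDiff_fst)).add
    ((planeWave_smooth hb₁ ((cut_deriv_smooth hf).comp contDiff_fst)).add
    ((planeWave_smooth (massL_continuous hn hB 0)
      (contDiff_const.mul (tail_smooth.comp contDiff_fst))).add
    (planeWave_smooth continuous_const (corrS_smooth hn hh)))))

include hn hB hf hh hb₀ hb₁ in
lemma corrWave_box (z) : box (corrWave n h f b₀ b₁) z = 0 := by
  have s0 := (smooth_deriv hf.1).comp (contDiff_fst (𝕜 := ℝ) (E := ℝ) (F := E3))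
  have s1 := (cut_deriv_smooth hf).comp (contDiff_fst (𝕜 := ℝ) (E := ℝ) (F := E3))
  have s2 : ContDiff ℝ (⊤ : ℕ∞) fun p : ℝ × E3 => -(1 / 2) * tail p.1 :=
    contDiff_const.mul (tail_smooth.comp contDiff_fst)
  have s3 := corrS_smooth hn hh
  have hm := massL_continuous hn hB 0
  have w0 := planeWave_smooth hb₀ s0
  have w1 := planeWave_smooth hb₁ s1
  have w2 := planeWave_smooth hm s2
  have w3 := planeWave_smooth (b := fun _ => 1) continuous_const s3
  have e := box_const_mul (w0.add (w1.add (w2.add w3))) (1 / (2 * π)) z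
  refine e.trans (mul_eq_zero_of_right _ ((box_add w0 (w1.add (w2.add w3)) z).trans ?_))
  rw [planeWave_box hb₀ s0, zero_add]
  refine (box_add w1 (w2.add w3) z).trans ?_
  rw [planeWave_box hb₁ s1, zero_add]
  refine (box_add w2 w3 z).trans ?_
  rw [planeWave_box hm s2, planeWave_box continuous_const s3, add_zero]

include hn hB hf hh hb₀ hb₁ in
lemma corrD_continuous :
    Continuous fun p : ℝ × sphere (0 : E3) 1 => corrD n h f b₀ b₁ p.1 p.2 := by
  have c1 := (smooth_deriv hf.1).continuous
  have c2 := (cut_deriv_smooth hf).continuous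
  have c3 := tail_smooth.continuous
  have c4 := massL_continuous hn hB 0
  have c5 := (corrS_smooth hn hh).continuous
  unfold corrD
  refine (((hb₀.comp continuous_snd).mul (c1.comp continuous_fst)).add
    ((hb₁.comp continuous_snd).mul (c2.comp continuous_fst))).add
    ((c4.comp continuous_snd).mul (continuous_const.mul (c3.comp continuous_fst))) |>.add
    (continuous_const.mul (c5.comp (by fun_prop)))

include hn hB hf hh hb₀ hb₁ in
lemma corrWave_eq (z : ℝ × E3) : corrWave n h f b₀ b₁ z = 1 / (2 * π) *
    ∫ σ : sphere (0 : E3) 1, corrD n h f b₀ b₁ (⟪z.2, (σ : E3)⟫ - z.1) σ ∂sphereMeasure := by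
  have c1 := (smooth_deriv hf.1).continuous
  have c2 := (cut_deriv_smooth hf).continuous
  have c3 := tail_smooth.continuous
  have c4 := massL_continuous hn hB 0
  have c5 := (corrS_smooth hn hh).continuous
  have hp : Continuous fun σ : sphere (0 : E3) 1 => ⟪z.2, (σ : E3)⟫ - z.1 := by fun_prop
  have i1 : Integrable (fun σ : sphere (0 : E3) 1 => b₀ σ * deriv f (⟪z.2, (σ : E3)⟫ - z.1))
      sphereMeasure := sphere_integrable (hb₀.mul (c1.comp hp))
  have i2 : Integrable (fun σ : sphere (0 : E3) 1 => b₁ σ * deriv (fun s => -tail s * f s)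
      (⟪z.2, (σ : E3)⟫ - z.1)) sphereMeasure := sphere_integrable (hb₁.mul (c2.comp hp))
  have i3 : Integrable (fun σ : sphere (0 : E3) 1 => massL n 0 σ *
      (-(1 / 2) * tail (⟪z.2, (σ : E3)⟫ - z.1))) sphereMeasure :=
    sphere_integrable (c4.mul (continuous_const.mul (c3.comp hp)))
  have i4 : Integrable (fun σ : sphere (0 : E3) 1 =>
      1 * corrS n h (⟪z.2, (σ : E3)⟫ - z.1, (σ : E3))) sphereMeasure :=
    sphere_integrable (continuous_const.mul (c5.comp (hp.prodMk continuous_subtype_val)))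
  unfold corrWave planeWave corrD
  have i12 := i1.add i2
  have i123 := i12.add i3
  refine Eq.trans ?_ (congrArg _ (integral_add i123 i4).symm)
  refine Eq.trans ?_ (congrArg (fun w => 1 / (2 * π) * (w + _)) (integral_add i12 i3).symm)
  refine Eq.trans ?_ (congrArg (fun w => 1 / (2 * π) * (w + _ + _)) (integral_add i1 i2).symm)
  ring

end

section
variable {n : ℝ → E3 → ℝ} (hn : SmoothQSphere n) {C : ℝ} (hB : Bd 3 C n)
  {f : ℝ → ℝ} (hf : IsCutNeg f) {h : ℝ → E3 → ℝ} (hh : SmoothQSphere h) {C' : ℝ} (hB' : Bd 2 C' h)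
  {b₀ b₁ : sphere (0 : E3) 1 → ℝ} (hb₀ : Continuous b₀) (hb₁ : Continuous b₁)

include hh in
lemma hasDerivAt_slice (s : ℝ) (σ : sphere (0 : E3) 1) :
    HasDerivAt (fun s => h s σ) (dd (1, 0) (extQ h) (s, σ)) s := by
  have := dd_hasDerivAt (extQ_smooth hh) ((hasDerivAt_id s).prodMk (hasDerivAt_const s (σ : E3)))
  simpa only [extQ_sph, id] using this

include hn hB in
/-- The two terms of `corrD` containing the mass combine into one without reference to the
base point `0` of the primitive. -/
lemma corrD_eq (s : ℝ) (σ : sphere (0 : E3) 1) : corrD n h f b₀ b₁ s σ =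
    b₀ σ * deriv f s + b₁ σ * deriv (fun s => -tail s * f s) s + dd (1, 0) (extQ h) (s, σ)
      - 1 / 2 * (n s σ * (Real.log 2 - Real.log (jb s))) - 1 / 2 * (tail s * massL n s σ) := by
  rw [corrD, corrS, extQ_sph, massL_primQ hn hB s σ]
  ring

include hn hB hf hh in
lemma corr_hasDerivAt (ω : sphere (0 : E3) 1) (s : ℝ) :
    HasDerivAt (fun s => corr n h f b₀ b₁ s ω) (corrD n h f b₀ b₁ s ω) s := by
  have d0 : HasDerivAt f (deriv f s) s := (hf.1.differentiable (by simp) s).hasDerivAt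
  have d1 : HasDerivAt (fun s => -tail s * f s) (deriv (fun s => -tail s * f s) s) s :=
    ((tail_smooth.neg.mul hf.1).differentiable (by simp) s).hasDerivAt
  have d2 := hasDerivAt_slice hh s ω
  have d3 := (massL_hasDerivAt hn hB s ω).mul ((log_jb_hasDerivAt s).const_sub (Real.log 2))
  refine (((((d0.sub_const 1).const_mul (b₀ ω)).add (d1.const_mul (b₁ ω))).add d2).sub
    (d3.const_mul (1 / 2))).congr_deriv ?_
  rw [corrD_eq hn hB]
  ring

include hf in
lemma cut_eventually : ∀ᶠ s in atBot, f s = 1 := by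
  filter_upwards [eventually_le_atBot (-1)] with s hs using hf.2.2.1 s hs

lemma tail_tendsto_atBot : Tendsto tail atBot (𝓝 0) :=
  squeeze_zero_norm abs_tail_le one_div_jb_tendsto

include hB hf hB' in
lemma corr_tendsto (ω : sphere (0 : E3) 1) :
    Tendsto (fun s => corr n h f b₀ b₁ s ω) atBot (𝓝 0) := by
  have t0 : Tendsto (fun s => f s - 1) atBot (𝓝 0) := by
    refine tendsto_const_nhds.congr' ?_
    filter_upwards [cut_eventually hf] with s hs
    rw [hs, sub_self]
  have t1 : Tendsto (fun s => -tail s * f s) atBot (𝓝 0) := by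
    have := tail_tendsto_atBot.neg
    rw [neg_zero] at this
    refine this.congr' ?_
    filter_upwards [cut_eventually hf] with s hs
    rw [hs, mul_one]
  have t2 : Tendsto (fun s => h s ω) atBot (𝓝 0) := by
    have := (one_div_jb_tendsto.pow 2).const_mul C'
    rw [zero_pow two_ne_zero, mul_zero] at this
    refine squeeze_zero_norm (fun s => ?_) this
    refine (hB'.val s ω (sph_ne ω)).trans_eq ?_
    rw [div_pow, one_pow, mul_one_div]
  have t3 : Tendsto (fun s => massL n s ω * (Real.log 2 - Real.log (jb s))) atBot (𝓝 0) := by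
    have := log_div_jb_tendsto.const_mul (C * (∫ τ, 1 / jb τ ^ 2))
    rw [mul_zero] at this
    refine squeeze_zero_norm' ?_ this
    filter_upwards [eventually_le_atBot 0] with s hs
    rw [Real.norm_eq_abs, abs_mul]
    refine (mul_le_mul_of_nonneg_right (abs_massL_le hB hs ω) (abs_nonneg _)).trans_eq ?_
    ring
  have := (((t0.const_mul (b₀ ω)).add (t1.const_mul (b₁ ω))).add t2).sub (t3.const_mul (1 / 2))
  simp only [mul_zero, add_zero, sub_zero] at this
  exact this

include hn hB hf hh hB' hb₁ in
/-- The hypothesis of `profile_outgoing` and `profile_timelike` for the correction. -/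
lemma corrD_decay : ∃ K, 0 ≤ K ∧ ∀ s ≤ -2, ∀ σ,
    |corrD n h f b₀ b₁ s σ| ≤ K * (1 / jb s ^ 2) := by
  obtain ⟨B, hbB⟩ := (isCompact_univ (X := sphere (0 : E3) 1)).exists_bound_of_continuousOn
    hb₁.continuousOn
  set I := ∫ τ, 1 / jb τ ^ 2 with hI
  have hI0 : 0 ≤ I := integral_nonneg fun τ => by positivity
  have hC := hB.pos
  have hC' := hB'.pos
  refine ⟨|B| + C' + C + C * I, by positivity, fun s hs σ => ?_⟩
  have hj := jb_pos s
  have hj1 := one_le_jb s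
  have hev : f =ᶠ[𝓝 s] fun _ => 1 := by
    filter_upwards [Iio_mem_nhds (show s < -1 by linarith)] with u hu using hf.2.2.1 u (le_of_lt hu)
  have e0 : deriv f s = 0 := by rw [hev.deriv_eq, deriv_const]
  have e1 : deriv (fun s => -tail s * f s) s = -((s ^ 2 - 1) / (1 + s ^ 2) ^ 2) := by
    have : (fun s => -tail s * f s) =ᶠ[𝓝 s] fun s => -tail s := by
      filter_upwards [hev] with u hu
      rw [hu, mul_one]
    rw [this.deriv_eq]
    exact (deriv_tail s).neg.deriv
  have p1 : |b₁ σ * -((s ^ 2 - 1) / (1 + s ^ 2) ^ 2)| ≤ |B| * (1 / jb s ^ 2) := by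
    rw [abs_mul, abs_neg]
    exact mul_le_mul ((hbB σ (mem_univ _)).trans (le_abs_self B)) (abs_deriv_tail_le s)
      (abs_nonneg _) (abs_nonneg _)
  have p2 : |dd (1, 0) (extQ h) (s, σ)| ≤ C' * (1 / jb s ^ 2) := by
    rw [← (hasDerivAt_slice hh s σ).deriv, mul_one_div]
    refine (hB'.der s σ (sph_ne σ)).trans ?_
    have : jb s ^ 2 ≤ jb s ^ (2 + 1) := pow_le_pow_right₀ hj1 (by norm_num)
    gcongr
  have p3 : |n s σ * (Real.log 2 - Real.log (jb s))| ≤ C * (1 / jb s ^ 2) := by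
    rw [abs_mul]
    refine (mul_le_mul (hB.val s σ (sph_ne σ)) (log_jb_le s) (abs_nonneg _)
      (by positivity)).trans_eq ?_
    field_simp
  have p4 : |tail s * massL n s σ| ≤ C * I * (1 / jb s ^ 2) := by
    rw [abs_mul]
    refine (mul_le_mul (abs_tail_le s) (abs_massL_le hB (by linarith) σ) (abs_nonneg _)
      (by positivity)).trans_eq ?_
    rw [← hI]
    field_simp
  rw [corrD_eq hn hB, e0, e1]
  have q3 := abs_nonneg (n s σ * (Real.log 2 - Real.log (jb s)))
  have q4 := abs_nonneg (tail s * massL n s σ)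
  rw [abs_le] at *
  constructor <;> linarith

include hn hB hf hh hB' hb₀ hb₁ in
lemma corrWave_outgoing (ω : sphere (0 : E3) 1) (q : ℝ) :
    Tendsto (fun r => r * corrWave n h f b₀ b₁ (r - q, r • (ω : E3))) atTop
      (𝓝 (corr n h f b₀ b₁ q ω)) := by
  obtain ⟨K, hK, hd⟩ := corrD_decay hn hB hf hh hB' (b₀ := b₀) hb₁
  have := (profile_outgoing (corrD_continuous hn hB hf hh hb₀ hb₁) hK hd ω q
    (corr_hasDerivAt hn hB hf hh ω) (corr_tendsto hB hf hB' ω)).const_mul (1 / (2 * π))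
  have e : 1 / (2 * π) * (2 * π * corr n h f b₀ b₁ q ω) = corr n h f b₀ b₁ q ω := by
    field_simp
  rw [e] at this
  refine this.congr fun r => ?_
  rw [corrWave_eq hn hB hf hh hb₀ hb₁]
  simp only [ray_phase]
  ring

include hn hB hf hh hB' hb₀ hb₁ in
lemma corrWave_timelike {x : E3} (hx : ‖x‖ < 1) :
    Tendsto (fun a => a * corrWave n h f b₀ b₁ (a, a • x)) atTop (𝓝 0) := by
  obtain ⟨K, hK, hd⟩ := corrD_decay hn hB hf hh hB' (b₀ := b₀) hb₁
  have := (profile_timelike (Fd := corrD n h f b₀ b₁) hK hd hx).const_mul (1 / (2 * π))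
  rw [mul_zero] at this
  refine this.congr fun a => ?_
  rw [corrWave_eq hn hB hf hh hb₀ hb₁]
  simp only [real_inner_smul_left, mul_sub, mul_one]
  ring

end

/-! ### The scattering solution -/

lemma smoothOnSphere_zero : SmoothOnSphere fun _ => 0 := ⟨fun _ _ _ => rfl, contDiffOn_const⟩

/-- The source in the form in which it enters the wave equation. -/
lemma src_eq {χ : ℝ → ℝ} (hχ : IsCutChi χ) (n : ℝ → E3 → ℝ) (t : ℝ) (x : E3) : src χ n (t, x) =
    if x = 0 then 0 else χ (jb (t - ‖x‖) / ‖x‖) * n (‖x‖ - t) x / ‖x‖ ^ 2 := by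
  have hj : jb (‖x‖ - t) = jb (t - ‖x‖) := by rw [← jb_neg, neg_sub]
  have h0 : 0 ≤ jb (t - ‖x‖) / ‖x‖ := div_nonneg (jb_pos _).le (norm_nonneg x)
  simp only [src, core, mul_one, hj, cut2_eq hχ h0]
  split_ifs with hx
  · simp [hx]
  · rfl

lemma tailWave_smooth {N : E3 → ℝ} (hN : Continuous fun σ : sphere (0 : E3) 1 => N σ) :
    ContDiff ℝ (⊤ : ℕ∞) (tailWave N) :=
  contDiff_const.mul (planeWave_smooth hN (tail_smooth.comp contDiff_fst))

lemma tailWave_box {N : E3 → ℝ} (hN : Continuous fun σ : sphere (0 : E3) 1 => N σ) (z) :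
    box (tailWave N) z = 0 := by
  have hs : ContDiff ℝ (⊤ : ℕ∞) fun p : ℝ × E3 => tail p.1 := tail_smooth.comp contDiff_fst
  refine (box_const_mul (planeWave_smooth hN hs) (1 / (4 * π)) z).trans ?_
  rw [planeWave_box hN hs, mul_zero]

/-- scattering solutions with quadratic source terms
(Theorem 1.1 of the paper). -/
theorem scattering_quadratic_source
    (γ : ℝ) (hγ1 : 1/2 ≤ γ) (hγ2 : γ < 1)
    (χ : ℝ → ℝ) (hχ : IsCutChi χ)
    (χneg : ℝ → ℝ) (hχneg : IsCutNeg χneg)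
    (n : ℝ → E3 → ℝ) (hn : SmoothQSphere n) (hndec : SymbolDecay (2 + 2*γ) n)
    (N : E3 → ℝ) (hN : ∀ σ : E3, N σ = ∫ q : ℝ, n q σ)
    (M : E3 → ℝ) (hM : ∀ σ : E3, M σ = ∫ q : ℝ, q * n q σ)
    (F01 : ℝ → E3 → ℝ) (hF01 : ∀ (q : ℝ) (ω : E3), F01 q ω = (1/2) * ∫ s in Set.Ioi q, n s ω)
    (N0 : E3 → ℝ)
    (hN0 : ∀ ω : E3, N0 ω = (1/(4*π)) * sphereIntegral (fun σ => (N σ - N ω) / (1 - ⟪σ, ω⟫)))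
    (M0 : E3 → ℝ) (hM0 : ∀ ω : E3, M0 ω = (1/2) * M ω) :
    ∃ P : E3 → ℝ, SmoothOnSphere P ∧
      ∀ H0 : ℝ → E3 → ℝ, SmoothQSphere H0 → SymbolDecay 2 H0 →
        (∃ c : ℝ, ∀ ω : E3, ‖ω‖ = 1 → (∫ q : ℝ, H0 q ω) - P ω = c) →
        ∃ φ : ℝ → E3 → ℝ,
          ContDiffOn ℝ (⊤ : ℕ∞) (fun p : ℝ × E3 => φ p.1 p.2) {p : ℝ × E3 | 2 < p.1} ∧
          (∀ t : ℝ, 2 < t → ∀ x : E3,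
            dt2 φ t x - lap3 (φ t) x =
              if x = 0 then 0 else χ (jb (t - ‖x‖) / ‖x‖) * n (‖x‖ - t) x / ‖x‖ ^ 2) ∧
          (∀ (q : ℝ) (ω : E3), ‖ω‖ = 1 →
            Tendsto (fun r : ℝ => r * φ (r - q) (r • ω) - Real.log (2*r / jb q) * F01 q ω)
              atTop
              (nhds (N0 ω * χneg q + M0 ω * (q / jb q ^ 2) * χneg q + H0 q ω))) ∧
          (∀ x : E3, 0 < ‖x‖ → ‖x‖ < 1 →
            Tendsto (fun a : ℝ => a * φ a (a • x)) atTop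
              (nhds ((1/(4*π)) * sphereIntegral (fun σ => N σ / (1 - ⟪σ, x⟫))))) := by
  obtain ⟨C, hB⟩ := exists_bd (m := 3) hn hndec (by push_cast; linarith)
  obtain ⟨A, hAs, hAbox, hA⟩ := exists_adv hχ hn
  replace hA : AdvFormula χ n A := hA
  have hone : ∀ s, |(fun _ : ℝ => (1:ℝ)) s| ≤ jb s := fun s => by
    rw [abs_one]; exact one_le_jb s
  set K := C * (∫ s, 1 / jb s ^ 2) with hKdef
  have hK : 0 ≤ K := mul_nonneg hB.pos.le (integral_nonneg fun s => by positivity)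
  have hNL : ∀ σ σ' : sphere (0 : E3) 1, |N σ - N σ'| ≤ K * ‖(σ : E3) - σ'‖ := fun σ σ' => by
    have := weighted_lip hn hB (measurable_const (a := (1:ℝ))) hone σ σ'
    simpa only [one_mul, ← hN] using this
  have hNc := lip_continuous hK hNL
  have hN0c : Continuous fun σ : sphere (0 : E3) 1 => N0 σ := by
    simp only [hN0, sphereIntegral]
    exact continuous_const.mul (angular_continuous hK hNL)
  have hM0c : Continuous fun σ : sphere (0 : E3) 1 => M0 σ := by
    simp only [hM0, hM]
    exact continuous_const.mul (weighted_continuous hn hB measurable_id abs_le_jb)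
  refine ⟨fun _ => 0, smoothOnSphere_zero, fun H0 hH hHdec _ => ?_⟩
  obtain ⟨C', hB'⟩ := exists_bd (m := 2) hH hHdec (by norm_num)
  have hTs := tailWave_smooth hNc
  set Z := corrWave n H0 χneg (fun σ => N0 σ) (fun σ => M0 σ) with hZ
  have hZs : ContDiff ℝ (⊤ : ℕ∞) Z := corrWave_smooth hn hB hχneg hH hN0c hM0c
  have hφs : ContDiff ℝ (⊤ : ℕ∞) fun z => A z + (tailWave N z + Z z) := hAs.add (hTs.add hZs)
  refine ⟨fun t x => A (t, x) + (tailWave N (t, x) + Z (t, x)), hφs.contDiffOn, ?_, ?_, ?_⟩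
  · intro t _ x
    refine (box_eq hφs t x).trans ?_
    rw [box_add hAs (hTs.add hZs), box_add hTs hZs, tailWave_box hNc,
      hZ, corrWave_box hn hB hχneg hH hN0c hM0c, hAbox, src_eq hχ, add_zero, add_zero]
  · intro q ω hω
    obtain ⟨ω, rfl⟩ : ∃ σ : sphere (0 : E3) 1, (σ : E3) = ω := ⟨⟨ω, by simpa using hω⟩, rfl⟩
    have hF : F01 q ω = 1 / 2 * (N ω - massL n q ω) := by
      have hi := hB.integrable hn (by norm_num) (sph_ne ω)
      have := intervalIntegral.integral_Iic_add_Ioi (f := fun s => n s (ω : E3)) (b := q)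
        (μ := volume) hi.integrableOn hi.integrableOn
      rw [hF01, hN, ← this, massL]
      ring
    have lA := adv_outgoing hχ hn hB hA ω q
    have lT := tailWave_outgoing hK hNL ω q
    have lZ := corrWave_outgoing hn hB hχneg hH hB' hN0c hM0c ω q
    -- The logarithms of `r` cancel; what remains of the logarithmic terms is constant.
    have l := ((lA.add lT).add lZ).add_const (1 / 2 * N ω * Real.log (jb q)
      + 1 / 2 * (massL n q ω * (Real.log 2 - Real.log (jb q))))
    have hlim : N0 ω * χneg q + M0 ω * (q / jb q ^ 2) * χneg q + H0 q ω =
        0 + (1 / (4 * π) * (∫ σ : sphere (0 : E3) 1, (N σ - N ω) / (1 - ⟪(σ : E3), (ω : E3)⟫)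
        ∂sphereMeasure) - 1 / 2 * N ω * Real.log (jb q))
        + corr n H0 χneg (fun σ => N0 σ) (fun σ => M0 σ) q ω
        + (1 / 2 * N ω * Real.log (jb q)
          + 1 / 2 * (massL n q ω * (Real.log 2 - Real.log (jb q)))) := by
      have e : -tail q = q / jb q ^ 2 := by rw [tail, jb_sq, neg_div, neg_neg]
      have e' := hN0 ω
      rw [sphereIntegral] at e'
      rw [← e', corr, e]
      ring
    rw [hlim]
    refine l.congr' ?_
    filter_upwards [eventually_gt_atTop 0] with r hr
    have hj := jb_pos q
    rw [hF, Real.log_div (by positivity) hj.ne', Real.log_mul two_ne_zero hr.ne']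
    ring
  · intro x _ hx
    have lA := adv_timelike hχ hn hB hx hA
    have lT := tailWave_timelike hK hNL hx
    have lZ := corrWave_timelike hn hB hχneg hH hB' hN0c hM0c hx
    have l := lA.add (lT.add lZ)
    rw [zero_add, add_zero] at l
    refine l.congr fun a => ?_
    rw [← hZ]
    ring
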